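/- arXiv:math/0111272 — 3 statements merged into one kernel-verified Lean document; each statement's English description precedes it below -/
import Mathlib

section
/- If f is a bounded measurable even function on the unit sphere S^{n-1} in R^n (n ≥ 2), p > 1 is not an even integer, and H(x) = ∫_{S^{n-1}} |⟨x,ξ⟩|^p f(ξ) dξ, then for any multi-index α with |α| even and |α| < p+1, the partial derivative D^α H exists and is continuous on R^n \ {0}, and D^α H(x) = i^{|α|} (C_p / C_{p-|α|}) ∫_{S^{n-1}} |⟨x,ξ⟩|^{p-|α|} ξ_1^{α_1}⋯ξ_n^{α_n} f(ξ) dξ, where C_t = 2^{t+1}√π Γ((t+1)/2)/Γ(-t/2). -/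
open MeasureTheory Real Set Metric
open scoped RealInnerProductSpace ENNReal MeasureTheory
noncomputable section


/-- Partial derivative in the `i`-th coordinate direction. -/
def pd (n : ℕ) (i : Fin n) (g : EuclideanSpace ℝ (Fin n) → ℝ) :
    EuclideanSpace ℝ (Fin n) → ℝ :=
  fun x => fderiv ℝ g x (EuclideanSpace.single i 1)

/-- Iterated mixed partial derivative along a list of coordinate directions
(a multi-index `α` corresponds to the list containing `i` with multiplicity `α_i`). -/
def mpd (n : ℕ) : List (Fin n) → (EuclideanSpace ℝ (Fin n) → ℝ) → EuclideanSpace ℝ (Fin n) → ℝ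
  | [], g => g
  | i :: L, g => pd n i (mpd n L g)


/-- The constant `C_t = 2^(t+1) √π Γ((t+1)/2) / Γ(-t/2)`. -/
def Cconst (t : ℝ) : ℝ :=
  (2 : ℝ) ^ (t + 1) * Real.sqrt π * Real.Gamma ((t + 1) / 2) / Real.Gamma (-t / 2)


lemma sphere_fin (n : ℕ) (hn : 2 ≤ n) :
    (μH[(n : ℝ) - 1] : Measure (EuclideanSpace ℝ (Fin n))) (sphere 0 1) < ⊤ := by
  obtain ⟨m, rfl⟩ : ∃ m, n = m + 1 := ⟨n - 1, by omega⟩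
  have hd : (((m + 1 : ℕ) : ℝ) - 1) = (m : ℝ) := by push_cast; ring
  rw [hd]
  let A : Fin (m+1) → ℝ → (Fin m → ℝ) → EuclideanSpace ℝ (Fin (m+1)) :=
    fun i s y => WithLp.toLp 2 (i.insertNth s y)
  let ψ : Fin (m+1) → ℝ → (Fin m → ℝ) → EuclideanSpace ℝ (Fin (m+1)) :=
    fun i s y => ‖A i s y‖⁻¹ • A i s y
  have hA : ∀ i s, ContDiff ℝ 1 (A i s) := by
    intro i s
    rw [contDiff_euclidean]
    intro j
    refine Fin.succAboveCases i ?_ ?_ j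
    · simp only [A, Fin.insertNth_apply_same]; exact contDiff_const
    · intro k
      simp only [A, Fin.insertNth_apply_succAbove]; exact contDiff_apply ℝ ℝ k
  have hA0 : ∀ i s, s ≠ 0 → ∀ y, A i s y ≠ 0 := by
    intro i s hs y h
    have := congrArg (fun v : EuclideanSpace ℝ (Fin (m+1)) => v i) h
    simp [A] at this
    exact hs this
  have hψ : ∀ i s, s ≠ 0 → ContDiff ℝ 1 (ψ i s) := by
    intro i s hs
    exact (((hA i s).norm ℝ (hA0 i s hs)).inv (fun y => norm_ne_zero_iff.2 (hA0 i s hs y))).smul (hA i s)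
  have hfin : ∀ i s, s ≠ 0 → (μH[(m : ℝ)] : Measure (EuclideanSpace ℝ (Fin (m+1)))) (ψ i s '' Icc (-1) 1) < ⊤ := by
    intro i s hs
    obtain ⟨K, hK⟩ := (hψ i s hs).contDiffOn (s := Icc (-1) 1) |>.exists_lipschitzOnWith (by simp) (convex_Icc _ _) isCompact_Icc
    refine (hK.hausdorffMeasure_image_le (by positivity)).trans_lt ?_
    refine ENNReal.mul_lt_top (by finiteness) ?_
    have := hausdorffMeasure_pi_real (ι := Fin m)
    rw [Fintype.card_fin] at this
    rw [this]
    exact isCompact_Icc.measure_lt_top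
  have hcov : sphere (0 : EuclideanSpace ℝ (Fin (m+1))) 1 ⊆
      ⋃ i : Fin (m+1), (ψ i 1 '' Icc (-1) 1 ∪ ψ i (-1) '' Icc (-1) 1) := by
    intro x hx
    have hx1 : ‖x‖ = 1 := by simpa using hx
    obtain ⟨i, -, hi⟩ := Finset.exists_max_image Finset.univ (fun i => |x i|) Finset.univ_nonempty
    have hxi : x i ≠ 0 := by
      intro h0
      have : x = 0 := by
        ext j
        have := hi j (Finset.mem_univ _)
        rw [h0, abs_zero] at this
        simpa using this
      rw [this] at hx1; simp at hx1
    have key : ∀ s : ℝ, s = x i / |x i| → x ∈ ψ i s '' Icc (-1) 1 := by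
      intro s hs
      have hp : 0 < |x i| := abs_pos.2 hxi
      refine ⟨fun k => x (i.succAbove k) / |x i|, ?_, ?_⟩
      · constructor
        all_goals
          intro k
          have h1 := abs_le.1 (hi (i.succAbove k) (Finset.mem_univ _))
          simp only [Pi.neg_apply, Pi.one_apply]
        · rw [le_div_iff₀ hp]; linarith
        · rw [div_le_iff₀ hp]; linarith
      · have : A i s (fun k => x (i.succAbove k) / |x i|) = |x i|⁻¹ • x := by
          ext j
          refine Fin.succAboveCases i ?_ ?_ j
          · simp [A, hs]; ring
          · intro k; simp [A]; ring
        simp only [ψ, this, norm_smul, hx1]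
        rw [smul_smul]
        simp [hxi]
    refine mem_iUnion.2 ⟨i, ?_⟩
    rcases lt_or_gt_of_ne hxi with h | h
    · right; apply key; rw [abs_of_neg h]; field_simp
    · left; apply key; rw [abs_of_pos h]; field_simp
  refine (measure_mono hcov).trans_lt ?_
  refine (measure_iUnion_le _).trans_lt ?_
  rw [tsum_fintype]
  refine ENNReal.sum_lt_top.2 fun i _ => ?_
  exact (measure_union_le _ _).trans_lt (ENNReal.add_lt_top.2 ⟨hfin i 1 one_ne_zero, hfin i (-1) (by norm_num)⟩)

lemma integrable_abs_rpow_exp {s : ℝ} (hs : -1 < s) :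
    Integrable fun x : ℝ => |x| ^ s * Real.exp (-(1/2) * x ^ 2) := by
  have key : IntegrableOn (fun x : ℝ => |x| ^ s * Real.exp (-(1/2) * x ^ 2)) (Ioi 0) := by
    refine (integrableOn_rpow_mul_exp_neg_mul_sq (b := 1/2) (by norm_num) hs).congr_fun ?_ measurableSet_Ioi
    intro x hx
    have hx : 0 < x := hx
    simp only [abs_of_pos hx]
  rw [← integrableOn_univ, ← @Iio_union_Ici _ _ (0 : ℝ), integrableOn_union,
    integrableOn_Ici_iff_integrableOn_Ioi]
  refine ⟨?_, key⟩
  rw [← (Measure.measurePreserving_neg (volume : Measure ℝ)).integrableOn_comp_preimage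
      (Homeomorph.neg ℝ).measurableEmbedding]
  simpa only [Function.comp_def, neg_sq, neg_preimage, neg_Iio, neg_zero, abs_neg] using key

open ProbabilityTheory in
lemma gauss_fin {s : ℝ} (hs : -1 < s) :
    ∫⁻ t, ENNReal.ofReal (|t| ^ s) ∂(gaussianReal 0 1) < ⊤ := by
  rw [gaussianReal_of_var_ne_zero _ one_ne_zero,
    lintegral_withDensity_eq_lintegral_mul _ (measurable_gaussianPDF _ _) (by fun_prop)]
  have h := ((integrable_abs_rpow_exp hs).const_mul (√(2 * π * 1))⁻¹).lintegral_lt_top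
  refine lt_of_le_of_lt (le_of_eq ?_) h
  refine lintegral_congr fun t => ?_
  simp only [Pi.mul_apply, gaussianPDF, gaussianPDFReal]
  rw [← ENNReal.ofReal_mul (by positivity)]
  congr 1
  have : (-(t - 0) ^ 2 / (2 * ((1 : NNReal) : ℝ))) = -(1/2) * t^2 := by push_cast; ring
  rw [this]
  push_cast
  ring

section
variable {E : Type*} [NormedAddCommGroup E] [InnerProductSpace ℝ E] [FiniteDimensional ℝ E]
  [MeasurableSpace E] [BorelSpace E]

open ProbabilityTheory in
lemma map_inner_gauss (ξ : E) (h : ‖ξ‖ = 1) :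
    (stdGaussian E).map (fun e => ⟪e, ξ⟫) = gaussianReal 0 1 := by
  have := IsGaussian.map_eq_gaussianReal (μ := stdGaussian E) (innerSL ℝ ξ)
  rw [variance_dual_stdGaussian, integral_strongDual_stdGaussian, innerSL_apply_norm, h] at this
  have h2 : ⇑(innerSL ℝ ξ) = (fun e : E => ⟪e, ξ⟫) := by
    ext e; simp [real_inner_comm]
  rw [h2] at this
  simpa using this

lemma inv_lint {μ : Measure E} (hinv : ∀ R : E ≃ₗᵢ[ℝ] E, MeasurePreserving R μ μ)
    {u v : E} (huv : ‖u‖ = ‖v‖) (h : ℝ → ℝ≥0∞) (hh : Measurable h) :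
    ∫⁻ ξ, h ⟪u, ξ⟫ ∂μ = ∫⁻ ξ, h ⟪v, ξ⟫ ∂μ := by
  have hR := Submodule.reflection_sub huv
  set R := (Submodule.span ℝ {u - v})ᗮ.reflection
  rw [← (hinv R).lintegral_comp (f := fun ξ => h ⟪v, ξ⟫) (by fun_prop), ← hR]
  simp only [LinearIsometryEquiv.inner_map_map]

lemma inv_int {μ : Measure E} (hinv : ∀ R : E ≃ₗᵢ[ℝ] E, MeasurePreserving R μ μ)
    {u v : E} (huv : ‖u‖ = ‖v‖) (h : ℝ → ℝ) :
    ∫ ξ, h ⟪u, ξ⟫ ∂μ = ∫ ξ, h ⟪v, ξ⟫ ∂μ := by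
  have hR := Submodule.reflection_sub huv
  set R := (Submodule.span ℝ {u - v})ᗮ.reflection
  rw [← (hinv R).integral_comp R.toHomeomorph.measurableEmbedding (fun ξ => h ⟪v, ξ⟫), ← hR]
  simp only [LinearIsometryEquiv.inner_map_map]

open ProbabilityTheory in
lemma kern_fin {μ : Measure E} [IsFiniteMeasure μ]
    (hinv : ∀ R : E ≃ₗᵢ[ℝ] E, MeasurePreserving R μ μ) (hμ : ∀ᵐ ξ ∂μ, ‖ξ‖ = 1)
    {s : ℝ} (hs : -1 < s) {x : E} (hx : x ≠ 0) :
    Integrable (fun ξ => |⟪x, ξ⟫| ^ s) μ := by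
  have hT : ∫⁻ e, ∫⁻ ξ, ENNReal.ofReal (|⟪e, ξ⟫| ^ s) ∂μ ∂(stdGaussian E) < ⊤ := by
    rw [lintegral_lintegral_swap (by fun_prop)]
    have : ∀ᵐ ξ ∂μ, ∫⁻ e, ENNReal.ofReal (|⟪e, ξ⟫| ^ s) ∂(stdGaussian E) =
        ∫⁻ t, ENNReal.ofReal (|t| ^ s) ∂(gaussianReal 0 1) := by
      filter_upwards [hμ] with ξ hξ
      rw [← map_inner_gauss ξ hξ, lintegral_map (by fun_prop) (by fun_prop)]
    rw [lintegral_congr_ae this, lintegral_const]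
    exact ENNReal.mul_lt_top (gauss_fin hs) (measure_lt_top _ _)
  have h1 : ∀ᵐ e ∂(stdGaussian E), ∫⁻ ξ, ENNReal.ofReal (|⟪e, ξ⟫| ^ s) ∂μ < ⊤ :=
    ae_lt_top' (by
      apply Measurable.aemeasurable
      apply Measurable.lintegral_prod_right' (f := fun z : E × E => ENNReal.ofReal (|⟪z.1, z.2⟫| ^ s))
      fun_prop) hT.ne
  have h2 : ∀ᵐ e ∂(stdGaussian E), e ≠ 0 := by
    have h3 : ∀ᵐ t ∂(gaussianReal 0 1), t ≠ 0 := by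
      have := nullSingletonClass_gaussianReal (μ := 0) (v := 1) one_ne_zero
      rw [ae_iff]; simp
    rw [← map_inner_gauss (‖x‖⁻¹ • x) (by simp [norm_smul, hx])] at h3
    have := ae_of_ae_map (by fun_prop) h3
    filter_upwards [this] with e he h0
    simp [h0] at he
  obtain ⟨e, he, he0⟩ := (h1.and h2).exists
  have hc : 0 < ‖x‖ / ‖e‖ := by positivity
  set c := ‖x‖ / ‖e‖ with hcd
  refine ⟨Measurable.aestronglyMeasurable (by fun_prop), ?_⟩
  rw [hasFiniteIntegral_iff_norm]
  have h4 : ∀ ξ : E, ENNReal.ofReal ‖|⟪x, ξ⟫| ^ s‖ = ENNReal.ofReal (|⟪x, ξ⟫| ^ s) := by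
    intro ξ; rw [Real.norm_of_nonneg (by positivity)]
  simp_rw [h4]
  rw [inv_lint hinv (v := c • e) (by rw [norm_smul, norm_of_nonneg hc.le, hcd]; field_simp) (fun t => ENNReal.ofReal (|t| ^ s)) (by fun_prop)]
  simp_rw [inner_smul_left, abs_mul]
  simp only [conj_trivial, Real.mul_rpow (abs_nonneg _) (abs_nonneg _), ENNReal.ofReal_mul (rpow_nonneg (abs_nonneg c) s)]
  rw [lintegral_const_mul _ (by fun_prop)]
  exact ENNReal.mul_lt_top (by finiteness) he


/-- cutoff -/
def cut (N t : ℝ) : ℝ := min 1 (N * |t|)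

lemma cut_cont (N : ℝ) : Continuous (cut N) := by unfold cut; fun_prop

lemma cut_mem {N t : ℝ} (hN : 0 ≤ N) : 0 ≤ cut N t ∧ cut N t ≤ 1 :=
  ⟨le_min zero_le_one (by positivity), min_le_left _ _⟩

lemma cut_eventually {t : ℝ} (ht : t ≠ 0) : ∀ᶠ N in Filter.atTop, cut N t = 1 := by
  filter_upwards [Filter.eventually_ge_atTop (|t|⁻¹)] with N hN
  have := abs_pos.2 ht
  refine min_eq_left ?_
  calc (1:ℝ) = |t|⁻¹ * |t| := by field_simp
    _ ≤ _ := by gcongr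

lemma tail_tendsto {μ : Measure E} [IsFiniteMeasure μ]
    (hinv : ∀ R : E ≃ₗᵢ[ℝ] E, MeasurePreserving R μ μ) (hμ : ∀ᵐ ξ ∂μ, ‖ξ‖ = 1)
    {s : ℝ} (hs : -1 < s) (hs0 : s ≠ 0) {x : E} (hx : x ≠ 0) :
    Filter.Tendsto (fun N : ℝ => ∫ ξ, |⟪x, ξ⟫| ^ s * (1 - cut N ⟪x, ξ⟫) ∂μ) Filter.atTop (nhds 0) := by
  have h0 : ∫ ξ : E, (0 : ℝ) ∂μ = 0 := by simp
  rw [← h0]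
  refine tendsto_integral_filter_of_dominated_convergence (fun ξ => |⟪x, ξ⟫| ^ s) ?_ ?_ (kern_fin hinv hμ hs hx) ?_
  · refine Filter.Eventually.of_forall fun N => ?_
    have := (cut_cont N).measurable
    exact Measurable.aestronglyMeasurable (by fun_prop)
  · filter_upwards [Filter.eventually_ge_atTop 0] with N hN
    refine Filter.Eventually.of_forall fun ξ => ?_
    have := cut_mem (N := N) (t := ⟪x, ξ⟫) hN
    rw [norm_mul, norm_of_nonneg (by positivity), Real.norm_of_nonneg (by linarith)]
    exact mul_le_of_le_one_right (by positivity) (by linarith)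
  · refine Filter.Eventually.of_forall fun ξ => ?_
    by_cases h : ⟪x, ξ⟫ = 0
    · simp [h, Real.zero_rpow hs0]
    · refine tendsto_const_nhds.congr' ?_
      filter_upwards [cut_eventually h] with N hN
      simp [hN]

variable {V : Type*} [NormedAddCommGroup V] [NormedSpace ℝ V]

lemma kern_int {μ : Measure E} [IsFiniteMeasure μ]
    (hinv : ∀ R : E ≃ₗᵢ[ℝ] E, MeasurePreserving R μ μ) (hμ : ∀ᵐ ξ ∂μ, ‖ξ‖ = 1)
    {s : ℝ} (hs : -1 < s) {κ : ℝ → ℝ} (hκm : Measurable κ) {C : ℝ}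
    (hκ : ∀ t, |κ t| ≤ C * |t| ^ s) {g : E → V} (hg : AEStronglyMeasurable g μ) {M : ℝ}
    (hM : ∀ᵐ ξ ∂μ, ‖g ξ‖ ≤ M) {x : E} (hx : x ≠ 0) :
    Integrable (fun ξ => κ ⟪x, ξ⟫ • g ξ) μ := by
  refine (((kern_fin hinv hμ hs hx).const_mul C).mul_const M).mono' ?_ ?_
  · exact (Measurable.aestronglyMeasurable (by fun_prop)).smul hg
  · filter_upwards [hM] with ξ hξ
    rw [norm_smul]
    exact mul_le_mul (hκ _) hξ (norm_nonneg _) ((abs_nonneg _).trans (hκ _))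

lemma kern_unif {μ : Measure E} [IsFiniteMeasure μ]
    (hinv : ∀ R : E ≃ₗᵢ[ℝ] E, MeasurePreserving R μ μ) (hμ : ∀ᵐ ξ ∂μ, ‖ξ‖ = 1)
    {s : ℝ} (hs : -1 < s) (hs0 : s ≠ 0) {κ : ℝ → ℝ} (hκm : Measurable κ) {C : ℝ}
    (hκ : ∀ t, |κ t| ≤ C * |t| ^ s) {g : E → V} (hg : AEStronglyMeasurable g μ) {M : ℝ}
    (hM : ∀ᵐ ξ ∂μ, ‖g ξ‖ ≤ M) :
    TendstoLocallyUniformlyOn (fun (N : ℝ) (x : E) => ∫ ξ, (κ ⟪x, ξ⟫ * cut N ⟪x, ξ⟫) • g ξ ∂μ)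
      (fun x => ∫ ξ, κ ⟪x, ξ⟫ • g ξ ∂μ) Filter.atTop {0}ᶜ := by
  rw [Metric.tendstoLocallyUniformlyOn_iff]
  intro ε hε x0 hx0
  have hx0 : x0 ≠ 0 := hx0
  have hx0n : 0 < ‖x0‖ := norm_pos_iff.2 hx0
  have hC : 0 ≤ C := by
    have := (abs_nonneg _).trans (hκ 1)
    simpa using this
  set M' := max M 0
  have hM' : 0 ≤ M' := le_max_right _ _
  set D : ℝ := C * M' * (2 ^ |s|) with hD
  have hD0 : 0 ≤ D := by positivity
  refine ⟨{x | ‖x0‖ / 2 < ‖x‖ ∧ ‖x‖ < 2 * ‖x0‖}, mem_nhdsWithin_of_mem_nhds ?_, ?_⟩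
  · refine IsOpen.mem_nhds ?_ ⟨by linarith, by linarith⟩
    exact (isOpen_lt continuous_const continuous_norm).inter (isOpen_lt continuous_norm continuous_const)
  · have ht := (tail_tendsto hinv hμ hs hs0 hx0).comp
      (Filter.tendsto_id.atTop_div_const (r := (2:ℝ)) (by norm_num))
    have ht2 := ht.const_mul D
    rw [mul_zero] at ht2
    filter_upwards [ht2.eventually (gt_mem_nhds hε), Filter.eventually_ge_atTop 0] with N hN hN0 x hx
    obtain ⟨hx1, hx2⟩ := hx
    have hxn : 0 < ‖x‖ := by linarith
    have hxx : x ≠ 0 := norm_pos_iff.1 hxn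
    refine lt_of_le_of_lt ?_ hN
    have hcm := (cut_cont N).measurable
    have hI1 := kern_int hinv hμ hs hκm hκ hg hM hxx
    have hI2 : Integrable (fun ξ => (κ ⟪x, ξ⟫ * cut N ⟪x, ξ⟫) • g ξ) μ := by
      refine kern_int hinv hμ hs (κ := fun t => κ t * cut N t) (C := C) (by fun_prop) ?_ hg hM hxx
      intro t
      rw [abs_mul, abs_of_nonneg (cut_mem hN0).1]
      exact (mul_le_of_le_one_right (abs_nonneg _) (cut_mem hN0).2).trans (hκ t)
    rw [dist_eq_norm, ← integral_sub hI1 hI2]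
    set c := ‖x‖ / ‖x0‖ with hc
    have hc0 : 0 < c := by positivity
    have hc1 : 1 / 2 ≤ c := by rw [hc, le_div_iff₀ hx0n]; linarith
    have hc2 : c ≤ 2 := by rw [hc, div_le_iff₀ hx0n]; linarith
    have hcs : c ^ s ≤ 2 ^ |s| := by
      rcases le_total 0 s with h | h
      · rw [abs_of_nonneg h]; exact Real.rpow_le_rpow hc0.le hc2 h
      · rw [abs_of_nonpos h, Real.rpow_neg (by norm_num), ← Real.inv_rpow (by norm_num)]
        exact Real.rpow_le_rpow_of_nonpos (by norm_num) (by norm_num at hc1 ⊢; exact hc1) h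
    -- the tail integrals
    have hJint : ∀ (N : ℝ), 0 ≤ N → ∀ y : E, y ≠ 0 → Integrable (fun ξ => |⟪y, ξ⟫| ^ s * (1 - cut N ⟪y, ξ⟫)) μ := by
      intro N hN0 y hy
      refine (kern_fin hinv hμ hs hy).mono' ?_ ?_
      · have hcm := (cut_cont N).measurable
        exact Measurable.aestronglyMeasurable (by fun_prop)
      · refine Filter.Eventually.of_forall fun ξ => ?_
        have := cut_mem (N := N) (t := ⟪y, ξ⟫) hN0
        rw [norm_mul, norm_of_nonneg (by positivity), Real.norm_of_nonneg (by linarith)]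
        exact mul_le_of_le_one_right (by positivity) (by linarith)
    calc ‖∫ ξ, κ ⟪x, ξ⟫ • g ξ - (κ ⟪x, ξ⟫ * cut N ⟪x, ξ⟫) • g ξ ∂μ‖
        ≤ ∫ ξ, C * M' * (|⟪x, ξ⟫| ^ s * (1 - cut N ⟪x, ξ⟫)) ∂μ := by
          refine norm_integral_le_of_norm_le ((hJint N hN0 x hxx).const_mul _) ?_
          filter_upwards [hM] with ξ hξ
          have h1 := cut_mem (N := N) (t := ⟪x, ξ⟫) hN0
          have h2 : κ ⟪x, ξ⟫ • g ξ - (κ ⟪x, ξ⟫ * cut N ⟪x, ξ⟫) • g ξ = (κ ⟪x, ξ⟫ * (1 - cut N ⟪x, ξ⟫)) • g ξ := by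
            rw [← sub_smul]; congr 1; ring
          rw [h2, norm_smul, norm_mul, Real.norm_of_nonneg (show 0 ≤ 1 - cut N ⟪x, ξ⟫ by linarith)]
          have h3 : ‖g ξ‖ ≤ M' := hξ.trans (le_max_left _ _)
          calc ‖κ ⟪x, ξ⟫‖ * (1 - cut N ⟪x, ξ⟫) * ‖g ξ‖
              ≤ (C * |⟪x, ξ⟫| ^ s) * (1 - cut N ⟪x, ξ⟫) * M' := by
                have h4 : 0 ≤ 1 - cut N ⟪x, ξ⟫ := by linarith
                gcongr
                exact hκ _
            _ = _ := by ring
      _ = C * M' * ∫ ξ, |⟪x, ξ⟫| ^ s * (1 - cut N ⟪x, ξ⟫) ∂μ := integral_const_mul _ _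
      _ = C * M' * ∫ ξ, |⟪c • x0, ξ⟫| ^ s * (1 - cut N ⟪c • x0, ξ⟫) ∂μ := by
          rw [inv_int hinv (v := c • x0) (by rw [norm_smul, norm_of_nonneg hc0.le, hc]; field_simp)
            (fun t => |t| ^ s * (1 - cut N t))]
      _ ≤ C * M' * ∫ ξ, 2 ^ |s| * (|⟪x0, ξ⟫| ^ s * (1 - cut (N / 2) ⟪x0, ξ⟫)) ∂μ := by
          refine mul_le_mul_of_nonneg_left ?_ (by positivity)
          refine integral_mono (hJint N hN0 _ (smul_ne_zero hc0.ne' hx0)) ((hJint (N/2) (by positivity) x0 hx0).const_mul _) ?_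
          intro ξ
          simp only [inner_smul_left, conj_trivial]
          rw [abs_mul, Real.mul_rpow (abs_nonneg _) (abs_nonneg _), abs_of_pos hc0, mul_assoc]
          have h5 : cut (N/2) ⟪x0, ξ⟫ ≤ cut N (c * ⟪x0, ξ⟫) := by
            unfold cut
            refine min_le_min le_rfl ?_
            rw [abs_mul, abs_of_pos hc0]
            have : 0 ≤ N * |⟪x0, ξ⟫| := by positivity
            nlinarith
          have h6 := (cut_mem (N := N) (t := c * ⟪x0, ξ⟫) hN0).2
          have h7 : 0 ≤ 1 - cut N (c * ⟪x0, ξ⟫) := by linarith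
          gcongr
      _ = _ := by
          rw [integral_const_mul, hD]; simp only [Function.comp, id]; ring

/-- continuity for continuous kernels -/
lemma cont0 {μ : Measure E} [IsFiniteMeasure μ] (hμ : ∀ᵐ ξ ∂μ, ‖ξ‖ = 1)
    {ψ : ℝ → ℝ} (hψ : Continuous ψ) {g : E → V} (hg : AEStronglyMeasurable g μ) {M : ℝ}
    (hM : ∀ᵐ ξ ∂μ, ‖g ξ‖ ≤ M) : Continuous fun x : E => ∫ ξ, ψ ⟪x, ξ⟫ • g ξ ∂μ := by
  rw [continuous_iff_continuousAt]
  intro x0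
  obtain ⟨B, hB⟩ := (isCompact_Icc (a := -(‖x0‖ + 1)) (b := ‖x0‖ + 1)).exists_bound_of_continuousOn hψ.continuousOn
  refine continuousAt_of_dominated (bound := fun _ => B * M) ?_ ?_ (integrable_const _) ?_
  · exact Filter.Eventually.of_forall fun x => (Continuous.aestronglyMeasurable (by fun_prop)).smul hg
  · filter_upwards [Metric.ball_mem_nhds x0 one_pos] with x hx
    filter_upwards [hμ, hM] with ξ h1 h2
    have hxn : ‖x‖ ≤ ‖x0‖ + 1 := by
      have := norm_le_norm_add_norm_sub x0 x
      rw [mem_ball_iff_norm, norm_sub_rev] at hx; linarith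
    have h3 := abs_real_inner_le_norm x ξ
    rw [h1, mul_one] at h3
    have h4 := hB ⟪x, ξ⟫ (abs_le.1 (h3.trans hxn))
    rw [norm_smul]
    exact mul_le_mul h4 h2 (norm_nonneg _) ((norm_nonneg _).trans h4)
  · exact Filter.Eventually.of_forall fun ξ => by fun_prop

lemma diff0 {μ : Measure E} [IsFiniteMeasure μ] (hμ : ∀ᵐ ξ ∂μ, ‖ξ‖ = 1)
    {φ ψ : ℝ → ℝ} (hψ : Continuous ψ) (hφ : ∀ t, HasDerivAt φ (ψ t) t)
    {g : E → ℝ} (hg : AEStronglyMeasurable g μ) {M : ℝ}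
    (hM : ∀ᵐ ξ ∂μ, ‖g ξ‖ ≤ M) (x0 : E) :
    HasFDerivAt (fun x : E => ∫ ξ, φ ⟪x, ξ⟫ • g ξ ∂μ)
      (∫ ξ, ψ ⟪x0, ξ⟫ • (g ξ • innerSL ℝ ξ) ∂μ) x0 := by
  have hφc : Continuous φ := continuous_iff_continuousAt.2 fun t => (hφ t).continuousAt
  obtain ⟨B, hB⟩ := (isCompact_Icc (a := -(‖x0‖ + 1)) (b := ‖x0‖ + 1)).exists_bound_of_continuousOn hψ.continuousOn
  obtain ⟨B', hB'⟩ := (isCompact_Icc (a := -(‖x0‖ + 1)) (b := ‖x0‖ + 1)).exists_bound_of_continuousOn hφc.continuousOn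
  have hmem : ∀ x ∈ ball x0 1, ∀ ξ : E, ‖ξ‖ = 1 → ⟪x, ξ⟫ ∈ Icc (-(‖x0‖ + 1)) (‖x0‖ + 1) := by
    intro x hx ξ h1
    have hxn : ‖x‖ ≤ ‖x0‖ + 1 := by
      have := norm_le_norm_add_norm_sub x0 x
      rw [mem_ball_iff_norm, norm_sub_rev] at hx; linarith
    have h3 := abs_real_inner_le_norm x ξ
    rw [h1, mul_one] at h3
    exact abs_le.1 (h3.trans hxn)
  have hm1 : ∀ x : E, AEStronglyMeasurable (fun ξ => φ ⟪x, ξ⟫) μ := fun x =>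
    Continuous.aestronglyMeasurable (by fun_prop)
  have hm2 : ∀ x : E, AEStronglyMeasurable (fun ξ => ψ ⟪x, ξ⟫) μ := fun x =>
    Continuous.aestronglyMeasurable (by fun_prop)
  have hm3 : AEStronglyMeasurable (fun ξ : E => innerSL ℝ ξ) μ :=
    Continuous.aestronglyMeasurable (by fun_prop)
  refine hasFDerivAt_integral_of_dominated_of_fderiv_le (bound := fun _ => B * M)
    (F' := fun x ξ => ψ ⟪x, ξ⟫ • (g ξ • innerSL ℝ ξ))
    (Metric.ball_mem_nhds x0 one_pos) ?_ ?_ ?_ ?_ (integrable_const _) ?_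
  · exact Filter.Eventually.of_forall fun x => (hm1 x).smul hg
  · refine (integrable_const (B' * M)).mono' ((hm1 x0).smul hg) ?_
    filter_upwards [hμ, hM] with ξ h1 h2
    have h4 := hB' ⟪x0, ξ⟫ (hmem x0 (mem_ball_self one_pos) ξ h1)
    rw [norm_smul]
    exact mul_le_mul h4 h2 (norm_nonneg _) ((norm_nonneg _).trans h4)
  · exact (hm2 x0).smul (hg.smul hm3)
  · filter_upwards [hμ, hM] with ξ h1 h2 x hx
    have h4 := hB ⟪x, ξ⟫ (hmem x hx ξ h1)
    rw [norm_smul, norm_smul, innerSL_apply_norm, h1, mul_one]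
    exact mul_le_mul h4 h2 (norm_nonneg _) ((norm_nonneg _).trans h4)
  · refine Filter.Eventually.of_forall fun ξ x _ => ?_
    have h1 : HasFDerivAt (fun x : E => ⟪x, ξ⟫) (innerSL ℝ ξ) x := by
      have : (fun x : E => ⟪x, ξ⟫) = innerSL ℝ ξ := by ext y; simp [real_inner_comm]
      rw [this]; exact (innerSL ℝ ξ).hasFDerivAt
    have h2 := ((hφ ⟪x, ξ⟫).comp_hasFDerivAt x h1).mul_const (g ξ)
    refine h2.congr_fderiv ?_
    ext y; simp; ring

/-- kernel -/
def kern (j : ℕ) (q t : ℝ) : ℝ := SignType.sign t ^ j * |t| ^ q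

lemma sign_abs_le (t : ℝ) : |((SignType.sign t : SignType) : ℝ)| ≤ 1 := by
  rcases lt_trichotomy t 0 with h | h | h <;> simp [h]

lemma kern_meas (j : ℕ) (q : ℝ) : Measurable (kern j q) := by
  have : Measurable fun t : ℝ => ((SignType.sign t : SignType) : ℝ) := by
    have : (fun t : ℝ => ((SignType.sign t : SignType) : ℝ)) = fun t => if 0 < t then 1 else if t < 0 then -1 else 0 := by
      ext t
      rcases lt_trichotomy t 0 with h | h | h <;> simp [h, not_lt.2 h.le]
    rw [this]
    exact Measurable.ite measurableSet_Ioi measurable_const (Measurable.ite measurableSet_Iio measurable_const measurable_const)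
  unfold kern
  fun_prop

lemma kern_abs (j : ℕ) (q t : ℝ) : |kern j q t| ≤ 1 * |t| ^ q := by
  unfold kern
  rw [abs_mul, abs_pow, abs_of_nonneg (a := |t| ^ q) (by positivity)]
  gcongr
  exact pow_le_one₀ (abs_nonneg _) (sign_abs_le t)

lemma kern_zero (j : ℕ) {q : ℝ} (hq : q ≠ 0) : kern j q 0 = 0 := by
  simp [kern, Real.zero_rpow hq]

lemma kern_deriv (j : ℕ) (q : ℝ) {t : ℝ} (ht : t ≠ 0) :
    HasDerivAt (kern j q) (q * kern (j + 1) (q - 1) t) t := by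
  rcases lt_or_gt_of_ne ht with h | h
  · have h1 : HasDerivAt (fun t : ℝ => (-1) ^ j * (-t) ^ q) ((-1) ^ j * (-1 * q * (-t) ^ (q - 1))) t :=
      ((hasDerivAt_neg t).rpow_const (Or.inl (by linarith))).const_mul _
    refine (h1.congr_of_eventuallyEq ?_).congr_deriv ?_
    · filter_upwards [gt_mem_nhds h] with u hu
      simp [kern, hu, abs_of_neg hu]
    · simp [kern, h, abs_of_neg h]; ring
  · have h1 : HasDerivAt (fun t : ℝ => t ^ q) (1 * q * t ^ (q - 1)) t :=
      (hasDerivAt_id t).rpow_const (Or.inl (by simpa using ht))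
    refine (h1.congr_of_eventuallyEq ?_).congr_deriv ?_
    · filter_upwards [lt_mem_nhds h] with u hu
      simp [kern, hu, abs_of_pos hu]
    · simp [kern, h, abs_of_pos h]

lemma kern_cont_at (j : ℕ) (q : ℝ) {t : ℝ} (ht : t ≠ 0) : ContinuousAt (kern j q) t :=
  (kern_deriv j q ht).continuousAt

lemma cont_of_bound {f : ℝ → ℝ} {q C : ℝ} (hq : 0 < q) (h0 : ∀ t, t ≠ 0 → ContinuousAt f t)
    (hf : ∀ t, |f t| ≤ C * |t| ^ q) : Continuous f := by
  rw [continuous_iff_continuousAt]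
  intro t
  by_cases ht : t = 0
  · subst ht
    have hf0 : f 0 = 0 := by
      have := hf 0
      rw [abs_zero, Real.zero_rpow hq.ne', mul_zero] at this
      simpa using this
    rw [ContinuousAt, hf0]
    refine squeeze_zero_norm (a := fun t => C * |t| ^ q) hf ?_
    have : Continuous fun t : ℝ => C * |t| ^ q := by fun_prop (disch := exact hq.le)
    have := this.tendsto 0
    simpa [Real.zero_rpow hq.ne'] using this
  · exact h0 t ht

lemma kern_cont (j : ℕ) {q : ℝ} (hq : 0 < q) : Continuous (kern j q) :=
  cont_of_bound hq (fun _ => kern_cont_at j q) (kern_abs j q)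

lemma kern_cut_cont (j : ℕ) {q N : ℝ} (hq : -1 < q) (hq0 : q ≠ 0) (hN : 0 ≤ N) :
    Continuous (fun t => kern j q t * cut N t) := by
  refine cont_of_bound (q := q + 1) (C := N) (by linarith)
    (fun t ht => (kern_cont_at j q ht).mul (cut_cont N).continuousAt) ?_
  intro t
  by_cases ht : t = 0
  · subst ht; rw [kern_zero j hq0]; simp [Real.zero_rpow (by linarith : q + 1 ≠ 0)]
  · have h1 := kern_abs j q t
    rw [one_mul] at h1
    have h2 : cut N t ≤ N * |t| := min_le_right _ _
    rw [abs_mul, abs_of_nonneg (cut_mem hN).1, Real.rpow_add_one (abs_pos.2 ht).ne']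
    calc _ ≤ |t| ^ q * (N * |t|) := mul_le_mul h1 h2 (cut_mem hN).1 (by positivity)
      _ = _ := by ring

lemma kern_intervalIntegrable (j : ℕ) {q : ℝ} (hq : -1 < q) (a b : ℝ) :
    IntervalIntegrable (kern j q) volume a b := by
  have h : IntervalIntegrable (fun t : ℝ => |t| ^ q) volume a b := by
    have h0 : ∀ b : ℝ, 0 ≤ b → IntervalIntegrable (fun t : ℝ => |t| ^ q) volume 0 b := by
      intro b hb
      refine (intervalIntegral.intervalIntegrable_rpow' (a := 0) (b := b) hq).congr ?_
      intro t ht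
      rw [uIoc_of_le hb] at ht
      simp only [abs_of_pos ht.1]
    have h1 : ∀ b : ℝ, IntervalIntegrable (fun t : ℝ => |t| ^ q) volume 0 b := by
      intro b
      rcases le_total 0 b with hb | hb
      · exact h0 b hb
      · have := (IntervalIntegrable.iff_comp_neg).1 (h0 (-b) (by linarith))
        simpa using this
    exact (h1 a).symm.trans (h1 b)
  refine h.mono_fun (kern_meas j q).aestronglyMeasurable ?_
  refine Filter.Eventually.of_forall fun t => ?_
  have := kern_abs j q t
  rw [one_mul] at this
  change ‖kern j q t‖ ≤ ‖|t| ^ q‖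
  rw [Real.norm_eq_abs, Real.norm_of_nonneg (by positivity)]
  exact this

lemma kern_ftc (j : ℕ) {q : ℝ} (hq : 0 < q) (b : ℝ) :
    ∫ t in (0:ℝ)..b, q * kern (j + 1) (q - 1) t = kern j q b := by
  have := integral_eq_of_hasDerivAt_off_countable (kern j q) (fun t => q * kern (j+1) (q-1) t)
    (a := 0) (b := b) (countable_singleton 0) (kern_cont j hq).continuousOn
    (fun t ht => kern_deriv j q ht.2)
    ((kern_intervalIntegrable (j+1) (by linarith) 0 b).const_mul q)
  rw [this, kern_zero j hq.ne', sub_zero]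

/-- continuity of the singular kernel integral -/
lemma kern_contOn {μ : Measure E} [IsFiniteMeasure μ]
    (hinv : ∀ R : E ≃ₗᵢ[ℝ] E, MeasurePreserving R μ μ) (hμ : ∀ᵐ ξ ∂μ, ‖ξ‖ = 1)
    (j : ℕ) {s : ℝ} (hs : -1 < s) (hs0 : s ≠ 0)
    {g : E → V} (hg : AEStronglyMeasurable g μ) {M : ℝ}
    (hM : ∀ᵐ ξ ∂μ, ‖g ξ‖ ≤ M) :
    ContinuousOn (fun x => ∫ ξ, kern j s ⟪x, ξ⟫ • g ξ ∂μ) {0}ᶜ := by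
  refine (kern_unif hinv hμ hs hs0 (kern_meas j s) (kern_abs j s) hg hM).continuousOn ?_
  refine Filter.Eventually.frequently ?_
  filter_upwards [Filter.eventually_ge_atTop 0] with N hN
  exact (cont0 hμ (kern_cut_cont j hs hs0 hN) hg hM).continuousOn

lemma kern_diff {μ : Measure E} [IsFiniteMeasure μ]
    (hinv : ∀ R : E ≃ₗᵢ[ℝ] E, MeasurePreserving R μ μ) (hμ : ∀ᵐ ξ ∂μ, ‖ξ‖ = 1)
    (j : ℕ) {q : ℝ} (hq : 0 < q) (hq1 : q ≠ 1)
    {g : E → ℝ} (hg : AEStronglyMeasurable g μ) {M : ℝ}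
    (hM : ∀ᵐ ξ ∂μ, ‖g ξ‖ ≤ M) {x : E} (hx : x ≠ 0) :
    HasFDerivAt (fun x => ∫ ξ, kern j q ⟪x, ξ⟫ • g ξ ∂μ)
      (q • ∫ ξ, kern (j + 1) (q - 1) ⟪x, ξ⟫ • (g ξ • innerSL ℝ ξ) ∂μ) x := by
  have hs : -1 < q - 1 := by linarith
  have hs0 : q - 1 ≠ 0 := sub_ne_zero.2 hq1
  have hg' : AEStronglyMeasurable (fun ξ : E => g ξ • innerSL ℝ ξ) μ := by
    have : AEStronglyMeasurable (fun ξ : E => innerSL ℝ ξ) μ :=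
      Continuous.aestronglyMeasurable (by fun_prop)
    exact hg.smul this
  have hM' : ∀ᵐ ξ ∂μ, ‖g ξ • innerSL ℝ ξ‖ ≤ M := by
    filter_upwards [hμ, hM] with ξ h1 h2
    rw [norm_smul, innerSL_apply_norm, h1, mul_one]; exact h2
  set κ : ℝ → ℝ := fun t => q * kern (j+1) (q-1) t with hκd
  have hκm : Measurable κ := (kern_meas _ _).const_mul q
  have hκb : ∀ t, |κ t| ≤ q * |t| ^ (q - 1) := by
    intro t
    have := kern_abs (j+1) (q-1) t
    rw [one_mul] at this
    rw [hκd, abs_mul, abs_of_pos hq]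
    gcongr
  have hκc : ∀ N : ℝ, 0 ≤ N → Continuous (fun t => κ t * cut N t) := by
    intro N hN
    have := (kern_cut_cont (j+1) hs hs0 hN).const_mul q
    simpa [hκd, mul_assoc] using this
  have hcI : ∀ b : ℝ, IntervalIntegrable κ volume 0 b := fun b =>
    (kern_intervalIntegrable (j+1) hs 0 b).const_mul q
  have hu := kern_unif hinv hμ hs hs0 hκm hκb hg' hM'
  -- pass to natural numbers
  have hu' : TendstoLocallyUniformlyOn (fun (N : ℕ) (x : E) =>
      ∫ ξ, (κ ⟪x, ξ⟫ * cut N ⟪x, ξ⟫) • (g ξ • innerSL ℝ ξ) ∂μ)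
      (fun x => ∫ ξ, κ ⟪x, ξ⟫ • (g ξ • innerSL ℝ ξ) ∂μ) Filter.atTop {0}ᶜ := by
    intro u hu1 x hx
    obtain ⟨t, ht, h⟩ := hu u hu1 x hx
    exact ⟨t, ht, tendsto_natCast_atTop_atTop.eventually h⟩
  set Φ : ℕ → ℝ → ℝ := fun N b => ∫ t in (0:ℝ)..b, κ t * cut N t with hΦ
  have hΦd : ∀ N b, HasDerivAt (Φ N) (κ b * cut N b) b := by
    intro N b
    have hc := hκc N (Nat.cast_nonneg N)
    exact intervalIntegral.integral_hasDerivAt_right (hc.intervalIntegrable _ _)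
      (hc.stronglyMeasurableAtFilter _ _) hc.continuousAt
  have hΦt : ∀ b, Filter.Tendsto (fun N => Φ N b) Filter.atTop (nhds (kern j q b)) := by
    intro b
    rw [← kern_ftc j hq b]
    refine intervalIntegral.tendsto_integral_filter_of_dominated_convergence (fun t => ‖κ t‖) ?_ ?_ (hcI b).norm ?_
    · exact Filter.Eventually.of_forall fun N => (hκc N (Nat.cast_nonneg N)).aestronglyMeasurable
    · refine Filter.Eventually.of_forall fun N => Filter.Eventually.of_forall fun t _ => ?_
      have := cut_mem (N := N) (t := t) (Nat.cast_nonneg N)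
      rw [norm_mul, Real.norm_of_nonneg this.1]
      exact mul_le_of_le_one_right (norm_nonneg _) this.2
    · refine Filter.Eventually.of_forall fun t _ => ?_
      by_cases ht : t = 0
      · subst ht
        have : κ 0 = 0 := by simp [hκd, kern_zero _ hs0]
        simp only [hκd] at this
        simp [hκd, this]
      · refine tendsto_const_nhds.congr' ?_
        filter_upwards [tendsto_natCast_atTop_atTop.eventually (cut_eventually ht)] with N hN
        rw [hN, mul_one]
  have hΦb : ∀ N b, |Φ N b| ≤ |∫ t in (0:ℝ)..b, ‖κ t‖| := by
    intro N b
    change ‖∫ t in (0:ℝ)..b, κ t * cut N t‖ ≤ |∫ t in (0:ℝ)..b, ‖κ t‖|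
    refine intervalIntegral.norm_integral_le_abs_of_norm_le ?_ (hcI b).norm
    refine Filter.Eventually.of_forall fun t => ?_
    have := cut_mem (N := N) (t := t) (Nat.cast_nonneg N)
    rw [norm_mul, Real.norm_of_nonneg this.1]
    exact mul_le_of_le_one_right (norm_nonneg _) this.2
  have hPc : Continuous fun b : ℝ => |∫ t in (0:ℝ)..b, ‖κ t‖| :=
    (intervalIntegral.continuous_primitive (fun a b => ((kern_intervalIntegrable (j+1) hs a b).const_mul q).norm) 0).abs
  have hfin := hasFDerivAt_of_tendstoLocallyUniformlyOn (x := x) (isOpen_compl_singleton) hu'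
    (f := fun N x => ∫ ξ, Φ N ⟪x, ξ⟫ • g ξ ∂μ) (g := fun x => ∫ ξ, kern j q ⟪x, ξ⟫ • g ξ ∂μ)
    (fun N x _ => diff0 hμ (hκc N (Nat.cast_nonneg N)) (hΦd N) hg hM x) ?_ hx
  · refine hfin.congr_fderiv ?_
    rw [← integral_smul]
    simp only [hκd, smul_smul, mul_assoc]
  · intro x hx
    obtain ⟨B, hB⟩ := (isCompact_Icc (a := -‖x‖) (b := ‖x‖)).exists_bound_of_continuousOn hPc.continuousOn
    refine tendsto_integral_of_dominated_convergence (fun _ => B * M) ?_ (integrable_const _) ?_ ?_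
    · intro N
      have hc : Continuous (Φ N) := continuous_iff_continuousAt.2 fun t => (hΦd N t).continuousAt
      have hm : AEStronglyMeasurable (fun ξ => Φ N ⟪x, ξ⟫) μ :=
        Continuous.aestronglyMeasurable (by fun_prop)
      exact hm.smul hg
    · intro N
      filter_upwards [hμ, hM] with ξ h1 h2
      have h3 := abs_real_inner_le_norm x ξ
      rw [h1, mul_one] at h3
      have h4 := hB ⟪x, ξ⟫ (abs_le.1 h3)
      rw [Real.norm_eq_abs, abs_abs] at h4
      have h5 := (hΦb N ⟪x, ξ⟫).trans h4
      rw [norm_smul]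
      exact mul_le_mul h5 h2 (norm_nonneg _) ((abs_nonneg _).trans h5)
    · exact Filter.Eventually.of_forall fun ξ => (hΦt ⟪x, ξ⟫).smul_const _
end

lemma Cconst_step {t : ℝ} (h0 : t ≠ 0) (h1 : t ≠ 1) :
    Cconst t = -(t * (t - 1)) * Cconst (t - 2) := by
  unfold Cconst
  have e1 : Real.Gamma ((t + 1) / 2) = ((t - 1) / 2) * Real.Gamma ((t - 2 + 1) / 2) := by
    have : (t + 1) / 2 = (t - 2 + 1) / 2 + 1 := by ring
    have h2 : (t - 2 + 1) / 2 ≠ 0 := by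
      intro h; apply h1; linarith
    rw [this, Real.Gamma_add_one h2]; ring
  have e2 : Real.Gamma (-(t - 2) / 2) = (-t / 2) * Real.Gamma (-t / 2) := by
    have : -(t - 2) / 2 = -t / 2 + 1 := by ring
    have h2 : -t / 2 ≠ 0 := by
      intro h; apply h0; linarith
    rw [this, Real.Gamma_add_one h2]
  have e3 : (2:ℝ) ^ (t + 1) = 4 * 2 ^ (t - 2 + 1) := by
    have : t + 1 = 2 + (t - 2 + 1) := by ring
    rw [this, Real.rpow_add (by norm_num)]
    norm_num
  rw [e1, e2, e3]
  by_cases hG : Real.Gamma (-t / 2) = 0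
  · simp [hG]
  · field_simp
    ring

lemma Cconst_ne {t : ℝ} (h : -1 < t) (ht : ∀ k : ℕ, t ≠ 2 * k) : Cconst t ≠ 0 := by
  unfold Cconst
  have h1 : 0 < Real.Gamma ((t + 1) / 2) := Real.Gamma_pos_of_pos (by linarith)
  have h2 : Real.Gamma (-t / 2) ≠ 0 := Real.Gamma_ne_zero fun m hm => ht m (by linarith)
  have h3 : 0 < √π := Real.sqrt_pos.2 Real.pi_pos
  positivity

lemma Cconst_prod (p : ℝ) (hpe : ∀ k : ℕ, p ≠ 2 * k) (m : ℕ) (hm : ((2 * m : ℕ) : ℝ) < p + 1) :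
    (Complex.I ^ (2 * m)).re * (Cconst p / Cconst (p - (2 * m : ℕ))) =
      ∏ i ∈ Finset.range (2 * m), (p - i) := by
  have hI : (Complex.I ^ (2 * m)).re = (-1) ^ m := by
    rw [pow_mul, Complex.I_sq]
    exact_mod_cast Complex.ofReal_re ((-1) ^ m)
  rw [hI]
  have hne : Cconst (p - (2 * m : ℕ)) ≠ 0 := by
    refine Cconst_ne (by linarith) fun k hk => hpe (k + m) ?_
    push_cast at hk ⊢; linarith
  rw [← mul_div_assoc, div_eq_iff hne]
  clear hne hI
  induction m with
  | zero => simp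
  | succ m ih =>
    have h1 : ((2 * m : ℕ) : ℝ) + 2 < p + 1 := by push_cast at hm ⊢; linarith
    have ih := ih (by linarith)
    have h2 := Cconst_step (t := p - (2 * m : ℕ)) (by
      intro h; apply hpe m; push_cast at h; linarith) (by intro h; linarith)
    have e : p - (2 * (m + 1) : ℕ) = p - (2 * m : ℕ) - 2 := by push_cast; ring
    rw [e, show 2 * (m + 1) = 2 * m + 1 + 1 by ring, Finset.prod_range_succ, Finset.prod_range_succ, pow_succ]
    rw [h2] at ih
    push_cast at ih ⊢
    linear_combination (-1) * ih

section main
variable {n : ℕ}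

local notation "EE" => EuclideanSpace ℝ (Fin n)

/-- kernel integral -/
def GG (μ : Measure (EuclideanSpace ℝ (Fin n))) (j : ℕ) (q : ℝ) (g : EuclideanSpace ℝ (Fin n) → ℝ)
    (x : EuclideanSpace ℝ (Fin n)) : ℝ := ∫ ξ, kern j q ⟪x, ξ⟫ • g ξ ∂μ

lemma coord_bdd {μ : Measure EE} (hμ : ∀ᵐ ξ ∂μ, ‖ξ‖ = 1) {g : EE → ℝ} {M : ℝ}
    (hM : ∀ᵐ ξ ∂μ, ‖g ξ‖ ≤ M) (i : Fin n) : ∀ᵐ ξ ∂μ, ‖ξ i * g ξ‖ ≤ M := by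
  filter_upwards [hμ, hM] with ξ h1 h2
  have h3 := PiLp.norm_apply_le ξ i
  rw [norm_mul]
  calc _ ≤ 1 * ‖g ξ‖ := by gcongr; linarith
    _ ≤ M := by linarith

lemma GG_diff {μ : Measure EE} [IsFiniteMeasure μ]
    (hinv : ∀ R : EE ≃ₗᵢ[ℝ] EE, MeasurePreserving R μ μ) (hμ : ∀ᵐ ξ ∂μ, ‖ξ‖ = 1)
    (j : ℕ) {q : ℝ} (hq : 0 < q) (hq1 : q ≠ 1)
    {g : EE → ℝ} (hg : Measurable g) {M : ℝ}
    (hM : ∀ᵐ ξ ∂μ, ‖g ξ‖ ≤ M) {x : EE} (hx : x ≠ 0) :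
    HasFDerivAt (GG μ j q g)
      (∑ i, (q * GG μ (j + 1) (q - 1) (fun ξ => ξ i * g ξ) x) • (EuclideanSpace.proj i : EuclideanSpace ℝ (Fin n) →L[ℝ] ℝ)) x := by
  refine (kern_diff hinv hμ j hq hq1 hg.aestronglyMeasurable hM hx).congr_fderiv ?_
  have hg' : AEStronglyMeasurable (fun ξ : EE => g ξ • innerSL ℝ ξ) μ := by
    have : AEStronglyMeasurable (fun ξ : EE => innerSL ℝ ξ) μ :=
      Continuous.aestronglyMeasurable (by fun_prop)
    exact hg.aestronglyMeasurable.smul this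
  have hM' : ∀ᵐ ξ ∂μ, ‖g ξ • innerSL ℝ ξ‖ ≤ M := by
    filter_upwards [hμ, hM] with ξ h1 h2
    rw [norm_smul, innerSL_apply_norm, h1, mul_one]; exact h2
  have hI := kern_int hinv hμ (s := q - 1) (by linarith) (kern_meas (j+1) (q-1)) (kern_abs (j+1) (q-1)) hg' hM' hx
  have hI2 : ∀ i, Integrable (fun ξ : EE => kern (j+1) (q-1) ⟪x, ξ⟫ • (ξ i * g ξ)) μ := fun i =>
    kern_int hinv hμ (s := q - 1) (by linarith) (kern_meas (j+1) (q-1)) (kern_abs (j+1) (q-1))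
      (Measurable.aestronglyMeasurable (by fun_prop)) (coord_bdd hμ hM i) hx
  ext y
  rw [ContinuousLinearMap.smul_apply, ContinuousLinearMap.integral_apply hI]
  simp only [ContinuousLinearMap.sum_apply, ContinuousLinearMap.smul_apply, GG, EuclideanSpace.coe_proj, innerSL_apply_apply]
  simp only [smul_eq_mul, mul_assoc]
  rw [← Finset.mul_sum]
  congr 1
  simp_rw [← integral_mul_const]
  rw [← integral_finsetSum]
  · refine integral_congr_ae (Filter.Eventually.of_forall fun ξ => ?_)
    simp only [PiLp.inner_apply, RCLike.inner_apply, conj_trivial]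
    rw [Finset.mul_sum, Finset.mul_sum]
    refine Finset.sum_congr rfl fun i _ => ?_
    ring
  · intro i _
    exact (hI2 i).mul_const _

lemma GG_contDiff {μ : Measure EE} [IsFiniteMeasure μ]
    (hinv : ∀ R : EE ≃ₗᵢ[ℝ] EE, MeasurePreserving R μ μ) (hμ : ∀ᵐ ξ ∂μ, ‖ξ‖ = 1)
    {M : ℝ} (m : ℕ) : ∀ (j : ℕ) {q : ℝ} (_ : (m : ℝ) < q + 1) (_ : ∀ i : ℕ, i ≤ m → q ≠ i)
    {g : EE → ℝ} (_ : Measurable g) (_ : ∀ᵐ ξ ∂μ, ‖g ξ‖ ≤ M),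
    ContDiffOn ℝ m (GG μ j q g) {0}ᶜ := by
  induction m with
  | zero =>
    intro j q hq hqi g hg hM
    rw [Nat.cast_zero, contDiffOn_zero]
    exact kern_contOn hinv hμ j (by push_cast at hq; linarith) (by simpa using hqi 0 le_rfl) hg.aestronglyMeasurable hM
  | succ m ih =>
    intro j q hq hqi g hg hM
    have hq0 : 0 < q := by
      push_cast at hq
      have : (0:ℝ) ≤ m := Nat.cast_nonneg m
      linarith
    have hq1 : q ≠ 1 := by simpa using hqi 1 (by omega)
    rw [Nat.cast_add, Nat.cast_one, contDiffOn_succ_iff_hasFDerivWithinAt_of_uniqueDiffOn isOpen_compl_singleton.uniqueDiffOn]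
    refine ⟨by simp, _, ?_, fun x hx => (GG_diff hinv hμ j hq0 hq1 hg hM hx).hasFDerivWithinAt⟩
    refine ContDiffOn.sum fun i _ => ?_
    refine ContDiffOn.smul (f := fun x => q * GG μ (j + 1) (q - 1) (fun ξ => ξ i * g ξ) x)
      (g := fun _ => (EuclideanSpace.proj i : EuclideanSpace ℝ (Fin n) →L[ℝ] ℝ))
      (contDiffOn_const.mul ?_) contDiffOn_const
    refine ih (j + 1) (by push_cast at hq; linarith) ?_ (by fun_prop) (coord_bdd hμ hM i)
    intro k hk h
    apply hqi (k + 1) (by omega)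
    push_cast; linarith

lemma prod_bdd {μ : Measure EE} (hμ : ∀ᵐ ξ ∂μ, ‖ξ‖ = 1) {g : EE → ℝ} {M : ℝ}
    (hM : ∀ᵐ ξ ∂μ, ‖g ξ‖ ≤ M) (L : List (Fin n)) :
    ∀ᵐ ξ ∂μ, ‖(L.map fun i => ξ i).prod * g ξ‖ ≤ M := by
  induction L with
  | nil => simpa using hM
  | cons i L ih => simpa [mul_assoc] using coord_bdd hμ ih i

lemma prod_meas (L : List (Fin n)) : Measurable fun ξ : EE => (L.map fun i => ξ i).prod := by
  induction L with
  | nil => simp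
  | cons i L ih => simp only [List.map_cons, List.prod_cons]; fun_prop

lemma GG_mpd {μ : Measure EE} [IsFiniteMeasure μ]
    (hinv : ∀ R : EE ≃ₗᵢ[ℝ] EE, MeasurePreserving R μ μ) (hμ : ∀ᵐ ξ ∂μ, ‖ξ‖ = 1)
    {M : ℝ} {f : EE → ℝ} (hf : Measurable f) (hM : ∀ᵐ ξ ∂μ, ‖f ξ‖ ≤ M) (p : ℝ)
    (L : List (Fin n)) (hL : (L.length : ℝ) < p + 1) (hp : ∀ i : ℕ, i ≤ L.length → p ≠ i) :
    ∀ x : EE, x ≠ 0 → mpd n L (GG μ 0 p f) x = (∏ i ∈ Finset.range L.length, (p - i)) *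
      GG μ L.length (p - L.length) (fun ξ => (L.map fun i => ξ i).prod * f ξ) x := by
  induction L with
  | nil => intro x _; simp [mpd]
  | cons i L ih =>
    intro x hx
    simp only [List.length_cons] at hL hp
    push_cast at hL
    have ih := ih (by linarith) (fun k hk => hp k (by omega))
    have hev : mpd n L (GG μ 0 p f) =ᶠ[nhds x] fun x => (∏ i ∈ Finset.range L.length, (p - i)) *
      GG μ L.length (p - L.length) (fun ξ => (L.map fun i => ξ i).prod * f ξ) x := by
      filter_upwards [isOpen_compl_singleton.mem_nhds hx] with y hy
      exact ih y hy
    have hm := prod_meas L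
    have hd := (GG_diff hinv hμ L.length (q := p - L.length)
      (g := fun ξ => (L.map fun i => ξ i).prod * f ξ) (by linarith)
      (by intro h; apply hp (L.length + 1) le_rfl; push_cast; linarith)
      (hm.mul hf) (prod_bdd hμ hM L) hx).const_mul (∏ i ∈ Finset.range L.length, (p - i))
    simp only [mpd, pd]
    rw [hev.fderiv_eq, HasFDerivAt.fderiv hd]
    simp only [ContinuousLinearMap.smul_apply, ContinuousLinearMap.sum_apply, EuclideanSpace.coe_proj, List.length_cons]
    rw [Finset.sum_eq_single i]
    · rw [Finset.prod_range_succ]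
      simp only [PiLp.single_apply, if_true, smul_eq_mul, mul_one, List.map_cons, List.prod_cons]
      rw [mul_assoc, show p - ((L.length + 1 : ℕ) : ℝ) = p - L.length - 1 by push_cast; ring]
      simp only [mul_assoc]
    · intro k _ hk
      simp [hk]
    · simp

end main

theorem lp_cosine_differentiation (n : ℕ) (hn : 2 ≤ n) (p : ℝ) (hp : 1 < p)
    (hpe : ∀ k : ℕ, p ≠ 2 * k)
    (f : EuclideanSpace ℝ (Fin n) → ℝ) (hf_meas : Measurable f)
    (hf_bdd : ∃ M : ℝ, ∀ ξ, |f ξ| ≤ M)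
    (hf_even : ∀ ξ, f (-ξ) = f ξ)
    (H : EuclideanSpace ℝ (Fin n) → ℝ)
    (hH : ∀ x, H x = ∫ ξ in sphere (0 : EuclideanSpace ℝ (Fin n)) 1,
      |⟪x, ξ⟫| ^ p * f ξ ∂(μH[(n : ℝ) - 1]))
    (L : List (Fin n)) (hLe : Even L.length) (hLp : (L.length : ℝ) < p + 1) :
    ContDiffOn ℝ L.length H {(0 : EuclideanSpace ℝ (Fin n))}ᶜ ∧
    ∀ x : EuclideanSpace ℝ (Fin n), x ≠ 0 →
      mpd n L H x = (Complex.I ^ L.length).re * (Cconst p / Cconst (p - L.length)) *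
        ∫ ξ in sphere (0 : EuclideanSpace ℝ (Fin n)) 1,
          |⟪x, ξ⟫| ^ (p - (L.length : ℝ)) * (L.map fun i => ξ i).prod * f ξ
          ∂(μH[(n : ℝ) - 1]) := by
  obtain ⟨M, hM⟩ := hf_bdd
  set μ : Measure (EuclideanSpace ℝ (Fin n)) := (μH[(n : ℝ) - 1]).restrict (sphere 0 1) with hμd
  have hfin : IsFiniteMeasure μ := ⟨by rw [hμd, Measure.restrict_apply_univ]; exact sphere_fin n hn⟩
  have hμ : ∀ᵐ ξ ∂μ, ‖ξ‖ = 1 := by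
    filter_upwards [ae_restrict_mem isClosed_sphere.measurableSet] with ξ hξ
    simpa using hξ
  have hinv : ∀ R : EuclideanSpace ℝ (Fin n) ≃ₗᵢ[ℝ] EuclideanSpace ℝ (Fin n), MeasurePreserving R μ μ := by
    intro R
    have h1 := R.toIsometryEquiv.measurePreserving_hausdorffMeasure ((n : ℝ) - 1)
    have h2 := h1.restrict_preimage (s := sphere (0 : EuclideanSpace ℝ (Fin n)) 1) isClosed_sphere.measurableSet
    have h3 : R.toIsometryEquiv ⁻¹' (sphere (0 : EuclideanSpace ℝ (Fin n)) 1) = sphere 0 1 := by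
      ext y; simp
    rw [h3] at h2
    exact h2
  have hM' : ∀ᵐ ξ ∂μ, ‖f ξ‖ ≤ M := Filter.Eventually.of_forall hM
  have hHG : H = GG μ 0 p f := by
    ext x; rw [hH x]; simp [GG, kern]
  obtain ⟨m, hm⟩ := hLe
  rw [← two_mul] at hm
  have hpi : ∀ i : ℕ, i ≤ L.length → p ≠ i := by
    intro i hi h
    rcases hi.eq_or_lt with h1 | h1
    · apply hpe m; rw [h, h1, hm]; push_cast; ring
    · have : (i : ℝ) + 1 ≤ L.length := by exact_mod_cast h1
      linarith
  rw [hHG]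
  refine ⟨GG_contDiff hinv hμ L.length 0 hLp hpi hf_meas hM', fun x hx => ?_⟩
  rw [GG_mpd hinv hμ hf_meas hM' p L hLp hpi x hx]
  have hC := Cconst_prod p hpe m (by rw [← hm]; exact hLp)
  rw [← hm] at hC
  rw [hC]
  congr 1
  refine integral_congr_ae (Filter.Eventually.of_forall fun ξ => ?_)
  simp only [kern, smul_eq_mul]
  have hq : p - (L.length : ℝ) ≠ 0 := sub_ne_zero.2 (hpi _ le_rfl)
  by_cases h0 : ⟪x, ξ⟫ = 0
  · simp [h0, Real.zero_rpow hq]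
  · have : ((SignType.sign ⟪x, ξ⟫ : SignType) : ℝ) ^ L.length = 1 := by
      rw [hm, pow_mul]
      rcases lt_or_gt_of_ne h0 with h | h <;> simp [h]
    rw [this]; ring
end
end

section
/- Let n ≥ 2, let p > 1 not be an even integer, and let f ∈ L^∞(S^{n-1}) satisfy f ≥ 0 and ∫_{S^{n-1}} f dξ > 0. Define H by H(x)^p = ∫_{S^{n-1}} |⟨x,ξ⟩|^p f(ξ) dξ, H ≥ 0. Then for every unit vector u ∈ S^{n-1} and every unit vector v ∈ S^{n-1} with v ≠ u and v ≠ −u, the second directional derivative of H in direction u evaluated at v is strictly positive: D_u^2 H(v) > 0. -/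
open MeasureTheory Real Set Metric
open scoped RealInnerProductSpace ENNReal MeasureTheory
noncomputable section

/-- Derivative of `s ↦ |s|^(p-2) s` away from zero. -/
lemma g_deriv (p : ℝ) (a : ℝ) (ha : a ≠ 0) :
    HasDerivAt (fun s : ℝ => |s| ^ (p-2) * s) ((p-1) * |a| ^ (p-2)) a := by
  have h1 := ((hasDerivAt_abs ha).rpow_const (p := p - 2) (Or.inl (abs_ne_zero.2 ha))).mul
    (hasDerivAt_id a)
  refine h1.congr_deriv ?_
  have h2 : |a| ^ (p-2) = |a| ^ (p-2-1) * |a| := by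
    rw [← Real.rpow_add_one (abs_ne_zero.2 ha)]; congr 1; ring
  have h3 : (SignType.sign a : ℝ) * a = |a| := sign_mul_self a
  have h4 : (SignType.sign a : ℝ) * (p-2) * |a| ^ (p-2-1) * a + |a| ^ (p-2) * 1 =
      (p-1) * |a| ^ (p-2) := by
    calc _ = (p-2) * (|a| ^ (p-2-1) * ((SignType.sign a : ℝ) * a)) + |a| ^ (p-2) := by ring
      _ = _ := by rw [h3, ← h2]; ring
  exact h4

lemma pos_bound (q : ℝ) (hq : 0 < q) : ∃ C : ℝ, 0 ≤ C ∧ ∀ a s : ℝ, 0 < a → a ≤ 1 → 0 ≤ s → s ≤ 2 →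
    |s ^ q - a ^ q| ≤ C * (a ^ (q-1) + 1) * |s - a| ∧
    s ^ q + a ^ q ≤ C * (a ^ (q-1) + 1) * (s + a) := by
  rcases le_total q 1 with h1 | h1
  · refine ⟨2, by norm_num, fun a s ha _ hs _ => ?_⟩
    obtain ⟨r, hr, rfl⟩ : ∃ r : ℝ, 0 ≤ r ∧ s = r * a := ⟨s / a, by positivity, by field_simp⟩
    have e1 : a ^ q = a ^ (q-1) * a := by rw [← Real.rpow_add_one ha.ne']; congr 1; ring
    have hpos : 0 < a ^ (q-1) := by positivity
    rw [Real.mul_rpow hr ha.le, e1]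
    have k1 : |r ^ q - 1| ≤ |r - 1| := by
      rcases le_total r 1 with h | h
      · have l1 : r ≤ r ^ q := by
          rcases hr.eq_or_lt with h0 | h0
          · rw [← h0, Real.zero_rpow hq.ne']
          · simpa using Real.rpow_le_rpow_of_exponent_ge h0 h h1
        have l2 : r ^ q ≤ 1 := Real.rpow_le_one hr h hq.le
        rw [abs_of_nonpos (by linarith), abs_of_nonpos (by linarith)]; linarith
      · have l1 : r ^ q ≤ r := by simpa using Real.rpow_le_rpow_of_exponent_le h h1
        have l2 : 1 ≤ r ^ q := Real.one_le_rpow h hq.le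
        rw [abs_of_nonneg (by linarith), abs_of_nonneg (by linarith)]; linarith
    have k2 : r ^ q ≤ 1 + r := by
      rcases le_total r 1 with h | h
      · have l2 : r ^ q ≤ 1 := Real.rpow_le_one hr h hq.le
        linarith
      · have l1 : r ^ q ≤ r := by simpa using Real.rpow_le_rpow_of_exponent_le h h1
        linarith
    constructor
    · have : |r ^ q * (a ^ (q-1) * a) - a ^ (q-1) * a| = a ^ (q-1) * a * |r ^ q - 1| := by
        rw [← abs_of_pos (by positivity : 0 < a ^ (q-1) * a), ← abs_mul,
          abs_of_pos (by positivity : 0 < a ^ (q-1) * a)]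
        congr 1; ring
      rw [this]
      have : |r * a - a| = a * |r - 1| := by
        nth_rw 3 [← abs_of_pos ha]
        rw [← abs_mul]; congr 1; ring
      rw [this]
      calc a ^ (q-1) * a * |r ^ q - 1| ≤ (2 * (a ^ (q-1) + 1)) * a * |r - 1| := by
            gcongr; linarith
        _ = _ := by ring
    · calc r ^ q * (a ^ (q-1) * a) + a ^ (q-1) * a ≤ (1 + r) * (a ^ (q-1) * a) + a ^ (q-1) * a := by
            gcongr
        _ ≤ 2 * (a ^ (q-1)) * (r * a + a) := by nlinarith [mul_nonneg hr (mul_pos hpos ha).le]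
        _ ≤ _ := by gcongr; linarith
  · refine ⟨q * 2 ^ (q-1), by positivity, fun a s ha ha1 hs hs2 => ?_⟩
    have hpos : 0 < a ^ (q-1) := by positivity
    have hpos2 : 0 < (2:ℝ) ^ (q-1) := by positivity
    have hb : ∀ x ∈ Icc (0:ℝ) 2, x ^ (q-1) ≤ 2 ^ (q-1) := fun x hx =>
      Real.rpow_le_rpow hx.1 hx.2 (by linarith)
    have hs' : ∀ x ∈ Icc (0:ℝ) 2, x ^ q ≤ 2 ^ (q-1) * x := by
      intro x hx
      rcases hx.1.eq_or_lt with h0 | h0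
      · rw [← h0, Real.zero_rpow hq.ne']; simp
      · have : x ^ q = x ^ (q-1) * x := by rw [← Real.rpow_add_one h0.ne']; congr 1; ring
        rw [this]
        exact mul_le_mul_of_nonneg_right (hb x hx) hx.1
    have hsm : s ∈ Icc (0:ℝ) 2 := ⟨hs, hs2⟩
    have ham : a ∈ Icc (0:ℝ) 2 := ⟨ha.le, by linarith⟩
    constructor
    · have := (convex_Icc (0:ℝ) 2).norm_image_sub_le_of_norm_hasDerivWithin_le
        (f := fun x => x ^ q) (f' := fun x => q * x ^ (q-1)) (C := q * 2 ^ (q-1))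
        (fun x hx => (Real.hasDerivAt_rpow_const (Or.inr h1)).hasDerivWithinAt)
        (fun x hx => by
          rw [Real.norm_of_nonneg (mul_nonneg hq.le (Real.rpow_nonneg hx.1 _))]
          exact mul_le_mul_of_nonneg_left (hb x hx) hq.le) ham hsm
      refine this.trans ?_
      rw [Real.norm_eq_abs]
      refine mul_le_mul_of_nonneg_right ?_ (abs_nonneg _)
      exact le_mul_of_one_le_right (by positivity) (by linarith)
    · calc s ^ q + a ^ q ≤ 2 ^ (q-1) * s + 2 ^ (q-1) * a := add_le_add (hs' s hsm) (hs' a ham)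
        _ = 1 * 2 ^ (q-1) * 1 * (s + a) := by ring
        _ ≤ _ := by gcongr; linarith

/-- Lipschitz-type bound at the base point for `s ↦ |s|^(p-2) s`. -/
lemma g_bound (p : ℝ) (hp : 1 < p) : ∃ C : ℝ, 0 ≤ C ∧ ∀ a s : ℝ, |a| ≤ 1 → |s| ≤ 2 → a ≠ 0 →
    |(|s| ^ (p-2) * s) - |a| ^ (p-2) * a| ≤ C * (|a| ^ (p-2) + 1) * |s - a| := by
  obtain ⟨C, hC, hb⟩ := pos_bound (p-1) (by linarith)
  refine ⟨C, hC, ?_⟩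
  have hg : ∀ x : ℝ, 0 ≤ x → |x| ^ (p-2) * x = x ^ (p-1) := by
    intro x hx
    rcases hx.eq_or_lt with h0 | h0
    · rw [← h0, Real.zero_rpow (by linarith)]; simp
    · rw [abs_of_pos h0, ← Real.rpow_add_one h0.ne']; congr 1; ring
  have hpos : ∀ a s : ℝ, |a| ≤ 1 → |s| ≤ 2 → 0 < a →
    |(|s| ^ (p-2) * s) - |a| ^ (p-2) * a| ≤ C * (|a| ^ (p-2) + 1) * |s - a| := by
    intro a s ha1 hs2 ha
    rw [hg a ha.le, abs_of_pos ha, show p - 2 = p - 1 - 1 by ring]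
    rw [abs_of_pos ha] at ha1
    rcases le_total 0 s with hs | hs
    · rw [show p - 1 - 1 = p - 2 by ring, hg s hs, show p - 2 = p - 1 - 1 by ring]
      rw [abs_of_nonneg hs] at hs2
      exact (hb a s ha ha1 hs hs2).1
    · rw [abs_of_nonpos hs] at hs2
      have h1 := (hb a (-s) ha ha1 (by linarith) hs2).2
      have h2 := hg (-s) (by linarith)
      rw [abs_neg] at h2
      rw [show p - 1 - 1 = p - 2 by ring] at *
      have h3 : |s| ^ (p-2) * s = - (-s) ^ (p-1) := by rw [← h2]; ring
      rw [h3, ← abs_neg, abs_of_nonpos (a := s - a) (by linarith)]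
      rw [abs_of_nonneg]
      · linarith
      · have := Real.rpow_nonneg (by linarith : 0 ≤ -s) (p-1)
        have := Real.rpow_nonneg ha.le (p-1)
        linarith
  intro a s ha hs ha0
  rcases lt_or_gt_of_ne ha0 with h | h
  · have := hpos (-a) (-s) (by simpa using ha) (by simpa using hs) (by linarith)
    rw [abs_neg, abs_neg, show -s - -a = -(s - a) by ring, abs_neg] at this
    rw [← abs_neg]
    convert this using 2
    ring
  · exact hpos a s ha hs h

lemma strict_cs {α : Type*} [MeasurableSpace α] (ν : Measure α) (p : ℝ) (hp : 1 < p)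
    (a b : α → ℝ) (ha0 : ∀ᵐ x ∂ν, a x ≠ 0) (hν : ν ≠ 0)
    (hA : Integrable (fun x => |a x| ^ p) ν)
    (hB : Integrable (fun x => |a x| ^ (p-2) * a x * b x) ν)
    (hC : Integrable (fun x => |a x| ^ (p-2) * b x ^ 2) ν)
    (hne : ∀ c : ℝ, ¬ (∀ᵐ x ∂ν, b x = c * a x)) :
    0 < (∫ x, |a x| ^ p ∂ν) ∧ (∫ x, |a x| ^ (p-2) * a x * b x ∂ν) ^ 2 <
      (∫ x, |a x| ^ p ∂ν) * ∫ x, |a x| ^ (p-2) * b x ^ 2 ∂ν := by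
  have hApos : 0 < ∫ x, |a x| ^ p ∂ν := by
    refine lt_of_le_of_ne (integral_nonneg fun x => by positivity) fun h => ?_
    have := (integral_eq_zero_iff_of_nonneg (fun x => by positivity) hA).1 h.symm
    apply hν
    rw [← ae_eq_bot, ← Filter.eventually_false_iff_eq_bot]
    filter_upwards [this, ha0] with x h1 h2
    have : 0 < |a x| ^ p := by positivity
    simp at h1
    linarith
  refine ⟨hApos, ?_⟩
  set A := ∫ x, |a x| ^ p ∂ν
  set B := ∫ x, |a x| ^ (p-2) * a x * b x ∂ν
  set C := ∫ x, |a x| ^ (p-2) * b x ^ 2 ∂ν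
  set c := B / A
  have hsq : ∀ x, |a x| ^ p = |a x| ^ (p-2) * a x ^ 2 := by
    intro x
    by_cases h : a x = 0
    · simp [h, Real.zero_rpow (by linarith : p ≠ 0)]
    · rw [← sq_abs (a x), ← Real.rpow_natCast |a x| 2, ← Real.rpow_add (by positivity)]
      norm_num
  have hexp : ∀ x, |a x| ^ (p-2) * (b x - c * a x) ^ 2 =
      |a x| ^ (p-2) * b x ^ 2 - 2 * c * (|a x| ^ (p-2) * a x * b x) + c ^ 2 * |a x| ^ p := by
    intro x; rw [hsq]; ring
  have hI : Integrable (fun x => |a x| ^ (p-2) * (b x - c * a x) ^ 2) ν := by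
    simp_rw [hexp]
    exact (hC.sub (hB.const_mul _)).add (hA.const_mul _)
  have hval : ∫ x, |a x| ^ (p-2) * (b x - c * a x) ^ 2 ∂ν = C - 2 * c * B + c ^ 2 * A := by
    simp_rw [hexp]
    rw [integral_add (by exact hC.sub (hB.const_mul _)) (hA.const_mul _), integral_sub hC (hB.const_mul _),
      integral_const_mul, integral_const_mul]
  have hpos : 0 < ∫ x, |a x| ^ (p-2) * (b x - c * a x) ^ 2 ∂ν := by
    refine lt_of_le_of_ne (integral_nonneg fun x => by positivity) fun h => ?_
    have := (integral_eq_zero_iff_of_nonneg (fun x => by positivity) hI).1 h.symm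
    apply hne c
    filter_upwards [this, ha0] with x h1 h2
    have h3 : 0 < |a x| ^ (p-2) := by positivity
    simp only [Pi.zero_apply, mul_eq_zero, h3.ne', false_or] at h1
    have := pow_eq_zero_iff (two_ne_zero) |>.1 h1
    linarith
  rw [hval] at hpos
  have : C - 2 * c * B + c ^ 2 * A = C - B ^ 2 / A := by
    simp only [c]; field_simp; ring
  rw [this] at hpos
  have : B ^ 2 / A < C := by linarith
  rw [div_lt_iff₀ hApos] at this
  linarith

lemma abstract_pos {α : Type*} [MeasurableSpace α] (ν : Measure α) [IsFiniteMeasure ν]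
    (p : ℝ) (hp : 1 < p)
    (a b : α → ℝ) (ha : Measurable a) (hb : Measurable b) (ha1 : ∀ᵐ x ∂ν, |a x| ≤ 1)
    (hb1 : ∀ᵐ x ∂ν, |b x| ≤ 1)
    (ha0 : ∀ᵐ x ∂ν, a x ≠ 0) (hν : ν ≠ 0)
    (hIntegr : Integrable (fun x => |a x| ^ (p-2)) ν)
    (hne : ∀ c : ℝ, ¬ (∀ᵐ x ∂ν, b x = c * a x))
    (h : ℝ → ℝ) (h0 : ∀ t, 0 ≤ h t) (hh : ∀ t, h t ^ p = ∫ x, |a x + t * b x| ^ p ∂ν) :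
    0 < iteratedDeriv 2 h 0 := by
  have hbd : ∀ t ∈ ball (0:ℝ) 1, ∀ᵐ x ∂ν, |a x + t * b x| ≤ 2 := by
    intro t ht
    filter_upwards [ha1, hb1] with x h1 h2
    have ht' : |t| < 1 := by simpa using ht
    calc |a x + t * b x| ≤ |a x| + |t| * |b x| := by rw [← abs_mul]; exact abs_add_le _ _
      _ ≤ 1 + 1 * 1 := by gcongr
      _ = 2 := by norm_num
  set φ : ℝ → ℝ := fun t => ∫ x, |a x + t * b x| ^ p ∂ν with hφ
  set ψ : ℝ → ℝ := fun t => ∫ x, |a x + t * b x| ^ (p-2) * (a x + t * b x) * b x ∂ν with hψ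
  have hA : Integrable (fun x => |a x| ^ p) ν := by
    refine Integrable.of_bound (C := 1) (Measurable.aestronglyMeasurable (by fun_prop)) ?_
    filter_upwards [ha1] with x h1
    rw [Real.norm_of_nonneg (by positivity)]
    exact Real.rpow_le_one (abs_nonneg _) h1 (by linarith)
  have hB : Integrable (fun x => |a x| ^ (p-2) * a x * b x) ν := by
    refine hIntegr.mono (by fun_prop) ?_
    filter_upwards [ha1, hb1] with x h1 h2
    rw [norm_mul, norm_mul, mul_assoc]
    refine mul_le_of_le_one_right (norm_nonneg _) ?_
    exact mul_le_one₀ h1 (abs_nonneg _) h2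
  have hC : Integrable (fun x => |a x| ^ (p-2) * b x ^ 2) ν := by
    refine hIntegr.mono (by fun_prop) ?_
    filter_upwards [ha1, hb1] with x h1 h2
    rw [norm_mul, norm_pow]
    refine mul_le_of_le_one_right (norm_nonneg _) ?_
    exact pow_le_one₀ (abs_nonneg _) h2
  obtain ⟨hApos, hcs⟩ := strict_cs ν p hp a b ha0 hν hA hB hC hne
  -- first derivative
  have habs : ∀ s : ℝ, |(|s| ^ (p-2) * s)| = |s| ^ (p-1) := by
    intro s
    by_cases hs : s = 0
    · simp [hs, Real.zero_rpow (by linarith : p - 1 ≠ 0)]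
    · rw [abs_mul, abs_of_nonneg (a := |s| ^ (p-2)) (by positivity)]
      nth_rw 2 [← Real.rpow_one |s|]
      rw [← Real.rpow_add (by positivity)]; congr 1; ring
  have hd1 : ∀ t ∈ ball (0:ℝ) 1, HasDerivAt φ (p * ψ t) t := by
    intro t ht
    have hbt := hbd t ht
    have hall : ∀ᵐ x ∂ν, ∀ s ∈ ball (0:ℝ) 1, |a x + s * b x| ≤ 2 := by
      filter_upwards [ha1, hb1] with x h1 h2 t ht
      have ht' : |t| < 1 := by simpa using ht
      calc |a x + t * b x| ≤ |a x| + |t| * |b x| := by rw [← abs_mul]; exact abs_add_le _ _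
        _ ≤ 1 + 1 * 1 := by gcongr
        _ = 2 := by norm_num
    have := (hasDerivAt_integral_of_dominated_loc_of_deriv_le (μ := ν)
      (F := fun t x => |a x + t * b x| ^ p)
      (F' := fun t x => p * (|a x + t * b x| ^ (p-2) * (a x + t * b x) * b x))
      (x₀ := t) (s := ball (0:ℝ) 1) (bound := fun _ => p * 2 ^ (p-1)) (isOpen_ball.mem_nhds ht)
      (Filter.Eventually.of_forall fun t => Measurable.aestronglyMeasurable (by fun_prop)) ?_ (by fun_prop) ?_ (integrable_const _) ?_).2
    · rw [integral_const_mul] at this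
      exact this
    · refine Integrable.of_bound (C := 2 ^ p) (Measurable.aestronglyMeasurable (by fun_prop)) ?_
      filter_upwards [hbt] with x h1
      rw [Real.norm_of_nonneg (by positivity)]
      gcongr
    · filter_upwards [hall, hb1] with x hx hbx s hs
      rw [norm_mul, norm_mul, Real.norm_eq_abs, Real.norm_eq_abs, Real.norm_eq_abs, habs,
        abs_of_pos (by linarith : 0 < p)]
      have h3 : |a x + s * b x| ^ (p-1) ≤ 2 ^ (p-1) :=
        Real.rpow_le_rpow (abs_nonneg _) (hx s hs) (by linarith)
      calc p * (|a x + s * b x| ^ (p-1) * |b x|) ≤ p * (2 ^ (p-1) * 1) := by gcongr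
        _ = _ := by ring
    · filter_upwards with x s hs
      have h1 : HasDerivAt (fun s => a x + s * b x) (b x) s := by
        simpa using ((hasDerivAt_id s).mul_const (b x)).const_add (a x)
      have h2 := (hasDerivAt_abs_rpow (a x + s * b x) hp).comp s h1
      exact h2.congr_deriv (by ring)
  -- second derivative
  have hd2 : HasDerivAt ψ ((p-1) * ∫ x, |a x| ^ (p-2) * b x ^ 2 ∂ν) 0 := by
    obtain ⟨K, hK, hKb⟩ := g_bound p hp
    have hall : ∀ᵐ x ∂ν, ∀ s ∈ ball (0:ℝ) 1, |a x + s * b x| ≤ 2 := by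
      filter_upwards [ha1, hb1] with x h1 h2 t ht
      have ht' : |t| < 1 := by simpa using ht
      calc |a x + t * b x| ≤ |a x| + |t| * |b x| := by rw [← abs_mul]; exact abs_add_le _ _
        _ ≤ 1 + 1 * 1 := by gcongr
        _ = 2 := by norm_num
    have hm : AEStronglyMeasurable (fun x => (p-1) * (|a x| ^ (p-2) * b x ^ 2)) ν :=
      Measurable.aestronglyMeasurable (by fun_prop)
    have hmain := (hasFDerivAt_integral_of_dominated_loc_of_lip' (𝕜 := ℝ) (μ := ν)
      (F := fun t x => |a x + t * b x| ^ (p-2) * (a x + t * b x) * b x)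
      (F' := fun x => ContinuousLinearMap.smulRightL ℝ ℝ ℝ 1 ((p-1) * (|a x| ^ (p-2) * b x ^ 2)))
      (x₀ := 0) (s := ball (0:ℝ) 1) (bound := fun x => K * (|a x| ^ (p-2) + 1))
      (isOpen_ball.mem_nhds (by simp))
      (fun t _ => Measurable.aestronglyMeasurable (by fun_prop)) (by simpa using hB)
      ((ContinuousLinearMap.smulRightL ℝ ℝ ℝ 1).continuous.comp_aestronglyMeasurable hm) ?_
      ((hIntegr.add (integrable_const 1)).const_mul K) ?_).2
    · rw [ContinuousLinearMap.integral_comp_comm _ (hC.const_mul _), integral_const_mul] at hmain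
      have := hmain.hasDerivAt
      simpa using this
    · filter_upwards [ha1, hb1, hall, ha0] with x h1 h2 h3 h4 t ht
      have h5 := hKb (a x) (a x + t * b x) h1 (h3 t ht) h4
      rw [zero_mul, add_zero, ← sub_mul, norm_mul, Real.norm_eq_abs, Real.norm_eq_abs,
        Real.norm_eq_abs, sub_zero]
      rw [show a x + t * b x - a x = t * b x by ring, abs_mul] at h5
      have h6 : 0 ≤ K * (|a x| ^ (p-2) + 1) := by positivity
      calc _ ≤ (K * (|a x| ^ (p-2) + 1) * (|t| * |b x|)) * |b x| := by gcongr
        _ ≤ (K * (|a x| ^ (p-2) + 1) * (|t| * 1)) * 1 := by gcongr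
        _ = _ := by ring
    · filter_upwards [ha0] with x h4
      have h1 : HasDerivAt (fun s => a x + s * b x) (b x) 0 := by
        simpa using ((hasDerivAt_id (0:ℝ)).mul_const (b x)).const_add (a x)
      have h2 : HasDerivAt (fun s : ℝ => |s| ^ (p-2) * s) ((p-1) * |a x| ^ (p-2))
          (a x + 0 * b x) := by simpa using g_deriv p (a x) h4
      have h3 := (h2.comp (0:ℝ) h1).mul_const (b x)
      have h7 : HasDerivAt (fun t => |a x + t * b x| ^ (p-2) * (a x + t * b x) * b x)
          ((p-1) * (|a x| ^ (p-2) * b x ^ 2)) 0 := by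
        exact h3.congr_deriv (by ring)
      exact h7.hasFDerivAt
  have hφ0 : φ 0 = ∫ x, |a x| ^ p ∂ν := by simp [hφ]
  have hψ0 : ψ 0 = ∫ x, |a x| ^ (p-2) * a x * b x ∂ν := by simp [hψ]
  rw [← hφ0] at hApos hcs
  rw [← hψ0] at hcs
  set C := ∫ x, |a x| ^ (p-2) * b x ^ 2 ∂ν
  have hheq : h = fun t => φ t ^ (1/p) := by
    funext t
    simp only [hφ]
    rw [← hh t, ← Real.rpow_mul (h0 t), mul_one_div_cancel (by linarith), Real.rpow_one]
  have h0mem : (0:ℝ) ∈ ball (0:ℝ) 1 := by simp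
  have hev : deriv h =ᶠ[nhds 0] fun t => (p * ψ t) * (1/p) * φ t ^ (1/p - 1) := by
    have hc := (hd1 0 h0mem).continuousAt.eventually_ne hApos.ne'
    filter_upwards [hc, isOpen_ball.mem_nhds h0mem] with t h1 h2
    rw [hheq]
    exact ((hd1 t h2).rpow_const (Or.inl h1)).deriv
  rw [iteratedDeriv_succ, iteratedDeriv_one, hev.deriv_eq]
  have hfin := ((hd2.const_mul p).mul_const (1/p)).mul
    ((hd1 0 h0mem).rpow_const (p := 1/p - 1) (Or.inl hApos.ne'))
  have hfin' := hfin.deriv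
  rw [show (fun t => p * ψ t * (1 / p) * φ t ^ (1 / p - 1)) =
    ((fun y => p * ψ y * (1 / p)) * fun y => φ y ^ (1 / p - 1)) from rfl, hfin']
  have e1 : φ 0 ^ (1/p - 1) = φ 0 ^ (1/p - 1 - 1) * φ 0 := by
    rw [← Real.rpow_add_one hApos.ne']; congr 1; ring
  rw [e1]
  have hp0 : p ≠ 0 := by linarith
  have : p * ((p - 1) * C) * (1 / p) * (φ 0 ^ (1 / p - 1 - 1) * φ 0) +
      p * ψ 0 * (1 / p) * (p * ψ 0 * (1 / p - 1) * φ 0 ^ (1 / p - 1 - 1)) =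
      (p-1) * φ 0 ^ (1/p - 1 - 1) * (φ 0 * C - ψ 0 ^ 2) := by
    field_simp; ring
  rw [this]
  have := Real.rpow_pos_of_pos hApos (1/p-1-1)
  have h4 : 0 < p - 1 := by linarith
  have h5 : 0 < φ 0 * C - ψ 0 ^ 2 := by linarith
  positivity

lemma one_dim (r : ℝ) (hr : r < 1) :
    ∫⁻ y in Icc (-1:ℝ) 1, ‖y‖ₑ ^ (-r) < ⊤ := by
  have h1 : ∫⁻ y in Ioc (0:ℝ) 1, ‖y‖ₑ ^ (-r) < ⊤ := by
    have h := (intervalIntegral.intervalIntegrable_rpow' (a := 0) (b := 1) (r := -r) (by linarith)).1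
    have h2 := h.2
    rw [HasFiniteIntegral] at h2
    refine lt_of_le_of_lt (le_of_eq ?_) h2
    refine setLIntegral_congr_fun measurableSet_Ioc fun x hx => ?_
    rw [Real.enorm_eq_ofReal hx.1.le, Real.enorm_eq_ofReal (Real.rpow_nonneg hx.1.le _),
      ENNReal.ofReal_rpow_of_pos hx.1]
  have h2 : ∫⁻ y in Ico (-1:ℝ) 0, ‖y‖ₑ ^ (-r) < ⊤ := by
    have := (Measure.measurePreserving_neg (volume : Measure ℝ)).setLIntegral_comp_preimage
      (s := Ioc (0:ℝ) 1) (f := fun y => ‖y‖ₑ ^ (-r)) measurableSet_Ioc (by fun_prop)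
    simp only [enorm_neg] at this
    rw [show (Neg.neg ⁻¹' Ioc (0:ℝ) 1) = Ico (-1) 0 by simp] at this
    rwa [this]
  have h3 : ∫⁻ y in ({0} : Set ℝ), ‖y‖ₑ ^ (-r) < ⊤ := by simp [Measure.restrict_singleton]
  have : Icc (-1:ℝ) 1 ⊆ (Ico (-1:ℝ) 0 ∪ {0}) ∪ Ioc (0:ℝ) 1 := by
    intro x hx
    rcases lt_trichotomy x 0 with h | h | h
    · left; left; exact ⟨hx.1, h⟩
    · left; right; exact h
    · right; exact ⟨h, hx.2⟩
  refine (lintegral_mono_set this).trans_lt ?_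
  refine (lintegral_union_le _ _ _).trans_lt (ENNReal.add_lt_top.2 ⟨?_, h1⟩)
  exact (lintegral_union_le _ _ _).trans_lt (ENNReal.add_lt_top.2 ⟨h2, h3⟩)

def cube (m : ℕ) : Set (Fin m → ℝ) := univ.pi fun _ => Icc (-1:ℝ) 1

lemma cube_int (m : ℕ) (r : ℝ) (hr : r < 1) (j : Fin m) :
    ∫⁻ y in cube m, ‖y j‖ₑ ^ (-r) < ⊤ := by
  rw [cube, volume_pi, Measure.restrict_pi_pi]
  have h : ∫⁻ z, ‖z‖ₑ ^ (-r) ∂((Measure.pi fun _ : Fin m => volume.restrict (Icc (-1:ℝ) 1)).map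
      (Function.eval j)) < ⊤ := by
    rw [Measure.pi_map_eval, lintegral_smul_measure]
    refine ENNReal.mul_lt_top ?_ (one_dim r hr)
    exact ENNReal.prod_lt_top (by simp)
  rwa [lintegral_map (by fun_prop) (by fun_prop)] at h

/-- radial projection of a cube face -/
def face (m : ℕ) (i : Fin (m+1)) (σ : ℝ) (y : Fin m → ℝ) : EuclideanSpace ℝ (Fin (m+1)) :=
  WithLp.toLp 2 (i.insertNth (α := fun _ => ℝ) σ y)

def chart (m : ℕ) (i : Fin (m+1)) (σ : ℝ) (y : Fin m → ℝ) : EuclideanSpace ℝ (Fin (m+1)) :=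
  ‖face m i σ y‖⁻¹ • face m i σ y

lemma face_norm_ge (m : ℕ) (i : Fin (m+1)) (σ : ℝ) (hσ : |σ| = 1) (y : Fin m → ℝ) :
    1 ≤ ‖face m i σ y‖ := by
  have := PiLp.norm_apply_le (face m i σ y) i
  simpa [face, hσ] using this

lemma face_dist (m : ℕ) (i : Fin (m+1)) (σ : ℝ) (y z : Fin m → ℝ) :
    ‖face m i σ y - face m i σ z‖ ≤ (m+1 : ℝ) * ‖y - z‖ := by
  have h : ∀ k, ‖(face m i σ y - face m i σ z) k‖ ≤ ‖y - z‖ := by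
    intro k
    refine Fin.succAboveCases i ?_ (fun j => ?_) k
    · simp [face]
    · simpa [face] using norm_le_pi_norm (y - z) j
  rw [EuclideanSpace.norm_eq]
  refine Real.sqrt_le_iff.2 ⟨by positivity, ?_⟩
  calc ∑ k, ‖(face m i σ y - face m i σ z) k‖ ^ 2 ≤ ∑ k : Fin (m+1), ‖y - z‖ ^ 2 := by
        gcongr with k; exact h k
    _ = (m+1 : ℝ) * ‖y-z‖ ^ 2 := by simp
    _ ≤ _ := by
      rw [mul_pow]
      gcongr
      have : (0:ℝ) ≤ m := by positivity
      nlinarith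

lemma face_norm_le (m : ℕ) (i : Fin (m+1)) (σ : ℝ) (hσ : |σ| = 1) (y : Fin m → ℝ)
    (hy : y ∈ cube m) : ‖face m i σ y‖ ≤ (m+1 : ℝ) := by
  have h : ∀ k, ‖(face m i σ y) k‖ ≤ 1 := by
    intro k
    refine Fin.succAboveCases i ?_ (fun j => ?_) k
    · simp [face, hσ]
    · simpa [face, abs_le] using hy j (mem_univ _)
  rw [EuclideanSpace.norm_eq]
  refine Real.sqrt_le_iff.2 ⟨by positivity, ?_⟩
  calc ∑ k, ‖(face m i σ y) k‖ ^ 2 ≤ ∑ k : Fin (m+1), (1:ℝ) := by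
        gcongr with k; exact pow_le_one₀ (norm_nonneg _) (h k)
    _ = (m+1 : ℝ) := by simp
    _ ≤ _ := by
      have : (0:ℝ) ≤ m := by positivity
      nlinarith

lemma normalize_lip {E : Type*} [NormedAddCommGroup E] [NormedSpace ℝ E] (x y : E)
    (hx : 1 ≤ ‖x‖) (hy : 1 ≤ ‖y‖) : ‖‖x‖⁻¹ • x - ‖y‖⁻¹ • y‖ ≤ 2 * ‖x - y‖ := by
  have e : ‖x‖⁻¹ • x - ‖y‖⁻¹ • y = ‖x‖⁻¹ • (x - y) + (‖x‖⁻¹ - ‖y‖⁻¹) • y := by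
    rw [smul_sub, sub_smul]; abel
  have hx0 : 0 < ‖x‖ := by linarith
  have hy0 : 0 < ‖y‖ := by linarith
  have hxi : ‖x‖⁻¹ ≤ 1 := inv_le_one_of_one_le₀ hx
  rw [e]
  refine (norm_add_le _ _).trans ?_
  rw [norm_smul, norm_smul]
  have h1 : ‖(‖x‖⁻¹ - ‖y‖⁻¹)‖ * ‖y‖ = ‖x‖⁻¹ * |‖y‖ - ‖x‖| := by
    have : ‖x‖⁻¹ - ‖y‖⁻¹ = ‖x‖⁻¹ * ‖y‖⁻¹ * (‖y‖ - ‖x‖) := by field_simp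
    rw [this, norm_mul, Real.norm_of_nonneg (by positivity), Real.norm_eq_abs]
    field_simp
  rw [h1, norm_inv, norm_norm]
  have h2 : |‖y‖ - ‖x‖| ≤ ‖x - y‖ := by rw [norm_sub_rev]; exact abs_norm_sub_norm_le y x
  calc _ ≤ 1 * ‖x - y‖ + 1 * ‖x-y‖ := by gcongr
    _ = _ := by ring

lemma chart_lip (m : ℕ) (i : Fin (m+1)) (σ : ℝ) (hσ : |σ| = 1) :
    LipschitzWith (2 * (m+1)) (chart m i σ) := by
  refine LipschitzWith.of_dist_le_mul fun y z => ?_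
  rw [dist_eq_norm, dist_eq_norm]
  refine (normalize_lip _ _ (face_norm_ge m i σ hσ y) (face_norm_ge m i σ hσ z)).trans ?_
  have := face_dist m i σ y z
  push_cast
  linarith

lemma chart_cover (m : ℕ) (ξ : EuclideanSpace ℝ (Fin (m+1))) (hξ : ‖ξ‖ = 1) :
    ∃ i, ∃ σ : Bool, ∃ y ∈ cube m, chart m i (if σ then 1 else -1) y = ξ := by
  obtain ⟨i, hi⟩ := Finite.exists_max (fun i => |ξ i|)
  have h0 : ξ i ≠ 0 := by
    intro h
    have : ξ = 0 := by
      ext k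
      have := hi k
      rw [h, abs_zero] at this
      simpa using this
    simp [this] at hξ
  have hpos : 0 < |ξ i| := abs_pos.2 h0
  refine ⟨i, decide (0 < ξ i), fun j => ξ (i.succAbove j) / |ξ i|, fun j _ => ?_, ?_⟩
  · rw [mem_Icc, ← abs_le, abs_div, abs_abs, div_le_one hpos]
    exact hi _
  · have : face m i (if decide (0 < ξ i) then 1 else -1) (fun j => ξ (i.succAbove j) / |ξ i|) =
        |ξ i|⁻¹ • ξ := by
      ext k
      refine Fin.succAboveCases i ?_ (fun j => ?_) k
      · simp only [face, Fin.insertNth_apply_same, PiLp.smul_apply, smul_eq_mul, decide_eq_true_eq]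
        split_ifs with h
        · rw [abs_of_pos h]; field_simp
        · rw [abs_of_nonpos (not_lt.1 h)]; field_simp
      · simp only [face, Fin.insertNth_apply_succAbove, PiLp.smul_apply, smul_eq_mul]
        ring
    rw [chart, this, norm_smul, hξ, smul_smul, norm_inv, Real.norm_eq_abs, abs_abs]
    field_simp
    simp

lemma sphere_le (m : ℕ) : ∃ C : ℝ≥0∞, C ≠ ⊤ ∧ ∀ g : EuclideanSpace ℝ (Fin (m+1)) → ℝ≥0∞,
    Measurable g → ∫⁻ ξ in sphere (0 : EuclideanSpace ℝ (Fin (m+1))) 1, g ξ ∂(μH[(m:ℝ)]) ≤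
      ∑ k : Fin (m+1) × Bool, C * ∫⁻ y in cube m, g (chart m k.1 (if k.2 then 1 else -1) y) := by
  set L : ℝ≥0∞ := ((2 * (m+1) : NNReal) : ℝ≥0∞) ^ (m:ℝ)
  have hσ : ∀ s : Bool, |(if s then 1 else -1 : ℝ)| = 1 := by intro s; cases s <;> simp
  have hc : ∀ k : Fin (m+1) × Bool, Measurable (chart m k.1 (if k.2 then 1 else -1)) :=
    fun k => (chart_lip m k.1 _ (hσ k.2)).continuous.measurable
  refine ⟨L, ENNReal.rpow_ne_top_of_nonneg (by positivity) ENNReal.coe_ne_top, fun g hg => ?_⟩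
  have hle : (μH[(m:ℝ)] : Measure (EuclideanSpace ℝ (Fin (m+1)))).restrict (sphere 0 1) ≤
      Measure.sum fun k : Fin (m+1) × Bool =>
        L • (volume.restrict (cube m)).map (chart m k.1 (if k.2 then 1 else -1)) := by
    refine Measure.le_iff.2 fun A hA => ?_
    rw [Measure.restrict_apply hA, Measure.sum_apply _ hA]
    have hsub : A ∩ sphere 0 1 ⊆ ⋃ k : Fin (m+1) × Bool, chart m k.1 (if k.2 then 1 else -1) ''
        (chart m k.1 (if k.2 then 1 else -1) ⁻¹' A ∩ cube m) := by
      rintro ξ ⟨h1, h2⟩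
      obtain ⟨i, s, y, hy, rfl⟩ := chart_cover m ξ (by simpa using h2)
      exact mem_iUnion.2 ⟨(i, s), y, ⟨h1, hy⟩, rfl⟩
    refine (measure_mono hsub).trans ((measure_iUnion_le _).trans (ENNReal.tsum_le_tsum fun k => ?_))
    refine ((chart_lip m k.1 _ (hσ k.2)).hausdorffMeasure_image_le (by positivity) _).trans ?_
    rw [Measure.smul_apply, Measure.map_apply (hc k) hA, Measure.restrict_apply (hc k hA)]
    have := hausdorffMeasure_pi_real (ι := Fin m)
    rw [Fintype.card_fin] at this
    rw [this]
    rfl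
  refine (lintegral_mono' hle le_rfl).trans (le_of_eq ?_)
  rw [lintegral_sum_measure, tsum_fintype]
  refine Finset.sum_congr rfl fun k _ => ?_
  rw [lintegral_smul_measure, lintegral_map hg (hc k)]
  rfl

lemma sphere_int0 (m : ℕ) (r : ℝ) (hr0 : 0 < r) (hr : r < 1) :
    ∫⁻ ξ in sphere (0 : EuclideanSpace ℝ (Fin (m+1))) 1, ‖ξ 0‖ₑ ^ (-r) ∂(μH[(m:ℝ)]) < ⊤ := by
  obtain ⟨C, hC, h⟩ := sphere_le m
  refine (h (fun ξ => ‖ξ 0‖ₑ ^ (-r)) (by fun_prop)).trans_lt ?_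
  refine ENNReal.sum_lt_top.2 fun k _ => ENNReal.mul_lt_top hC.lt_top ?_
  obtain ⟨i, s⟩ := k
  set σ : ℝ := if s then 1 else -1
  have hσ : |σ| = 1 := by simp only [σ]; cases s <;> simp
  have hcm : MeasurableSet (cube m) := MeasurableSet.univ_pi fun _ => measurableSet_Icc
  have hb : ∀ y ∈ cube m, ‖chart m i σ y 0‖ₑ ^ (-r) ≤
      (ENNReal.ofReal (m+1)⁻¹) ^ (-r) * ‖face m i σ y 0‖ₑ ^ (-r) := by
    intro y hy
    have h1 := face_norm_ge m i σ hσ y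
    have h2 := face_norm_le m i σ hσ y hy
    rw [← ENNReal.mul_rpow_of_ne_top (by simp) (by simp), ENNReal.rpow_neg, ENNReal.rpow_neg]
    refine ENNReal.inv_le_inv.2 (ENNReal.rpow_le_rpow ?_ hr0.le)
    rw [chart, PiLp.smul_apply, smul_eq_mul, enorm_mul]
    gcongr
    rw [Real.enorm_eq_ofReal (by positivity)]
    gcongr
  refine (setLIntegral_mono' hcm hb).trans_lt ?_
  rw [lintegral_const_mul' _ _ (ENNReal.rpow_ne_top_of_ne_zero (by simp; positivity) (by simp))]
  refine ENNReal.mul_lt_top (ENNReal.rpow_ne_top_of_ne_zero (by simp; positivity) (by simp)).lt_top ?_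
  rcases eq_or_ne i 0 with rfl | hi
  · have : ∀ y, ‖face m 0 σ y 0‖ₑ ^ (-r) = 1 := by
      intro y
      have : ‖face m 0 σ y 0‖ₑ = 1 := by
        rw [← ofReal_norm]; simp [face, hσ]
      rw [this, ENNReal.one_rpow]
    simp only [this, lintegral_one, Measure.restrict_apply MeasurableSet.univ, univ_inter]
    rw [cube, volume_pi_pi]
    exact ENNReal.prod_lt_top (by simp)
  · obtain ⟨j, hj⟩ := Fin.exists_succAbove_eq (Ne.symm hi)
    have : ∀ y, face m i σ y 0 = y j := by
      intro y; rw [← hj]; simp [face]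
    simp only [this]
    exact cube_int m r hr j

lemma sphere_int (m : ℕ) (r : ℝ) (hr0 : 0 < r) (hr : r < 1) (v : EuclideanSpace ℝ (Fin (m+1)))
    (hv : ‖v‖ = 1) :
    ∫⁻ ξ in sphere (0 : EuclideanSpace ℝ (Fin (m+1))) 1, ‖⟪v, ξ⟫‖ₑ ^ (-r) ∂(μH[(m:ℝ)]) < ⊤ := by
  obtain ⟨b, hb⟩ := Orthonormal.exists_orthonormalBasis_extension_of_card_eq (𝕜 := ℝ)
    (E := EuclideanSpace ℝ (Fin (m+1))) (ι := Fin (m+1)) (by simp) (v := fun _ => v) (s := {0})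
    (by
      constructor
      · intro i; simpa using hv
      · intro i j hij; exact absurd (Subsingleton.elim i j) hij)
  have hb0 : b 0 = v := hb 0 rfl
  have hmp := (b.repr.toIsometryEquiv).measurePreserving_hausdorffMeasure (m:ℝ)
  have := hmp.setLIntegral_comp_preimage (s := sphere 0 1) (f := fun ξ => ‖ξ 0‖ₑ ^ (-r))
    isClosed_sphere.measurableSet (by fun_prop)
  have hpre : (b.repr.toIsometryEquiv ⁻¹' sphere 0 1) = sphere 0 1 := by
    ext x; simp
  rw [hpre] at this
  have he : ∀ ξ, (b.repr.toIsometryEquiv ξ) 0 = ⟪v, ξ⟫ := by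
    intro ξ
    rw [← hb0]; exact b.repr_apply_apply ξ 0
  simp only [he] at this
  rw [this]
  exact sphere_int0 m r hr0 hr

theorem second_directional_derivative_pos (n : ℕ) (hn : 2 ≤ n) (p : ℝ) (hp : 1 < p)
    (hpe : ∀ k : ℕ, p ≠ 2 * k)
    (f : EuclideanSpace ℝ (Fin n) → ℝ) (hf_meas : Measurable f)
    (hf_bdd : ∃ M : ℝ, ∀ ξ, |f ξ| ≤ M)
    (hf_nonneg : ∀ ξ, 0 ≤ f ξ)
    (hf_pos : 0 < ∫ ξ in sphere (0 : EuclideanSpace ℝ (Fin n)) 1, f ξ ∂(μH[(n : ℝ) - 1]))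
    (H : EuclideanSpace ℝ (Fin n) → ℝ) (hH_nonneg : ∀ x, 0 ≤ H x)
    (hH : ∀ x, H x ^ p = ∫ ξ in sphere (0 : EuclideanSpace ℝ (Fin n)) 1,
      |⟪x, ξ⟫| ^ p * f ξ ∂(μH[(n : ℝ) - 1]))
    (u v : EuclideanSpace ℝ (Fin n)) (hu : ‖u‖ = 1) (hv : ‖v‖ = 1)
    (hvu : v ≠ u) (hvu' : v ≠ -u) :
    0 < iteratedDeriv 2 (fun t : ℝ => H (v + t • u)) 0 := by
  obtain ⟨m, rfl⟩ : ∃ m, n = m + 1 := ⟨n - 1, by omega⟩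
  have e : (((m+1 : ℕ) : ℝ) - 1) = m := by push_cast; ring
  rw [e] at hf_pos
  simp only [e] at hH
  obtain ⟨M, hM⟩ := hf_bdd
  have hS : MeasurableSet (sphere (0 : EuclideanSpace ℝ (Fin (m+1))) 1) :=
    isClosed_sphere.measurableSet
  set μ : Measure (EuclideanSpace ℝ (Fin (m+1))) := (μH[(m:ℝ)]).restrict (sphere 0 1) with hμ
  have hsph : ∀ᵐ ξ ∂μ, ‖ξ‖ = 1 := by
    filter_upwards [ae_restrict_mem hS] with ξ hξ
    simpa using hξ
  have hinner : ∀ w : EuclideanSpace ℝ (Fin (m+1)), ‖w‖ = 1 → ∀ᵐ ξ ∂μ, |⟪w, ξ⟫| ≤ 1 := by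
    intro w hw
    filter_upwards [hsph] with ξ hξ
    simpa [hw, hξ] using abs_real_inner_le_norm w ξ
  have hμfin : IsFiniteMeasure μ := by
    refine ⟨?_⟩
    rw [← lintegral_one]
    refine lt_of_le_of_lt (lintegral_mono_ae ?_) (sphere_int m (1/2) (by norm_num) (by norm_num) v hv)
    filter_upwards [hinner v hv] with ξ hξ
    rw [ENNReal.rpow_neg, ENNReal.one_le_inv]
    refine ENNReal.rpow_le_one ?_ (by norm_num)
    rw [← ofReal_norm]
    exact ENNReal.ofReal_le_one.2 hξ
  have hnz : ∀ w : EuclideanSpace ℝ (Fin (m+1)), w ≠ 0 → ∀ᵐ ξ ∂μ, ⟪w, ξ⟫ ≠ 0 := by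
    intro w hw
    have hw' : ‖‖w‖⁻¹ • w‖ = 1 := norm_smul_inv_norm hw
    have h1 := sphere_int m (1/2) (by norm_num) (by norm_num) _ hw'
    filter_upwards [ae_lt_top (by fun_prop) h1.ne] with ξ hξ h0
    rw [real_inner_smul_left, h0, mul_zero, enorm_zero, ENNReal.zero_rpow_of_neg (by norm_num)] at hξ
    exact lt_irrefl _ hξ
  have hfi : Integrable f μ := Integrable.of_bound (C := M) hf_meas.aestronglyMeasurable
    (Filter.Eventually.of_forall hM)
  set ν : Measure (EuclideanSpace ℝ (Fin (m+1))) := μ.withDensity (fun ξ => ENNReal.ofReal (f ξ)) with hν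
  have hνfin : IsFiniteMeasure ν := isFiniteMeasure_withDensity_ofReal hfi.2
  have hac : ν ≪ μ := withDensity_absolutelyContinuous _ _
  have hνint : ∀ g : EuclideanSpace ℝ (Fin (m+1)) → ℝ, ∫ ξ, g ξ ∂ν = ∫ ξ, g ξ * f ξ ∂μ := by
    intro g
    rw [hν, integral_withDensity_eq_integral_toReal_smul (by fun_prop) (by simp)]
    refine integral_congr_ae (Filter.Eventually.of_forall fun ξ => ?_)
    simp only [ENNReal.toReal_ofReal (hf_nonneg ξ), smul_eq_mul]
    ring
  have hν0 : ν ≠ 0 := by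
    intro h
    have := hνint (fun _ => 1)
    rw [h] at this
    simp only [integral_zero_measure, one_mul] at this
    linarith
  have hνle : ν ≤ ENNReal.ofReal M • μ := by
    rw [hν, ← withDensity_const]
    refine withDensity_mono (Filter.Eventually.of_forall fun ξ => ?_)
    exact ENNReal.ofReal_le_ofReal ((le_abs_self _).trans (hM ξ))
  have hv0 : v ≠ 0 := by rintro rfl; simp at hv
  have hIntegr : Integrable (fun ξ => |⟪v, ξ⟫| ^ (p-2)) ν := by
    rcases le_or_gt 2 p with h2 | h2
    · refine Integrable.of_bound (C := 1) (Measurable.aestronglyMeasurable (by fun_prop)) ?_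
      filter_upwards [hac.ae_le (hinner v hv)] with ξ h1
      rw [Real.norm_of_nonneg (by positivity)]
      exact Real.rpow_le_one (abs_nonneg _) h1 (by linarith)
    · refine Integrable.mono_measure (Integrable.smul_measure ?_ ENNReal.ofReal_ne_top) hνle
      refine ⟨Measurable.aestronglyMeasurable (by fun_prop), ?_⟩
      have h1 := sphere_int m (2-p) (by linarith) (by linarith) v hv
      rw [HasFiniteIntegral]
      refine lt_of_le_of_lt (lintegral_mono_ae ?_) h1
      filter_upwards [hnz v hv0] with ξ hξ
      have hpos : 0 < |⟪v, ξ⟫| := abs_pos.2 hξ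
      rw [Real.enorm_eq_ofReal (by positivity), ← ofReal_norm, Real.norm_eq_abs,
        ENNReal.ofReal_rpow_of_pos hpos, neg_sub]
  refine abstract_pos ν p hp (fun ξ => ⟪v, ξ⟫) (fun ξ => ⟪u, ξ⟫) (by fun_prop) (by fun_prop)
    (hac.ae_le (hinner v hv)) (hac.ae_le (hinner u hu)) (hac.ae_le (hnz v hv0)) hν0 hIntegr ?_ _
    (fun t => hH_nonneg _) ?_
  · intro c hc
    have hw : u - c • v ≠ 0 := by
      intro h
      have hu' : u = c • v := sub_eq_zero.1 h
      have hcabs : |c| = 1 := by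
        rw [hu', norm_smul, hv, mul_one] at hu
        exact hu
      rcases (abs_eq zero_le_one).1 hcabs with h1 | h1
      · exact hvu (by rw [hu', h1, one_smul])
      · exact hvu' (by rw [hu', h1]; simp)
    apply hν0
    rw [← ae_eq_bot, ← Filter.eventually_false_iff_eq_bot]
    filter_upwards [hc, hac.ae_le (hnz _ hw)] with ξ h1 h2
    apply h2
    rw [inner_sub_left, real_inner_smul_left, h1, sub_self]
  · intro t
    rw [hH, hνint]
    simp only [inner_add_left, real_inner_smul_left]
end
end

section
/- Let n ≥ 2, p > 1 not an even integer, and let f ∈ L^∞(S^{n-1}) be a positive function (f ≥ c > 0 a.e.). Then H(x) = (∫_{S^{n-1}} |⟨x,ξ⟩|^p f(ξ) dξ)^{1/p} is the support function of a centrally symmetric convex body of class C^2_+, i.e., whose boundary is C^2 with everywhere positive Gauss–Kronecker curvature. -/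
open MeasureTheory Real Set Metric
open scoped RealInnerProductSpace ENNReal MeasureTheory

noncomputable section

namespace LpCos

lemma hausdorff_le_of_anti {X Y : Type*} [MetricSpace X] [MeasurableSpace X] [BorelSpace X]
    [MetricSpace Y] [MeasurableSpace Y] [BorelSpace Y] (P : Set X) (K : NNReal) (g : X → Y)
    (d : ℝ) (hd : 0 ≤ d)
    (h : ∀ x ∈ P, ∀ y ∈ P, edist x y ≤ K * edist (g x) (g y)) :
    μH[d] P ≤ (K : ℝ≥0∞) ^ d * μH[d] (g '' P) := by
  rcases P.eq_empty_or_nonempty with rfl | ⟨x0, hx0⟩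
  · simp
  haveI : Nonempty X := ⟨x0⟩
  have hinj : InjOn g P := by
    intro x hx y hy hxy
    have := h x hx y hy
    rw [hxy] at this
    simpa using this
  have hinv : ∀ x ∈ P, Function.invFunOn g P (g x) = x := fun x hx =>
    hinj.leftInvOn_invFunOn hx
  have hL : LipschitzOnWith K (Function.invFunOn g P) (g '' P) := by
    rintro _ ⟨x, hx, rfl⟩ _ ⟨y, hy, rfl⟩
    rw [hinv x hx, hinv y hy]
    exact h x hx y hy
  have := hL.hausdorffMeasure_image_le hd
  refine le_trans (measure_mono ?_) this
  intro x hx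
  exact ⟨g x, ⟨x, hx, rfl⟩, hinv x hx⟩

lemma sphere_sq_sum {m : ℕ} {x : EuclideanSpace ℝ (Fin m)}
    (hx : x ∈ sphere (0 : EuclideanSpace ℝ (Fin m)) 1) : ∑ i, x i ^ 2 = 1 := by
  have h1 : ‖x‖ = 1 := by simpa using hx
  have := EuclideanSpace.norm_sq_eq x
  rw [h1] at this
  simpa using this.symm

lemma sphere_coord_le {m : ℕ} {x : EuclideanSpace ℝ (Fin m)}
    (hx : x ∈ sphere (0 : EuclideanSpace ℝ (Fin m)) 1) (i : Fin m) : |x i| ≤ 1 := by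
  have h1 : ‖x‖ = 1 := by simpa using hx
  have := PiLp.norm_apply_le x i
  rw [h1] at this
  simpa using this

lemma piece_anti (m : ℕ) (i : Fin (m + 2)) (c : ℝ) (hc : 0 < c) (σ : ℝ) (hσ : σ = 1 ∨ σ = -1) :
    ∃ K : NNReal, ∀ x ∈ {x : EuclideanSpace ℝ (Fin (m+2)) |
        x ∈ sphere (0 : EuclideanSpace ℝ (Fin (m+2))) 1 ∧ c ≤ σ * x i},
      ∀ y ∈ {x : EuclideanSpace ℝ (Fin (m+2)) |
        x ∈ sphere (0 : EuclideanSpace ℝ (Fin (m+2))) 1 ∧ c ≤ σ * x i},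
      edist x y ≤ K * edist (fun j => x (i.succAbove j)) (fun j => y (i.succAbove j)) := by
  set L : ℝ := 1 + (m + 1) / c with hL
  have hL0 : 0 < L := by positivity
  refine ⟨((Fintype.card (Fin (m+2)) : NNReal) ^ (1 / (2:ℝ≥0∞)).toReal) * L.toNNReal, ?_⟩
  rintro x ⟨hx, hxi⟩ y ⟨hy, hyi⟩
  have h1 := PiLp.antilipschitzWith_ofLp 2 (fun _ : Fin (m+2) => ℝ) x y
  refine h1.trans ?_
  push_cast
  rw [mul_assoc]
  refine mul_le_mul' (by norm_num) ?_
  rw [edist_dist, edist_dist, ← ENNReal.ofReal, ← ENNReal.ofReal_mul hL0.le]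
  apply ENNReal.ofReal_le_ofReal
  set D := dist (fun j => x (i.succAbove j)) (fun j => y (i.succAbove j)) with hD
  have hD0 : 0 ≤ D := dist_nonneg
  have hj : ∀ j, |x (i.succAbove j) - y (i.succAbove j)| ≤ D := by
    intro j
    have := dist_le_pi_dist (fun j => x (i.succAbove j)) (fun j => y (i.succAbove j)) j
    simpa [Real.dist_eq] using this
  have hi : |x i - y i| ≤ (m + 1) / c * D := by
    have e1 := sphere_sq_sum hx
    have e2 := sphere_sq_sum hy
    rw [Fin.sum_univ_succAbove _ i] at e1 e2
    have e3 : x i ^ 2 - y i ^ 2 =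
        ∑ j, (y (i.succAbove j) ^ 2 - x (i.succAbove j) ^ 2) := by
      rw [Finset.sum_sub_distrib]; linarith
    have e4 : |x i ^ 2 - y i ^ 2| ≤ (m + 1) * (2 * D) := by
      rw [e3]
      refine (Finset.abs_sum_le_sum_abs _ _).trans ?_
      refine (Finset.sum_le_card_nsmul _ _ (2 * D) ?_).trans ?_
      · intro j _
        have a1 := sphere_coord_le hx (i.succAbove j)
        have a2 := sphere_coord_le hy (i.succAbove j)
        have a3 := hj j
        have : y (i.succAbove j) ^ 2 - x (i.succAbove j) ^ 2
          = - (x (i.succAbove j) + y (i.succAbove j)) *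
            (x (i.succAbove j) - y (i.succAbove j)) := by ring
        rw [this, abs_mul, abs_neg]
        exact mul_le_mul ((abs_add_le _ _).trans (by linarith)) a3 (abs_nonneg _) (by norm_num)
      · simp
    have e5 : x i ^ 2 - y i ^ 2 = (σ * x i + σ * y i) * (σ * (x i - y i)) := by
      rcases hσ with rfl | rfl <;> ring
    have e6 : |σ * (x i - y i)| = |x i - y i| := by
      rw [abs_mul]; rcases hσ with rfl | rfl <;> simp
    rw [e5, abs_mul, e6, abs_of_nonneg (by linarith)] at e4
    have e7 : 2 * c * |x i - y i| ≤ (m + 1) * (2 * D) :=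
      le_trans (mul_le_mul_of_nonneg_right (by linarith) (abs_nonneg _)) e4
    rw [div_mul_eq_mul_div, le_div_iff₀ hc]
    linarith
  rw [dist_pi_le_iff (by positivity)]
  intro k
  rw [Real.dist_eq]
  rcases Fin.eq_self_or_eq_succAbove i k with rfl | ⟨j, rfl⟩
  · refine hi.trans ?_
    rw [hL]; nlinarith
  · refine (hj j).trans ?_
    rw [hL]
    have : 0 ≤ (m + 1) / c * D := by positivity
    nlinarith

lemma piece_meas (m : ℕ) (i j : Fin (m + 2)) (hij : j ≠ i) (c : ℝ) (hc : 0 < c)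
    (σ : ℝ) (hσ : σ = 1 ∨ σ = -1) :
    ∃ C : ℝ≥0∞, C ≠ ⊤ ∧ ∀ A : Set ℝ,
      μH[((m + 2 : ℕ) : ℝ) - 1] {x : EuclideanSpace ℝ (Fin (m+2)) |
        x ∈ sphere (0 : EuclideanSpace ℝ (Fin (m+2))) 1 ∧ c ≤ σ * x i ∧ x j ∈ A}
        ≤ C * volume A := by
  obtain ⟨K, hK⟩ := piece_anti m i c hc σ hσ
  have hd : ((m + 2 : ℕ) : ℝ) - 1 = (Fintype.card (Fin (m+1)) : ℝ) := by
    push_cast [Fintype.card_fin]; ring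
  refine ⟨(K : ℝ≥0∞) ^ (((m + 2 : ℕ) : ℝ) - 1) * 2 ^ m, ?_, ?_⟩
  · refine ENNReal.mul_ne_top (ENNReal.rpow_ne_top_of_nonneg ?_ (by simp)) (by simp)
    rw [hd]; positivity
  intro A
  have h := hausdorff_le_of_anti {x : EuclideanSpace ℝ (Fin (m+2)) |
        x ∈ sphere (0 : EuclideanSpace ℝ (Fin (m+2))) 1 ∧ c ≤ σ * x i ∧ x j ∈ A} K
        (fun x j => x (i.succAbove j)) (((m + 2 : ℕ) : ℝ) - 1) (by rw [hd]; positivity)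
        (fun x hx y hy => hK x ⟨hx.1, hx.2.1⟩ y ⟨hy.1, hy.2.1⟩)
  refine h.trans ?_
  rw [mul_assoc]
  refine mul_le_mul' le_rfl ?_
  obtain ⟨j0, rfl⟩ := Fin.exists_succAbove_eq hij
  rw [hd, hausdorffMeasure_pi_real]
  have hsub : (fun (x : EuclideanSpace ℝ (Fin (m+2))) k => x (i.succAbove k)) ''
      {x : EuclideanSpace ℝ (Fin (m+2)) |
        x ∈ sphere (0 : EuclideanSpace ℝ (Fin (m+2))) 1 ∧ c ≤ σ * x i ∧ x (i.succAbove j0) ∈ A}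
      ⊆ Set.pi univ (fun k => if k = j0 then A else Icc (-1) 1) := by
    rintro _ ⟨x, ⟨hx, -, hA⟩, rfl⟩ k -
    by_cases hk : k = j0
    · subst hk; simpa using hA
    · simp only [hk, if_false]
      exact abs_le.1 (sphere_coord_le hx _)
  refine (measure_mono hsub).trans ?_
  rw [volume_pi_pi, Fin.prod_univ_succAbove _ j0]
  simp only [if_true, Fin.succAbove_ne, if_false, Real.volume_Icc]
  simp only [Finset.prod_const, Finset.card_univ, Fintype.card_fin]
  rw [mul_comm]
  norm_num

lemma exists_big (m : ℕ) (x : EuclideanSpace ℝ (Fin (m+2)))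
    (s : Finset (Fin (m+2))) (hs : 1 / 2 ≤ ∑ i ∈ s, x i ^ 2) :
    ∃ i ∈ s, ∃ σ ∈ ({1, -1} : Finset ℝ), 1 / (2 * (m + 2) : ℝ) ≤ σ * x i := by
  by_contra! hcon
  have h1 : ∀ i ∈ s, x i ^ 2 < 1 / (2 * (m + 2)) := by
    intro i hi
    have a1 := hcon i hi 1 (by simp)
    have a2 := hcon i hi (-1) (by simp)
    have a3 : |x i| < 1 / (2 * (m + 2)) := by rw [abs_lt]; constructor <;> linarith
    have a4 : 1 / (2 * (m + 2) : ℝ) ≤ 1 := by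
      rw [div_le_one (by positivity)]; nlinarith [(Nat.cast_nonneg m : (0:ℝ) ≤ m)]
    rw [← sq_abs]
    nlinarith [abs_nonneg (x i)]
  have hne : s.Nonempty := by
    by_contra h
    rw [Finset.not_nonempty_iff_eq_empty] at h
    subst h; norm_num at hs
  have h2 := Finset.sum_lt_sum_of_nonempty hne h1
  have h3 : (s.card : ℝ) ≤ m + 2 := by
    have := Finset.card_le_univ s
    simp at this
    exact_mod_cast this
  simp only [Finset.sum_const, nsmul_eq_mul] at h2
  have h4 : (s.card : ℝ) * (1 / (2 * (m + 2))) ≤ (m + 2) * (1 / (2 * (m + 2))) :=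
    mul_le_mul_of_nonneg_right h3 (by positivity)
  have h5 : ((m : ℝ) + 2) * (1 / (2 * (m + 2))) = 1 / 2 := by field_simp
  linarith

lemma strip_coord (m : ℕ) : ∃ C : ℝ≥0∞, C ≠ ⊤ ∧ ∀ A : Set ℝ, A ⊆ Icc (-(1/2)) (1/2) →
      μH[((m + 2 : ℕ) : ℝ) - 1] {x : EuclideanSpace ℝ (Fin (m+2)) |
        x ∈ sphere (0 : EuclideanSpace ℝ (Fin (m+2))) 1 ∧ x 0 ∈ A}
        ≤ C * volume A := by
  have hc : (0:ℝ) < 1 / (2 * (m + 2)) := by positivity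
  have : ∀ i : Fin (m+2), ∀ σ : ℝ, ∃ C : ℝ≥0∞, C ≠ ⊤ ∧
      (i ≠ 0 → (σ = 1 ∨ σ = -1) → ∀ A : Set ℝ,
      μH[((m + 2 : ℕ) : ℝ) - 1] {x : EuclideanSpace ℝ (Fin (m+2)) |
        x ∈ sphere (0 : EuclideanSpace ℝ (Fin (m+2))) 1 ∧ 1 / (2 * (m + 2)) ≤ σ * x i ∧ x 0 ∈ A}
        ≤ C * volume A) := by
    intro i σ
    by_cases h : i ≠ 0 ∧ (σ = 1 ∨ σ = -1)
    · obtain ⟨C, h1, h2⟩ := piece_meas m i 0 h.1.symm _ hc σ h.2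
      exact ⟨C, h1, fun _ _ => h2⟩
    · exact ⟨0, by simp, fun h1 h2 => absurd ⟨h1, h2⟩ h⟩
  choose C hC1 hC2 using this
  refine ⟨∑ i, ∑ σ ∈ ({1, -1} : Finset ℝ), C i σ, ?_, ?_⟩
  · simp only [ne_eq, ENNReal.sum_eq_top, not_exists, not_and]
    intro i _ σ _
    exact hC1 i σ
  intro A hA
  have hsub : {x : EuclideanSpace ℝ (Fin (m+2)) |
        x ∈ sphere (0 : EuclideanSpace ℝ (Fin (m+2))) 1 ∧ x 0 ∈ A} ⊆
      ⋃ i ∈ (Finset.univ.erase (0 : Fin (m+2))), ⋃ σ ∈ ({1, -1} : Finset ℝ),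
        {x : EuclideanSpace ℝ (Fin (m+2)) |
        x ∈ sphere (0 : EuclideanSpace ℝ (Fin (m+2))) 1 ∧ 1 / (2 * (m + 2)) ≤ σ * x i ∧ x 0 ∈ A}
      := by
    rintro x ⟨hx, hxA⟩
    have h1 := sphere_sq_sum hx
    have h2 : x 0 ^ 2 ≤ 1 / 4 := by
      have := hA hxA
      nlinarith [this.1, this.2]
    have h3 : x 0 ^ 2 + ∑ i ∈ Finset.univ.erase (0 : Fin (m+2)), x i ^ 2 = ∑ i, x i ^ 2 :=
      Finset.add_sum_erase _ (fun i => x i ^ 2) (Finset.mem_univ 0)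
    obtain ⟨i, hi, σ, hσ, h⟩ := exists_big m x (Finset.univ.erase 0) (by linarith)
    simp only [mem_iUnion]
    exact ⟨i, hi, σ, hσ, hx, h, hxA⟩
  refine (measure_mono hsub).trans ?_
  rw [Finset.sum_mul]
  refine (measure_biUnion_finset_le _ _).trans ?_
  refine le_trans ?_ (Finset.sum_le_sum_of_subset (Finset.erase_subset 0 _))
  refine Finset.sum_le_sum fun i hi => ?_
  rw [Finset.sum_mul]
  refine (measure_biUnion_finset_le _ _).trans ?_
  refine Finset.sum_le_sum fun σ hσ => ?_
  exact hC2 i σ (Finset.ne_of_mem_erase hi) (by simpa using hσ) A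

lemma sphere_finite (m : ℕ) :
      μH[((m + 2 : ℕ) : ℝ) - 1] (sphere (0 : EuclideanSpace ℝ (Fin (m+2))) 1) < ⊤ := by
  have hc : (0:ℝ) < 1 / (2 * (m + 2)) := by positivity
  have hsub : sphere (0 : EuclideanSpace ℝ (Fin (m+2))) 1 ⊆
      ⋃ i ∈ (Finset.univ : Finset (Fin (m+2))), ⋃ σ ∈ ({1, -1} : Finset ℝ),
        {x : EuclideanSpace ℝ (Fin (m+2)) |
        x ∈ sphere (0 : EuclideanSpace ℝ (Fin (m+2))) 1 ∧ 1 / (2 * (m + 2)) ≤ σ * x i ∧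
          x (i + 1) ∈ Icc (-1 : ℝ) 1} := by
    intro x hx
    have h1 := sphere_sq_sum hx
    obtain ⟨i, hi, σ, hσ, h⟩ := exists_big m x Finset.univ (by linarith)
    simp only [mem_iUnion]
    exact ⟨i, hi, σ, hσ, hx, h, abs_le.1 (sphere_coord_le hx _)⟩
  refine (measure_mono hsub).trans_lt ?_
  refine (measure_biUnion_finset_le _ _).trans_lt ?_
  refine ENNReal.sum_lt_top.2 fun i hi => ?_
  refine (measure_biUnion_finset_le _ _).trans_lt ?_
  refine ENNReal.sum_lt_top.2 fun σ hσ => ?_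
  obtain ⟨C, h1, h2⟩ := piece_meas m i (i+1) (by simp) _ hc σ (by simpa using hσ)
  refine (h2 _).trans_lt ?_
  rw [Real.volume_Icc]
  exact ENNReal.mul_lt_top h1.lt_top ENNReal.ofReal_lt_top

lemma sphere_pos (m : ℕ) :
      0 < μH[((m + 2 : ℕ) : ℝ) - 1] (sphere (0 : EuclideanSpace ℝ (Fin (m+2))) 1) := by
  have hd : ((m + 2 : ℕ) : ℝ) - 1 = (Fintype.card (Fin (m+1)) : ℝ) := by
    push_cast [Fintype.card_fin]; ring
  set g : EuclideanSpace ℝ (Fin (m+2)) → (Fin (m+1) → ℝ) := fun x j => x j.succ with hg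
  have hL : LipschitzWith 1 g := by
    refine LipschitzWith.of_dist_le_mul fun x y => ?_
    simp only [NNReal.coe_one, one_mul]
    rw [dist_pi_le_iff dist_nonneg]
    intro j
    have := PiLp.norm_apply_le (x - y) j.succ
    rw [dist_eq_norm, dist_eq_norm]
    simpa [hg] using this
  have h := hL.hausdorffMeasure_image_le (d := ((m + 2 : ℕ) : ℝ) - 1) (by rw [hd]; positivity)
    (sphere (0 : EuclideanSpace ℝ (Fin (m+2))) 1)
  have hsub : Metric.ball (0 : Fin (m+1) → ℝ) (1 / (m + 1)) ⊆
      g '' (sphere (0 : EuclideanSpace ℝ (Fin (m+2))) 1) := by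
    intro y hy
    have hy1 : ∀ j, |y j| ≤ 1 / (m + 1) := by
      intro j
      have := norm_le_pi_norm y j
      rw [mem_ball_zero_iff] at hy
      simpa using this.trans hy.le
    have hy2 : ∑ j, y j ^ 2 ≤ 1 := by
      have : ∀ j ∈ Finset.univ, y j ^ 2 ≤ 1 / (m + 1) := by
        intro j _
        have a4 : 1 / ((m : ℝ) + 1) ≤ 1 := by
          rw [div_le_one (by positivity)]; linarith [(Nat.cast_nonneg m : (0:ℝ) ≤ m)]
        rw [← sq_abs]
        nlinarith [abs_nonneg (y j), hy1 j]
      have := Finset.sum_le_card_nsmul _ _ _ this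
      refine this.trans (le_of_eq ?_)
      simp
      field_simp
    refine ⟨WithLp.toLp 2 (Fin.cons (Real.sqrt (1 - ∑ j, y j ^ 2)) y), ?_, ?_⟩
    · rw [mem_sphere_zero_iff_norm, EuclideanSpace.norm_eq, Real.sqrt_eq_one]
      rw [Fin.sum_univ_succ]
      simp only [Fin.cons_zero, Fin.cons_succ, Real.norm_eq_abs, sq_abs]
      rw [Real.sq_sqrt (by linarith)]
      ring
    · ext j
      simp [hg]
  have hpos : 0 < volume (Metric.ball (0 : Fin (m+1) → ℝ) (1 / (m + 1))) :=
    Metric.measure_ball_pos _ _ (by positivity)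
  have h2 : μH[((m + 2 : ℕ) : ℝ) - 1] (g '' (sphere (0 : EuclideanSpace ℝ (Fin (m+2))) 1)) =
      volume (g '' (sphere (0 : EuclideanSpace ℝ (Fin (m+2))) 1)) := by
    rw [hd, hausdorffMeasure_pi_real]
  rw [h2] at h
  simpa using hpos.trans_le ((measure_mono hsub).trans h)

lemma strip_gen (m : ℕ) : ∃ C : ℝ≥0∞, C ≠ ⊤ ∧
    ∀ x : EuclideanSpace ℝ (Fin (m+2)), x ≠ 0 → ∀ A : Set ℝ, MeasurableSet A →
      A ⊆ Icc (-(‖x‖/2)) (‖x‖/2) →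
      (μH[((m + 2 : ℕ) : ℝ) - 1]).restrict (sphere (0 : EuclideanSpace ℝ (Fin (m+2))) 1)
        ((fun ξ => ⟪x, ξ⟫) ⁻¹' A) ≤ C * ENNReal.ofReal ‖x‖⁻¹ * volume A := by
  obtain ⟨C, hC, h⟩ := strip_coord m
  refine ⟨C, hC, fun x hx A hA hAs => ?_⟩
  have hx0 : 0 < ‖x‖ := norm_pos_iff.2 hx
  set u : EuclideanSpace ℝ (Fin (m+2)) := ‖x‖⁻¹ • x with hu
  have hu1 : ‖u‖ = 1 := by rw [hu, norm_smul]; simp [hx0.ne']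
  have hxu : x = ‖x‖ • u := by rw [hu, smul_smul]; simp [hx0.ne']
  obtain ⟨b, hb⟩ := Orthonormal.exists_orthonormalBasis_extension_of_card_eq
    (𝕜 := ℝ) (E := EuclideanSpace ℝ (Fin (m+2))) (ι := Fin (m+2)) (by simp)
    (v := fun _ => u) (s := {0}) (by
      rw [orthonormal_iff_ite]
      rintro ⟨i, rfl⟩ ⟨j, rfl⟩
      simp [hu1])
  have hb0 : b 0 = u := hb 0 (by simp)
  have hm : MeasurableSet ((fun ξ : EuclideanSpace ℝ (Fin (m+2)) => ⟪x, ξ⟫) ⁻¹' A) :=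
    (by fun_prop : Measurable (fun ξ : EuclideanSpace ℝ (Fin (m+2)) => ⟪x, ξ⟫)) hA
  rw [Measure.restrict_apply hm]
  have hiso := b.repr.isometry.hausdorffMeasure_image (d := ((m + 2 : ℕ) : ℝ) - 1)
    (Or.inr b.repr.surjective)
    ((fun ξ => ⟪x, ξ⟫) ⁻¹' A ∩ sphere (0 : EuclideanSpace ℝ (Fin (m+2))) 1)
  rw [← hiso]
  have hsub : b.repr '' ((fun ξ => ⟪x, ξ⟫) ⁻¹' A ∩ sphere (0 : EuclideanSpace ℝ (Fin (m+2))) 1)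
      ⊆ {y : EuclideanSpace ℝ (Fin (m+2)) |
        y ∈ sphere (0 : EuclideanSpace ℝ (Fin (m+2))) 1 ∧ y 0 ∈ (fun t => ‖x‖ * t) ⁻¹' A} := by
    rintro _ ⟨ξ, ⟨h1, h2⟩, rfl⟩
    refine ⟨by simpa using h2, ?_⟩
    have : b.repr ξ 0 = ⟪u, ξ⟫ := by rw [b.repr_apply_apply, hb0]
    rw [mem_preimage, this, ← real_inner_smul_left, ← hxu]
    exact h1
  refine (measure_mono hsub).trans ?_
  refine (h _ ?_).trans ?_
  · intro t ht
    have := hAs ht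
    constructor
    · nlinarith [this.1]
    · nlinarith [this.2]
  · rw [Real.volume_preimage_mul_left hx0.ne', abs_of_pos (by positivity), mul_assoc]

end LpCos
namespace LpCos

open Filter Topology

/-- the odd power function -/
def psi (p s : ℝ) : ℝ := |s| ^ (p - 2) * s

/-- regularised weight -/
def wreg (p ε r : ℝ) : ℝ := (max |r| ε) ^ (p - 2)

/-- regularised odd power -/
def psireg (p ε s : ℝ) : ℝ := ∫ r in (0:ℝ)..s, (p - 1) * wreg p ε r

/-- difference of weights -/
def dif (p ε r : ℝ) : ℝ := |wreg p ε r - |r| ^ (p - 2)|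

/-- bound -/
def kap (p ε : ℝ) : ℝ := 2 * ε ^ (p - 1) / (p - 1) + 2 * ε ^ (p - 1)

lemma psi_continuous {p : ℝ} (hp : 1 < p) : Continuous (psi p) := by
  have h : ContDiff ℝ 1 (fun x : ℝ => |x| ^ p) := by
    simpa using contDiff_norm_rpow (E := ℝ) hp
  have h2 := h.continuous_deriv le_rfl
  have h3 : deriv (fun x : ℝ => |x| ^ p) = fun x => p * psi p x := by
    ext x
    rw [(hasDerivAt_abs_rpow x hp).deriv, psi]; ring
  rw [h3] at h2
  have h4 : psi p = fun x => p⁻¹ * (p * psi p x) := by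
    ext x
    have : p ≠ 0 := by linarith
    field_simp
  rw [h4]
  exact continuous_const.mul h2

lemma psi_hasDerivAt {p : ℝ} {s : ℝ} (hs : s ≠ 0) :
    HasDerivAt (psi p) ((p - 1) * |s| ^ (p - 2)) s := by
  have h1 := ((hasDerivAt_abs hs).rpow_const (p := p - 2) (Or.inl (abs_ne_zero.2 hs))).mul
    (hasDerivAt_id s)
  refine h1.congr_deriv ?_
  have e1 : (SignType.sign s : ℝ) * s = |s| := by
    rw [mul_comm]; simp
  have e2 : |s| * |s| ^ (p - 2 - 1) = |s| ^ (p - 2) := by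
    rw [Real.rpow_sub_one (abs_ne_zero.2 hs)]
    have := abs_ne_zero.2 hs
    field_simp
  simp only [id_eq, mul_one]
  calc _ = (p - 2) * (((SignType.sign s : ℝ) * s) * |s| ^ (p - 2 - 1)) + |s| ^ (p - 2) := by ring
    _ = _ := by rw [e1, e2]; ring

lemma weight_intervalIntegrable {p : ℝ} (hp : 1 < p) (s : ℝ) :
    IntervalIntegrable (fun r => (p - 1) * |r| ^ (p - 2)) volume 0 s := by
  refine intervalIntegral.intervalIntegrable_deriv_of_nonneg (g := psi p)
    (psi_continuous hp).continuousOn ?_ ?_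
  · intro x hx
    apply psi_hasDerivAt
    rintro rfl
    rcases le_total 0 s with h | h <;> simp [h] at hx
  · intro x _
    have : 0 ≤ |x| ^ (p - 2) := by positivity
    nlinarith

lemma weight_integral {p : ℝ} (hp : 1 < p) (s : ℝ) :
    ∫ r in (0:ℝ)..s, (p - 1) * |r| ^ (p - 2) = psi p s := by
  rw [intervalIntegral.integral_eq_sub_of_hasDeriv_right (f := psi p)
    (psi_continuous hp).continuousOn ?_ (weight_intervalIntegrable hp s)]
  · simp [psi]
  · intro x hx
    apply (psi_hasDerivAt _).hasDerivWithinAt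
    rintro rfl
    rcases le_total 0 s with h | h <;> simp [h] at hx

lemma wreg_continuous (p : ℝ) {ε : ℝ} (hε : 0 < ε) : Continuous (wreg p ε) := by
  unfold wreg
  refine Continuous.rpow_const (by fun_prop) fun x => Or.inl ?_
  exact (lt_of_lt_of_le hε (le_max_right _ _)).ne'

lemma dif_measurable (p ε : ℝ) : Measurable (dif p ε) := by
  unfold dif wreg
  fun_prop

lemma dif_nonneg (p ε r : ℝ) : 0 ≤ dif p ε r := abs_nonneg _

lemma dif_zero {p ε r : ℝ} (h : ε ≤ |r|) : dif p ε r = 0 := by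
  simp [dif, wreg, max_eq_left h]

lemma dif_le {p ε r : ℝ} (hε : 0 < ε) (h : |r| ≤ ε) : dif p ε r ≤ |r| ^ (p - 2) + ε ^ (p - 2) := by
  rw [dif, wreg, max_eq_right h]
  refine (abs_sub _ _).trans ?_
  rw [abs_of_nonneg (by positivity), abs_of_nonneg (by positivity)]
  linarith

lemma psireg_hasDerivAt (p : ℝ) {ε : ℝ} (hε : 0 < ε) (s : ℝ) :
    HasDerivAt (psireg p ε) ((p - 1) * wreg p ε s) s := by
  have hc : Continuous fun r => (p - 1) * wreg p ε r :=
    continuous_const.mul (wreg_continuous p hε)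
  exact intervalIntegral.integral_hasDerivAt_right (hc.intervalIntegrable _ _)
    hc.aestronglyMeasurable.stronglyMeasurableAtFilter hc.continuousAt

lemma weight_ii {p : ℝ} (hp : 1 < p) (s : ℝ) :
    IntervalIntegrable (fun r => |r| ^ (p - 2)) volume 0 s := by
  have := (weight_intervalIntegrable hp s).const_mul (p - 1)⁻¹
  have h : p - 1 ≠ 0 := by linarith
  refine this.congr ?_
  intro x _
  field_simp

lemma weight_int {p : ℝ} (hp : 1 < p) (s : ℝ) :
    ∫ r in (0:ℝ)..s, |r| ^ (p - 2) = psi p s / (p - 1) := by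
  have h : p - 1 ≠ 0 := by linarith
  rw [← weight_integral hp, intervalIntegral.integral_const_mul]
  field_simp

lemma dif_integrable {p : ℝ} (hp : 1 < p) {ε : ℝ} (hε : 0 < ε) :
    Integrable (dif p ε) ∧ ∫ r, dif p ε r ≤ kap p ε := by
  have hii : IntervalIntegrable (fun r => |r| ^ (p - 2)) volume (-ε) ε :=
    (weight_ii hp (-ε)).symm.trans (weight_ii hp ε)
  have hii2 : IntervalIntegrable (fun r => |r| ^ (p - 2) + ε ^ (p - 2)) volume (-ε) ε :=
    hii.add (by simp)
  have hle : -ε ≤ ε := by linarith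
  have hI : Integrable (indicator (Ioc (-ε) ε) (fun r => |r| ^ (p - 2) + ε ^ (p - 2))) := by
    rw [integrable_indicator_iff measurableSet_Ioc]
    exact (intervalIntegrable_iff_integrableOn_Ioc_of_le hle).1 hii2
  have hb : ∀ r, dif p ε r ≤ indicator (Ioc (-ε) ε) (fun r => |r| ^ (p - 2) + ε ^ (p - 2)) r := by
    intro r
    by_cases hr : |r| < ε
    · have : r ∈ Ioc (-ε) ε := ⟨(abs_lt.1 hr).1, (abs_lt.1 hr).2.le⟩
      rw [indicator_of_mem this]
      exact dif_le hε hr.le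
    · rw [dif_zero (not_lt.1 hr)]
      apply indicator_nonneg
      intro x _
      positivity
  have hint : Integrable (dif p ε) := by
    refine hI.mono' (dif_measurable p ε).aestronglyMeasurable (Eventually.of_forall fun r => ?_)
    rw [Real.norm_eq_abs, abs_of_nonneg (dif_nonneg _ _ _)]
    exact hb r
  refine ⟨hint, (integral_mono hint hI hb).trans ?_⟩
  rw [integral_indicator measurableSet_Ioc, ← intervalIntegral.integral_of_le hle,
    intervalIntegral.integral_add hii (by simp),
    ← intervalIntegral.integral_add_adjacent_intervals (weight_ii hp (-ε)).symm (weight_ii hp ε),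
    intervalIntegral.integral_symm, weight_int hp, weight_int hp]
  have e : ε ^ (p - 1) = ε ^ (p - 2) * ε := by
    rw [← Real.rpow_add_one hε.ne']; congr 1; ring
  simp only [psi, abs_neg, abs_of_pos hε, kap, e, intervalIntegral.integral_const, smul_eq_mul]
  apply le_of_eq
  ring

lemma psireg_sub {p : ℝ} (hp : 1 < p) {ε : ℝ} (hε : 0 < ε) (s : ℝ) :
    |psireg p ε s - psi p s| ≤ (p - 1) * kap p ε := by
  have hc : Continuous fun r => (p - 1) * wreg p ε r :=
    continuous_const.mul (wreg_continuous p hε)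
  rw [← weight_integral hp, psireg, ← intervalIntegral.integral_sub (hc.intervalIntegrable _ _)
    (weight_intervalIntegrable hp s)]
  have := dif_integrable hp hε
  rw [← Real.norm_eq_abs]
  refine intervalIntegral.norm_integral_le_integral_norm_uIoc.trans ?_
  have h2 : ∀ r, ‖(p - 1) * wreg p ε r - (p - 1) * |r| ^ (p - 2)‖ = (p - 1) * dif p ε r := by
    intro r
    rw [← mul_sub, norm_mul, Real.norm_eq_abs, Real.norm_eq_abs, dif, abs_of_pos (by linarith)]
  simp_rw [h2]
  rw [integral_const_mul]
  refine mul_le_mul_of_nonneg_left ?_ (by linarith)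
  exact (setIntegral_le_integral this.1 (Eventually.of_forall (dif_nonneg p ε))).trans this.2

lemma kap_tendsto {p : ℝ} (hp : 1 < p) :
    Tendsto (fun k : ℕ => kap p (1 / ((k : ℝ) + 1))) atTop (𝓝 0) := by
  have h1 : Continuous (kap p) := by
    unfold kap
    have : Continuous fun ε : ℝ => ε ^ (p - 1) :=
      Real.continuous_rpow_const (by linarith)
    fun_prop
  have h2 := (h1.tendsto 0).comp tendsto_one_div_add_atTop_nhds_zero_nat
  have h3 : kap p 0 = 0 := by
    simp [kap, Real.zero_rpow (by linarith : p - 1 ≠ 0)]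
  rw [h3] at h2
  exact h2

lemma kap_nonneg {p : ℝ} (hp : 1 < p) {ε : ℝ} (hε : 0 < ε) : 0 ≤ kap p ε := by
  have : 0 < p - 1 := by linarith
  unfold kap; positivity

end LpCos
namespace LpCos

open Filter Topology

section Analysis

set_option linter.unusedSectionVars false

variable {E : Type*} [NormedAddCommGroup E] [InnerProductSpace ℝ E] [FiniteDimensional ℝ E]
  [MeasurableSpace E] [BorelSpace E]

/-- The properties of the measure which are used. -/
structure Good (ν : Measure E) (C : ℝ≥0∞) : Prop where
  fin : IsFiniteMeasure ν
  ne : ν ≠ 0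
  le1 : ∀ᵐ ξ ∂ν, ‖ξ‖ ≤ 1
  cne : C ≠ ⊤
  strip : ∀ x : E, x ≠ 0 → ∀ A : Set ℝ, MeasurableSet A → A ⊆ Icc (-(‖x‖/2)) (‖x‖/2) →
      ν ((fun ξ => ⟪x, ξ⟫) ⁻¹' A) ≤ C * ENNReal.ofReal ‖x‖⁻¹ * volume A

variable {ν : Measure E} {C : ℝ≥0∞}
variable {V : Type*} [NormedAddCommGroup V] [NormedSpace ℝ V]

lemma loc_bound {k : ℝ → ℝ} (hk : Continuous k) {T : E → V} (hT : Continuous T) (x₀ : E) :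
    ∃ B : ℝ, ∀ x ∈ closedBall x₀ 1, ∀ ξ : E, ‖ξ‖ ≤ 1 → ‖k ⟪x, ξ⟫ • T ξ‖ ≤ B := by
  have hc : IsCompact (closedBall x₀ (1:ℝ) ×ˢ closedBall (0:E) 1) :=
    (isCompact_closedBall _ _).prod (isCompact_closedBall _ _)
  obtain ⟨B, hB⟩ := hc.exists_bound_of_continuousOn
    (f := fun q : E × E => k ⟪q.1, q.2⟫ • T q.2) (by fun_prop)
  exact ⟨B, fun x hx ξ hξ => hB (x, ξ) ⟨hx, by simpa using hξ⟩⟩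

lemma meas_cont {k : ℝ → ℝ} (hk : Continuous k) [FiniteDimensional ℝ V]
    {T : E → V} (hT : Continuous T) (x : E) :
    AEStronglyMeasurable (fun ξ => k ⟪x, ξ⟫ • T ξ) ν := by
  have : Continuous (fun ξ => k ⟪x, ξ⟫ • T ξ) := by fun_prop
  exact this.aestronglyMeasurable

lemma int_cont (hν : Good ν C) {k : ℝ → ℝ} (hk : Continuous k) [FiniteDimensional ℝ V]
    {T : E → V} (hT : Continuous T) (x : E) :
    Integrable (fun ξ => k ⟪x, ξ⟫ • T ξ) ν := by
  have := hν.fin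
  obtain ⟨B, hB⟩ := loc_bound hk hT x
  refine (integrable_const B).mono' (meas_cont hk hT x) ?_
  filter_upwards [hν.le1] with ξ hξ
  exact hB x (by simp) ξ hξ

lemma cont_int (hν : Good ν C) {k : ℝ → ℝ} (hk : Continuous k) [FiniteDimensional ℝ V]
    {T : E → V} (hT : Continuous T) :
    Continuous fun x => ∫ ξ, k ⟪x, ξ⟫ • T ξ ∂ν := by
  have := hν.fin
  rw [continuous_iff_continuousAt]
  intro x₀
  obtain ⟨B, hB⟩ := loc_bound hk hT x₀
  refine continuousAt_of_dominated (bound := fun _ => B)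
    (Eventually.of_forall fun x => meas_cont hk hT x) ?_ (integrable_const B) ?_
  · filter_upwards [closedBall_mem_nhds x₀ one_pos] with x hx
    filter_upwards [hν.le1] with ξ hξ
    exact hB x hx ξ hξ
  · refine Eventually.of_forall fun ξ => ?_
    have : Continuous (fun x => k ⟪x, ξ⟫ • T ξ) := by fun_prop
    exact this.continuousAt

lemma smulRight_cont [FiniteDimensional ℝ V] {T : E → V} (hT : Continuous T) :
    Continuous fun ξ : E => (innerSL ℝ ξ).smulRight (T ξ) := by
  have h : (fun ξ : E => (innerSL ℝ ξ).smulRight (T ξ)) =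
      fun ξ => ContinuousLinearMap.smulRightL ℝ E V (innerSL ℝ ξ) (T ξ) := rfl
  rw [h]
  fun_prop

lemma deriv_int (hν : Good ν C) {k k' : ℝ → ℝ} (hk : Continuous k) (hk' : Continuous k')
    (hkk : ∀ s, HasDerivAt k (k' s) s) [FiniteDimensional ℝ V]
    {T : E → V} (hT : Continuous T) (x₀ : E) :
    HasFDerivAt (fun x => ∫ ξ, k ⟪x, ξ⟫ • T ξ ∂ν)
      (∫ ξ, k' ⟪x₀, ξ⟫ • (innerSL ℝ ξ).smulRight (T ξ) ∂ν) x₀ := by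
  have := hν.fin
  have hT' := smulRight_cont (E := E) hT
  obtain ⟨B, hB⟩ := loc_bound hk' hT' x₀
  refine hasFDerivAt_integral_of_dominated_of_fderiv_le (bound := fun _ => B)
    (F' := fun x ξ => k' ⟪x, ξ⟫ • (innerSL ℝ ξ).smulRight (T ξ))
    (closedBall_mem_nhds x₀ one_pos)
    (Eventually.of_forall fun x => meas_cont hk hT x) (int_cont hν hk hT x₀)
    (meas_cont hk' hT' x₀) ?_ (integrable_const B) ?_
  · filter_upwards [hν.le1] with ξ hξ x hx
    exact hB x hx ξ hξ
  · refine Eventually.of_forall fun ξ x _ => ?_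
    have h1 : HasFDerivAt (fun x : E => ⟪x, ξ⟫) (innerSL ℝ ξ) x := by
      have := (innerSL ℝ ξ).hasFDerivAt (x := x)
      refine this.congr_of_eventuallyEq (Eventually.of_forall fun y => ?_)
      simp [real_inner_comm]
    have h2 := ((hkk ⟪x, ξ⟫).comp_hasFDerivAt x h1).smul_const (T ξ)
    refine h2.congr_fderiv ?_
    ext v
    simp [smul_smul]

lemma dif_int (hν : Good ν C) {p : ℝ} (hp : 1 < p) {ε : ℝ} (hε : 0 < ε) {x : E} (hx : x ≠ 0)
    (hεx : ε ≤ ‖x‖ / 2) :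
    Integrable (fun ξ => dif p ε ⟪x, ξ⟫) ν ∧
      ∫ ξ, dif p ε ⟪x, ξ⟫ ∂ν ≤ C.toReal * ‖x‖⁻¹ * kap p ε := by
  obtain ⟨h1, h2⟩ := dif_integrable hp hε
  have hm : Measurable (fun ξ : E => ⟪x, ξ⟫) := by fun_prop
  set c : ℝ≥0∞ := C * ENNReal.ofReal ‖x‖⁻¹ with hc
  have hcne : c ≠ ⊤ := ENNReal.mul_ne_top hν.cne ENNReal.ofReal_ne_top
  have hle : (ν.map (fun ξ : E => ⟪x, ξ⟫)).restrict (Icc (-ε) ε) ≤ c • volume := by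
    rw [Measure.le_iff]
    intro A hA
    rw [Measure.restrict_apply hA, Measure.map_apply hm (hA.inter measurableSet_Icc)]
    refine (hν.strip x hx _ (hA.inter measurableSet_Icc) ?_).trans ?_
    · refine inter_subset_right.trans (Icc_subset_Icc (by linarith) hεx)
    · simp only [Measure.smul_apply, smul_eq_mul]
      exact mul_le_mul' le_rfl (measure_mono inter_subset_left)
  have hlin : ∫⁻ ξ, ENNReal.ofReal (dif p ε ⟪x, ξ⟫) ∂ν ≤ c * ENNReal.ofReal (kap p ε) := by
    have hmd : Measurable fun r => ENNReal.ofReal (dif p ε r) :=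
      (dif_measurable p ε).ennreal_ofReal
    rw [← lintegral_map (f := fun r => ENNReal.ofReal (dif p ε r)) hmd hm]
    rw [← setLIntegral_eq_of_support_subset (s := Icc (-ε) ε)]
    · refine (lintegral_mono' hle le_rfl).trans ?_
      rw [lintegral_smul_measure, smul_eq_mul]
      refine mul_le_mul' le_rfl ?_
      rw [← ofReal_integral_eq_lintegral_ofReal h1 (Eventually.of_forall (dif_nonneg p ε))]
      exact ENNReal.ofReal_le_ofReal h2
    · intro r hr
      by_contra hcon
      apply hr
      have : ε ≤ |r| := by
        by_contra h
        rw [not_le, abs_lt] at h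
        exact hcon ⟨h.1.le, h.2.le⟩
      simp [dif_zero this]
  have hmm : AEStronglyMeasurable (fun ξ : E => dif p ε ⟪x, ξ⟫) ν :=
    ((dif_measurable p ε).comp hm).aestronglyMeasurable
  have hnn : 0 ≤ᵐ[ν] (fun ξ : E => dif p ε ⟪x, ξ⟫) :=
    Eventually.of_forall fun ξ => dif_nonneg p ε _
  constructor
  · refine ⟨hmm, ?_⟩
    rw [hasFiniteIntegral_iff_ofReal hnn]
    exact hlin.trans_lt (ENNReal.mul_lt_top hcne.lt_top ENNReal.ofReal_lt_top)
  · rw [integral_eq_lintegral_of_nonneg_ae hnn hmm]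
    refine (ENNReal.toReal_mono (ENNReal.mul_ne_top hcne ENNReal.ofReal_ne_top) hlin).trans ?_
    rw [ENNReal.toReal_mul, hc, ENNReal.toReal_mul, ENNReal.toReal_ofReal (by positivity),
      ENNReal.toReal_ofReal (kap_nonneg hp hε)]

lemma weight_integrable (hν : Good ν C) {p : ℝ} (hp : 1 < p) {x : E} (hx : x ≠ 0) :
    Integrable (fun ξ => |⟪x, ξ⟫| ^ (p - 2)) ν := by
  have hx0 : 0 < ‖x‖ / 2 := by have := norm_pos_iff.2 hx; positivity
  have h1 := (dif_int hν hp hx0 hx le_rfl).1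
  have h2 : Integrable (fun ξ => wreg p (‖x‖/2) ⟪x, ξ⟫ • (1:ℝ)) ν :=
    int_cont hν (wreg_continuous p hx0) continuous_const x
  have hm : Measurable (fun ξ : E => ⟪x, ξ⟫) := by fun_prop
  refine (h1.add h2).mono' ?_ (Eventually.of_forall fun ξ => ?_)
  · exact Measurable.aestronglyMeasurable (by fun_prop)
  · rw [Real.norm_eq_abs, abs_of_nonneg (by positivity)]
    simp only [smul_eq_mul, mul_one, Pi.add_apply]
    have := neg_abs_le (wreg p (‖x‖/2) ⟪x, ξ⟫ - |⟪x, ξ⟫| ^ (p - 2))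
    rw [dif]
    linarith

lemma weight_smul_integrable (hν : Good ν C) {p : ℝ} (hp : 1 < p) {x : E} (hx : x ≠ 0)
    [FiniteDimensional ℝ V] {T : E → V} (hT : Continuous T) :
    Integrable (fun ξ => |⟪x, ξ⟫| ^ (p - 2) • T ξ) ν := by
  obtain ⟨B, hB⟩ := (isCompact_closedBall (0:E) 1).exists_bound_of_continuousOn hT.continuousOn
  refine (weight_integrable hν hp hx).smul_bdd B hT.aestronglyMeasurable ?_
  filter_upwards [hν.le1] with ξ hξ
  exact hB ξ (by simpa using hξ)

lemma hyperplane_null (hν : Good ν C) {x : E} (hx : x ≠ 0) : ∀ᵐ ξ ∂ν, ⟪x, ξ⟫ ≠ 0 := by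
  have h := hν.strip x hx {0} (measurableSet_singleton 0) (by
    intro t ht
    rw [mem_singleton_iff] at ht
    subst ht
    have := norm_nonneg x
    constructor <;> linarith)
  rw [Real.volume_singleton, mul_zero] at h
  rw [ae_iff]
  simpa [preimage] using le_antisymm h bot_le

/-- p-th power of the support function -/
def FF (ν : Measure E) (p : ℝ) (x : E) : ℝ := ∫ ξ, |⟪x, ξ⟫| ^ p ∂ν

/-- gradient (up to the factor p) -/
def GG (ν : Measure E) (p : ℝ) (x : E) : E := ∫ ξ, psi p ⟪x, ξ⟫ • ξ ∂ν

/-- Hessian (up to factor) -/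
def HS (ν : Measure E) (p : ℝ) (x : E) : E →L[ℝ] E :=
  ∫ ξ, |⟪x, ξ⟫| ^ (p - 2) • (innerSL ℝ ξ).smulRight ξ ∂ν

lemma FF_hasFDerivAt (hν : Good ν C) {p : ℝ} (hp : 1 < p) (x : E) :
    HasFDerivAt (FF ν p) (p • innerSL ℝ (GG ν p x)) x := by
  have h := deriv_int hν (k := fun s => |s| ^ p) (k' := fun s => p * psi p s)
    (by
      refine Continuous.rpow_const (by fun_prop) fun _ => Or.inr (by linarith))
    (continuous_const.mul (psi_continuous hp))
    (fun s => (hasDerivAt_abs_rpow s hp).congr_deriv (by rw [psi]; ring))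
    (T := fun _ : E => (1:ℝ)) continuous_const x
  simp only [smul_eq_mul, mul_one] at h
  refine h.congr_fderiv ?_
  have hi : Integrable (fun ξ : E => psi p ⟪x, ξ⟫ • ξ) ν :=
    int_cont hν (psi_continuous hp) continuous_id x
  rw [GG, ← ContinuousLinearMap.integral_comp_comm _ hi, ← integral_smul]
  congr 1
  ext ξ v
  simp only [ContinuousLinearMap.smul_apply, ContinuousLinearMap.smulRight_apply, map_smul,
    innerSL_apply_apply, smul_eq_mul, mul_one, mul_assoc]
  rfl

lemma HS_tendsto (hν : Good ν C) {p : ℝ} (hp : 1 < p) :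
    TendstoLocallyUniformlyOn
      (fun (k : ℕ) (x : E) => ∫ ξ, ((p - 1) * wreg p (1 / ((k:ℝ) + 1)) ⟪x, ξ⟫) •
        (innerSL ℝ ξ).smulRight ξ ∂ν) (fun x => (p - 1) • HS ν p x) atTop {(0:E)}ᶜ := by
  rw [Metric.tendstoLocallyUniformlyOn_iff]
  intro e he x hx
  have hx0 : 0 < ‖x‖ := norm_pos_iff.2 hx
  refine ⟨{y | ‖x‖ / 2 < ‖y‖}, ?_, ?_⟩
  · apply mem_nhdsWithin_of_mem_nhds
    exact (isOpen_lt continuous_const continuous_norm).mem_nhds (by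
      change ‖x‖ / 2 < ‖x‖; linarith)
  have h1 : ∀ᶠ k : ℕ in atTop, 1 / ((k:ℝ) + 1) < ‖x‖ / 4 :=
    tendsto_one_div_add_atTop_nhds_zero_nat.eventually (gt_mem_nhds (by positivity))
  have h2 : Tendsto (fun k : ℕ => (p - 1) * (C.toReal * (‖x‖/2)⁻¹ * kap p (1 / ((k:ℝ) + 1))))
      atTop (𝓝 0) := by
    simpa using ((kap_tendsto hp).const_mul (C.toReal * (‖x‖/2)⁻¹)).const_mul (p - 1)
  filter_upwards [h1, h2.eventually (gt_mem_nhds he)] with k hk1 hk2 y hy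
  change ‖x‖ / 2 < ‖y‖ at hy
  have hy0 : y ≠ 0 := by rintro rfl; simp at hy; linarith
  set ε : ℝ := 1 / ((k:ℝ) + 1) with hε
  have hε0 : 0 < ε := by positivity
  have hTc : Continuous (fun ξ : E => (innerSL ℝ ξ).smulRight ξ) :=
    smulRight_cont continuous_id
  obtain ⟨hd1, hd2⟩ := dif_int hν hp hε0 hy0 (by linarith)
  have hi1 : Integrable (fun ξ : E => ((p - 1) * wreg p ε ⟪y, ξ⟫) •
      (innerSL ℝ ξ).smulRight ξ) ν :=
    int_cont hν (k := fun s => (p - 1) * wreg p ε s)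
      (continuous_const.mul (wreg_continuous p hε0)) hTc y
  have hi2 : Integrable (fun ξ : E => (p - 1) • |⟪y, ξ⟫| ^ (p - 2) •
      (innerSL ℝ ξ).smulRight ξ) ν :=
    (weight_smul_integrable hν hp hy0 hTc).smul (p - 1)
  rw [dist_comm, dist_eq_norm, HS, ← integral_smul, ← integral_sub hi1 hi2]
  refine lt_of_le_of_lt ?_ hk2
  refine (norm_integral_le_of_norm_le (hd1.const_mul (p - 1)) ?_).trans ?_
  · filter_upwards [hν.le1] with ξ hξ
    rw [smul_smul, ← sub_smul, ← mul_sub, norm_smul, norm_mul, Real.norm_eq_abs, Real.norm_eq_abs,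
      abs_of_pos (by linarith : 0 < p - 1), ContinuousLinearMap.norm_smulRight_apply,
      innerSL_apply_norm]
    change (p - 1) * dif p ε ⟪y, ξ⟫ * _ ≤ _
    have a1 : 0 ≤ (p - 1) * dif p ε ⟪y, ξ⟫ := mul_nonneg (by linarith) (dif_nonneg _ _ _)
    have a2 : ‖ξ‖ * ‖ξ‖ ≤ 1 := by nlinarith [norm_nonneg ξ]
    nlinarith
  · rw [integral_const_mul]
    refine mul_le_mul_of_nonneg_left (hd2.trans ?_) (by linarith)
    refine mul_le_mul_of_nonneg_right ?_ (kap_nonneg hp hε0)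
    refine mul_le_mul_of_nonneg_left ?_ ENNReal.toReal_nonneg
    exact inv_anti₀ (by positivity) hy.le

lemma HS_continuousOn (hν : Good ν C) {p : ℝ} (hp : 1 < p) :
    ContinuousOn (fun x => (p - 1) • HS ν p x) {(0:E)}ᶜ := by
  refine (HS_tendsto hν hp).continuousOn (Frequently.of_forall fun k => ?_)
  have hε0 : 0 < 1 / ((k:ℝ) + 1) := by positivity
  exact (cont_int hν (continuous_const.mul (wreg_continuous p hε0) :
    Continuous fun s => (p - 1) * wreg p _ s) (smulRight_cont continuous_id)).continuousOn

lemma GG_hasFDerivAt (hν : Good ν C) {p : ℝ} (hp : 1 < p) {x : E} (hx : x ≠ 0) :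
    HasFDerivAt (GG ν p) ((p - 1) • HS ν p x) x := by
  have := hν.fin
  have hcr : ∀ k : ℕ, Continuous (psireg p (1 / ((k:ℝ) + 1))) := fun k =>
    continuous_iff_continuousAt.2 fun s =>
      (psireg_hasDerivAt p (by positivity : 0 < 1 / ((k:ℝ) + 1)) s).continuousAt
  refine hasFDerivAt_of_tendstoLocallyUniformlyOn (l := atTop) (s := {(0:E)}ᶜ)
    (f := fun (k : ℕ) x => ∫ ξ, psireg p (1 / ((k:ℝ) + 1)) ⟪x, ξ⟫ • ξ ∂ν)
    isOpen_compl_singleton (HS_tendsto hν hp) ?_ ?_ hx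
  · intro k x _
    have hε0 : 0 < 1 / ((k:ℝ) + 1) := by positivity
    exact deriv_int hν (hcr k) (continuous_const.mul (wreg_continuous p hε0) :
      Continuous fun s => (p - 1) * wreg p _ s) (psireg_hasDerivAt p hε0)
      (T := fun ξ : E => ξ) continuous_id x
  · intro x _
    rw [tendsto_iff_norm_sub_tendsto_zero]
    have h2 : Tendsto (fun k : ℕ => (p - 1) * kap p (1 / ((k:ℝ) + 1)) * ν.real univ)
      atTop (𝓝 0) := by
      simpa using ((kap_tendsto hp).const_mul (p - 1)).mul_const (ν.real univ)
    refine squeeze_zero (fun _ => norm_nonneg _) (fun k => ?_) h2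
    have hε0 : 0 < 1 / ((k:ℝ) + 1) := by positivity
    rw [GG, ← integral_sub (int_cont hν (hcr k) (T := fun ξ : E => ξ) continuous_id x)
      (int_cont hν (psi_continuous hp) (T := fun ξ : E => ξ) continuous_id x)]
    refine norm_integral_le_of_norm_le_const ?_
    filter_upwards [hν.le1] with ξ hξ
    rw [← sub_smul, norm_smul, Real.norm_eq_abs]
    have := psireg_sub hp hε0 ⟪x, ξ⟫
    have h0 := abs_nonneg (psireg p (1 / ((k:ℝ) + 1)) ⟪x, ξ⟫ - psi p ⟪x, ξ⟫)
    nlinarith [norm_nonneg ξ]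

end Analysis
end LpCos
namespace LpCos

open Filter Topology

section Final

set_option linter.unusedSectionVars false

variable {E : Type*} [NormedAddCommGroup E] [InnerProductSpace ℝ E] [FiniteDimensional ℝ E]
  [MeasurableSpace E] [BorelSpace E] {ν : Measure E} {C : ℝ≥0∞}

lemma integral_pos_of (hν : Good ν C) {g : E → ℝ} (hg : Integrable g ν) (h0 : ∀ ξ, 0 ≤ g ξ)
    (hpos : ∀ᵐ ξ ∂ν, g ξ ≠ 0) : 0 < ∫ ξ, g ξ ∂ν := by
  refine lt_of_le_of_ne (integral_nonneg h0) fun h => ?_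
  have h1 := (integral_eq_zero_iff_of_nonneg h0 hg).1 h.symm
  have h2 : ∀ᵐ ξ ∂ν, False := by
    filter_upwards [h1, hpos] with ξ a b using b a
  rw [ae_iff] at h2
  simp only [not_false_eq_true] at h2
  exact hν.ne (Measure.measure_univ_eq_zero.1 (by simpa using h2))

lemma abs_rpow_cont {p : ℝ} (hp : 1 < p) : Continuous fun s : ℝ => |s| ^ p :=
  Continuous.rpow_const (by fun_prop) fun _ => Or.inr (by linarith)

lemma FF_pos (hν : Good ν C) {p : ℝ} (hp : 1 < p) {x : E} (hx : x ≠ 0) : 0 < FF ν p x := by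
  refine integral_pos_of hν ?_ (fun ξ => by positivity) ?_
  · simpa using int_cont hν (abs_rpow_cont hp) (T := fun _ : E => (1:ℝ)) continuous_const x
  · filter_upwards [hyperplane_null hν hx] with ξ hξ
    have := abs_pos.2 hξ
    positivity

lemma HS_inner (hν : Good ν C) {p : ℝ} (hp : 1 < p) {u : E} (hu : u ≠ 0) (a b : E) :
    ⟪HS ν p u a, b⟫ = ∫ ξ, |⟪u, ξ⟫| ^ (p - 2) * (⟪ξ, a⟫ * ⟪ξ, b⟫) ∂ν := by
  have hTc : Continuous (fun ξ : E => (innerSL ℝ ξ).smulRight ξ) :=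
    smulRight_cont continuous_id
  have hi := weight_smul_integrable hν hp hu hTc
  rw [HS, ContinuousLinearMap.integral_apply hi, real_inner_comm, ← integral_inner]
  · congr 1
    ext ξ
    simp only [ContinuousLinearMap.smul_apply, ContinuousLinearMap.smulRight_apply,
      innerSL_apply_apply, real_inner_smul_right]
    rw [real_inner_comm b ξ]
  · exact hi.apply_continuousLinearMap a

lemma HS_symm (hν : Good ν C) {p : ℝ} (hp : 1 < p) {u : E} (hu : u ≠ 0) (a b : E) :
    ⟪HS ν p u a, b⟫ = ⟪HS ν p u b, a⟫ := by
  rw [HS_inner hν hp hu, HS_inner hν hp hu]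
  congr 1; ext ξ; ring

lemma HS_pos (hν : Good ν C) {p : ℝ} (hp : 1 < p) {u : E} (hu : u ≠ 0) {a : E} (ha : a ≠ 0) :
    0 < ⟪HS ν p u a, a⟫ := by
  rw [HS_inner hν hp hu]
  refine integral_pos_of hν ?_ (fun ξ => mul_nonneg (by positivity) (mul_self_nonneg _)) ?_
  · exact weight_smul_integrable hν hp hu (T := fun ξ : E => ⟪ξ, a⟫ * ⟪ξ, a⟫) (by fun_prop)
  · filter_upwards [hyperplane_null hν hu, hyperplane_null hν ha] with ξ h1 h2
    have := abs_pos.2 h1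
    rw [real_inner_comm] at h2
    positivity

lemma HS_self (hν : Good ν C) {p : ℝ} (hp : 1 < p) {u : E} (hu : u ≠ 0) :
    HS ν p u u = GG ν p u := by
  have hTc : Continuous (fun ξ : E => (innerSL ℝ ξ).smulRight ξ) :=
    smulRight_cont continuous_id
  have hi := weight_smul_integrable hν hp hu hTc
  rw [HS, ContinuousLinearMap.integral_apply hi, GG]
  congr 1
  ext1 ξ
  simp only [ContinuousLinearMap.smul_apply, ContinuousLinearMap.smulRight_apply,
      innerSL_apply_apply, psi, smul_smul, real_inner_comm]

lemma GG_inner_self (hν : Good ν C) {p : ℝ} (hp : 1 < p) (u : E) :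
    ⟪GG ν p u, u⟫ = FF ν p u := by
  rw [GG, real_inner_comm, ← integral_inner
    (int_cont hν (psi_continuous hp) (T := fun ξ : E => ξ) continuous_id u), FF]
  congr 1
  ext1 ξ
  rw [real_inner_smul_right, psi]
  by_cases h : ⟪u, ξ⟫ = 0
  · simp [h, Real.zero_rpow (by linarith : p ≠ 0)]
  · rw [mul_assoc, ← sq, ← sq_abs, ← Real.rpow_natCast, ← Real.rpow_add (abs_pos.2 h)]
    congr 1
    push_cast
    ring

lemma strictCS (hν : Good ν C) {p : ℝ} (hp : 1 < p) {u v : E} (hu : u ≠ 0)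
    (huv : ⟪u, v⟫ = 0) (hv : v ≠ 0) :
    0 < FF ν p u * ⟪HS ν p u v, v⟫ - ⟪GG ν p u, v⟫ ^ 2 := by
  have hA := FF_pos hν hp hu
  set A := FF ν p u with hAdef
  set B := ⟪GG ν p u, v⟫ with hB
  have hz : A • v - B • u ≠ 0 := by
    intro h
    have h2 : ⟪A • v - B • u, v⟫ = 0 := by rw [h, inner_zero_left]
    rw [inner_sub_left, real_inner_smul_left, real_inner_smul_left, huv, mul_zero, sub_zero] at h2
    have : 0 < ⟪v, v⟫ := real_inner_self_pos.2 hv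
    have := mul_pos hA this
    linarith
  have h := HS_pos hν hp hu hz
  have e1 : ⟪HS ν p u u, u⟫ = A := by rw [HS_self hν hp hu, GG_inner_self hν hp]
  have e2 : ⟪HS ν p u u, v⟫ = B := by rw [HS_self hν hp hu]
  have e3 : ⟪HS ν p u v, u⟫ = B := by rw [HS_symm hν hp hu, e2]
  simp only [map_sub, map_smul, inner_sub_left, inner_sub_right, real_inner_smul_left,
    real_inner_smul_right, e1, e2, e3] at h
  have h' : 0 < A * (A * ⟪HS ν p u v, v⟫ - B ^ 2) := by nlinarith
  exact pos_of_mul_pos_right h' hA.le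

lemma FF_contDiffOn (hν : Good ν C) {p : ℝ} (hp : 1 < p) :
    ContDiffOn ℝ 2 (FF ν p) {(0:E)}ᶜ := by
  have ho : IsOpen ({(0:E)}ᶜ) := isOpen_compl_singleton
  have hG : ContDiffOn ℝ 1 (GG ν p) {(0:E)}ᶜ := by
    rw [show (1 : WithTop ℕ∞) = 0 + 1 by simp, contDiffOn_succ_iff_fderiv_of_isOpen ho]
    refine ⟨fun x hx => (GG_hasFDerivAt hν hp hx).differentiableAt.differentiableWithinAt,
      by simp, ?_⟩
    rw [contDiffOn_zero]
    exact (HS_continuousOn hν hp).congr fun x hx => (GG_hasFDerivAt hν hp hx).fderiv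
  rw [show (2 : WithTop ℕ∞) = 1 + 1 by norm_num, contDiffOn_succ_iff_fderiv_of_isOpen ho]
  refine ⟨fun x _ => (FF_hasFDerivAt hν hp x).differentiableAt.differentiableWithinAt,
    by simp, ?_⟩
  have h2 : ContDiffOn ℝ 1 (fun x => p • innerSL ℝ (GG ν p x)) {(0:E)}ᶜ :=
    ((innerSL ℝ).contDiff.comp_contDiffOn hG).const_smul p
  exact h2.congr fun x _ => (FF_hasFDerivAt hν hp x).fderiv

/-- gradient of the support function -/
def gr (ν : Measure E) (p : ℝ) (x : E) : E := (FF ν p x) ^ (1 / p - 1) • GG ν p x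

lemma H_hasGradientAt (hν : Good ν C) {p : ℝ} (hp : 1 < p) {x : E} (hx : x ≠ 0) :
    HasGradientAt (fun x => FF ν p x ^ (1 / p)) (gr ν p x) x := by
  rw [hasGradientAt_iff_hasFDerivAt]
  refine ((FF_hasFDerivAt hν hp x).rpow_const (Or.inl (FF_pos hν hp hx).ne')).congr_fderiv ?_
  ext v
  have : p ≠ 0 := by linarith
  simp only [gr, ContinuousLinearMap.smul_apply, innerSL_apply_apply, smul_eq_mul,
    InnerProductSpace.toDual_apply_apply, real_inner_smul_left]
  field_simp

lemma gr_hasFDerivAt_pos (hν : Good ν C) {p : ℝ} (hp : 1 < p) {u v : E} (hu : u ≠ 0)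
    (huv : ⟪u, v⟫ = 0) (hv : v ≠ 0) :
    0 < ⟪fderiv ℝ (gr ν p) u v, v⟫ := by
  have hF := FF_pos hν hp hu
  have h := ((FF_hasFDerivAt hν hp u).rpow_const (p := 1 / p - 1) (Or.inl hF.ne')).smul
    (GG_hasFDerivAt hν hp hu)
  have h' : HasFDerivAt (gr ν p) _ u := h
  rw [h'.fderiv]
  simp only [ContinuousLinearMap.add_apply, ContinuousLinearMap.smul_apply,
    ContinuousLinearMap.smulRight_apply, innerSL_apply_apply, smul_eq_mul, inner_add_left,
    real_inner_smul_left]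
  have e : FF ν p u ^ (1 / p - 1) = FF ν p u ^ (1 / p - 1 - 1) * FF ν p u := by
    rw [← Real.rpow_add_one hF.ne']; congr 1; ring
  have hcs := strictCS hν hp hu huv hv
  have hp0 : p ≠ 0 := by linarith
  have key : 0 < (p - 1) * FF ν p u ^ (1 / p - 1 - 1) *
      (FF ν p u * ⟪HS ν p u v, v⟫ - ⟪GG ν p u, v⟫ ^ 2) :=
    mul_pos (mul_pos (by linarith) (by positivity)) hcs
  refine key.trans_le (le_of_eq ?_)
  rw [e]
  field_simp
  ring

lemma H_add (hν : Good ν C) {p : ℝ} (hp : 1 < p) (x y : E) :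
    FF ν p (x + y) ^ (1 / p) ≤ FF ν p x ^ (1 / p) + FF ν p y ^ (1 / p) := by
  have := hν.fin
  have hm : ∀ x : E, MemLp (fun ξ : E => ⟪x, ξ⟫) (ENNReal.ofReal p) ν := by
    intro x
    refine MemLp.of_bound (Continuous.aestronglyMeasurable (by fun_prop)) ‖x‖ ?_
    filter_upwards [hν.le1] with ξ hξ
    refine (norm_inner_le_norm x ξ).trans ?_
    nlinarith [norm_nonneg x]
  have he : ∀ x : E, eLpNorm (fun ξ : E => ⟪x, ξ⟫) (ENNReal.ofReal p) ν =
      ENNReal.ofReal (FF ν p x ^ (1 / p)) := by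
    intro x
    rw [(hm x).eLpNorm_eq_integral_rpow_norm (by simp; linarith) (by simp),
      ENNReal.toReal_ofReal (by linarith), one_div]
    rfl
  have h0 : ∀ x : E, 0 ≤ FF ν p x ^ (1 / p) := fun x =>
    Real.rpow_nonneg (integral_nonneg fun ξ => by positivity) _
  have h := eLpNorm_add_le (hm x).1 (hm y).1 (p := ENNReal.ofReal p) (by simp; linarith)
  have h2 : ((fun ξ : E => ⟪x, ξ⟫) + fun ξ : E => ⟪y, ξ⟫) = fun ξ : E => ⟪x + y, ξ⟫ := by
    ext ξ; simp [inner_add_left]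
  rw [h2, he, he, he, ← ENNReal.ofReal_add (h0 x) (h0 y),
    ENNReal.ofReal_le_ofReal_iff (add_nonneg (h0 x) (h0 y))] at h
  exact h

lemma H_smul {p : ℝ} (hp : 1 < p) (t : ℝ) (x : E) :
    FF ν p (t • x) ^ (1 / p) = |t| * FF ν p x ^ (1 / p) := by
  have h : FF ν p (t • x) = |t| ^ p * FF ν p x := by
    rw [FF, FF, ← integral_const_mul]
    congr 1; ext ξ
    rw [real_inner_smul_left, abs_mul, Real.mul_rpow (abs_nonneg _) (abs_nonneg _)]
  have hFn : 0 ≤ FF ν p x := integral_nonneg fun ξ => by positivity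
  rw [h, Real.mul_rpow (by positivity) hFn,
    ← Real.rpow_mul (abs_nonneg _), mul_one_div_cancel (by linarith), Real.rpow_one]

lemma gr_le (hν : Good ν C) {p : ℝ} (hp : 1 < p) {x : E} (hx : x ≠ 0) (z : E) :
    ⟪z, gr ν p x⟫ ≤ FF ν p z ^ (1 / p) := by
  have h1 := (H_hasGradientAt hν hp hx).hasFDerivAt
  have h2 : HasDerivAt (fun t : ℝ => FF ν p (x + t • z) ^ (1 / p)) ⟪gr ν p x, z⟫ 0 := by
    have hl : HasDerivAt (fun t : ℝ => x + t • z) z 0 := by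
      simpa using ((hasDerivAt_id (0:ℝ)).smul_const z).const_add x
    have h1' : HasFDerivAt (fun x => FF ν p x ^ (1 / p))
      ((InnerProductSpace.toDual ℝ E) (gr ν p x)) (x + (0:ℝ) • z) := by simpa using h1
    have h := h1'.comp_hasDerivAt (0:ℝ) hl
    simp only [InnerProductSpace.toDual_apply_apply] at h
    exact h
  have h3 := h2.tendsto_slope_zero_right
  rw [real_inner_comm]
  refine le_of_tendsto h3 ?_
  filter_upwards [self_mem_nhdsWithin] with t ht
  have ht0 : 0 < t := ht
  simp only [zero_add, zero_smul, add_zero, smul_eq_mul]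
  have h4 := H_add hν hp x (t • z)
  rw [H_smul hp, abs_of_pos ht0] at h4
  rw [inv_mul_le_iff₀ ht0]
  linarith

lemma gr_self (hν : Good ν C) {p : ℝ} (hp : 1 < p) {x : E} (hx : x ≠ 0) :
    ⟪x, gr ν p x⟫ = FF ν p x ^ (1 / p) := by
  rw [gr, real_inner_smul_right, real_inner_comm, GG_inner_self hν hp,
    ← Real.rpow_add_one (FF_pos hν hp hx).ne']
  congr 1; ring

theorem main_abstract (hν : Good ν C) {p : ℝ} (hp : 1 < p) (H : E → ℝ)
    (hH : ∀ x, H x = FF ν p x ^ (1 / p)) :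
    ∃ K : Set E,
      IsCompact K ∧ Convex ℝ K ∧ (interior K).Nonempty ∧
      (∀ x, x ∈ K ↔ -x ∈ K) ∧
      (∀ x : E, (⨆ y : K, ⟪x, (y : E)⟫) = H x) ∧
      ContDiffOn ℝ 2 H {(0 : E)}ᶜ ∧
      (∀ u : E, ‖u‖ = 1 → ∀ v : E, ⟪u, v⟫ = 0 → v ≠ 0 →
          0 < ⟪fderiv ℝ (fun x => gradient H x) u v, v⟫) := by
  have hHf : H = fun x => FF ν p x ^ (1 / p) := funext hH
  have hcont : Continuous H := by
    rw [hHf]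
    have : Continuous (FF ν p) :=
      continuous_iff_continuousAt.2 fun x => (FF_hasFDerivAt hν hp x).continuousAt
    exact this.rpow_const fun _ => Or.inr (by positivity)
  have hsm : ∀ (t : ℝ) x, H (t • x) = |t| * H x := by
    intro t x; rw [hHf]; exact H_smul hp t x
  have hneg : ∀ x, H (-x) = H x := by
    intro x; have := hsm (-1) x; simpa using this
  have hpos : ∀ x, x ≠ 0 → 0 < H x := by
    intro x hx; rw [hH]; have := FF_pos hν hp hx; positivity
  have hzero : H 0 = 0 := by have := hsm 0 0; simpa using this
  have hnn : ∀ x, 0 ≤ H x := by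
    intro x
    by_cases hx : x = 0
    · rw [hx, hzero]
    · exact (hpos x hx).le
  have hnorm : ∀ x : E, x ≠ 0 → H x = ‖x‖ * H (‖x‖⁻¹ • x) := by
    intro x hx
    have : ‖x‖ ≠ 0 := norm_ne_zero_iff.2 hx
    rw [hsm, abs_of_nonneg (by positivity)]
    field_simp
  have hunit : ∀ x : E, x ≠ 0 → ‖x‖⁻¹ • x ∈ sphere (0:E) 1 := by
    intro x hx
    have : ‖x‖ ≠ 0 := norm_ne_zero_iff.2 hx
    simp [norm_smul, this]
  obtain ⟨M, hM0, hM⟩ : ∃ M : ℝ, 0 ≤ M ∧ ∀ x, H x ≤ M * ‖x‖ := by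
    obtain ⟨M, hM⟩ := (isCompact_sphere (0:E) 1).exists_bound_of_continuousOn hcont.continuousOn
    refine ⟨max M 0, le_max_right _ _, fun x => ?_⟩
    by_cases hx : x = 0
    · simp [hx, hzero]
    · rw [hnorm x hx, mul_comm]
      exact mul_le_mul_of_nonneg_right 
        (((le_abs_self _).trans (hM _ (hunit x hx))).trans (le_max_left _ _)) (norm_nonneg _)
  obtain ⟨c, hc0, hc⟩ : ∃ c : ℝ, 0 < c ∧ ∀ x, c * ‖x‖ ≤ H x := by
    rcases (sphere (0:E) 1).eq_empty_or_nonempty with he | hne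
    · refine ⟨1, one_pos, fun x => ?_⟩
      have hx : x = 0 := by
        by_contra hx
        have := hunit x hx
        rw [he] at this
        exact this
      simp [hx, hzero]
    · obtain ⟨w, hw, hmin⟩ := (isCompact_sphere (0:E) 1).exists_isMinOn hne hcont.continuousOn
      refine ⟨H w, hpos w ?_, fun x => ?_⟩
      · rintro rfl; simp at hw
      · by_cases hx : x = 0
        · simp [hx, hzero]
        · rw [hnorm x hx, mul_comm]
          exact mul_le_mul_of_nonneg_left (hmin (hunit x hx)) (norm_nonneg _)
  set K : Set E := {y | ∀ x, ⟪x, y⟫ ≤ H x} with hK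
  have hmem : ∀ y, y ∈ K ↔ ∀ x, ⟪x, y⟫ ≤ H x := fun y => Iff.rfl
  have h0K : (0:E) ∈ K := by
    rw [hmem]; intro x; rw [inner_zero_right]; exact hnn x
  have hclosed : IsClosed K := by
    have : K = ⋂ x, {y | ⟪x, y⟫ ≤ H x} := by
      ext y; simp [hmem]
    rw [this]
    exact isClosed_iInter fun x => isClosed_le (by fun_prop) continuous_const
  have hKneg : ∀ x, x ∈ K → -x ∈ K := by
    intro x hx
    rw [hmem] at hx ⊢
    intro z
    have := hx (-z)
    rw [hneg, inner_neg_left] at this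
    rwa [inner_neg_right]
  refine ⟨K, ?_, ?_, ?_, ?_, ?_, ?_, ?_⟩
  · refine Metric.isCompact_of_isClosed_isBounded hclosed ?_
    rw [isBounded_iff_forall_norm_le]
    refine ⟨M, fun y hy => ?_⟩
    by_cases hy0 : y = 0
    · simpa [hy0] using hM0
    · have h1 := (hy y).trans (hM y)
      rw [real_inner_self_eq_norm_mul_norm] at h1
      exact le_of_mul_le_mul_right h1 (norm_pos_iff.2 hy0)
  · intro a ha b hb s t hs ht hst
    rw [hmem] at *
    intro x
    rw [inner_add_right, real_inner_smul_right, real_inner_smul_right]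
    have h1 := mul_le_mul_of_nonneg_left (ha x) hs
    have h2 := mul_le_mul_of_nonneg_left (hb x) ht
    have h3 : s * H x + t * H x = H x := by rw [← add_mul, hst, one_mul]
    linarith
  · refine ⟨0, mem_interior.2 ⟨ball 0 c, ?_, isOpen_ball, mem_ball_self hc0⟩⟩
    intro y hy x
    rw [mem_ball_zero_iff] at hy
    refine (real_inner_le_norm x y).trans (le_trans ?_ (hc x))
    rw [mul_comm]
    exact mul_le_mul_of_nonneg_right hy.le (norm_nonneg _)
  · intro x
    exact ⟨hKneg x, fun h => by simpa using hKneg _ h⟩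
  · intro x
    haveI : Nonempty K := ⟨⟨0, h0K⟩⟩
    refine le_antisymm (ciSup_le fun y => y.2 x) ?_
    have hbdd : BddAbove (range fun y : K => ⟪x, (y : E)⟫) :=
      ⟨H x, by rintro _ ⟨y, rfl⟩; exact y.2 x⟩
    by_cases hx : x = 0
    · subst hx
      simp [hzero]
    · have hg : gr ν p x ∈ K := by
        rw [hmem]; intro z; rw [hH]; exact gr_le hν hp hx z
      have := le_ciSup hbdd ⟨gr ν p x, hg⟩
      refine le_trans (le_of_eq ?_) this
      rw [hH, ← gr_self hν hp hx]
  · rw [hHf]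
    exact (FF_contDiffOn hν hp).rpow_const_of_ne fun x hx => (FF_pos hν hp hx).ne'
  · intro u hu v huv hv
    have hu0 : u ≠ 0 := by rintro rfl; simp at hu
    have he : (fun x => gradient H x) =ᶠ[𝓝 u] gr ν p := by
      filter_upwards [isOpen_compl_singleton.mem_nhds (show u ∈ ({0}ᶜ : Set E) from hu0)] with x hx
      rw [hHf]
      exact (H_hasGradientAt hν hp hx).gradient
    rw [he.fderiv_eq]
    exact gr_hasFDerivAt_pos hν hp hu0 huv hv

end Final
end LpCos
namespace LpCos

open Filter Topology

lemma good_sphere (m : ℕ) {f : EuclideanSpace ℝ (Fin (m + 2)) → ℝ}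
    {M c : ℝ} (hM : ∀ ξ, |f ξ| ≤ M) (hc : 0 < c)
    (hcf : ∀ᵐ ξ ∂((μH[((m + 2 : ℕ) : ℝ) - 1]).restrict
      (sphere (0 : EuclideanSpace ℝ (Fin (m + 2))) 1)), c ≤ f ξ) :
    ∃ C, Good (((μH[((m + 2 : ℕ) : ℝ) - 1]).restrict
      (sphere (0 : EuclideanSpace ℝ (Fin (m + 2))) 1)).withDensity
        (fun ξ => ENNReal.ofReal (f ξ))) C := by
  obtain ⟨C, hC, hstrip⟩ := strip_gen m
  have hfin := sphere_finite m
  have hpos := sphere_pos m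
  set σ := (μH[((m + 2 : ℕ) : ℝ) - 1]).restrict
      (sphere (0 : EuclideanSpace ℝ (Fin (m + 2))) 1) with hσ
  have hu : σ univ = μH[((m + 2 : ℕ) : ℝ) - 1]
      (sphere (0 : EuclideanSpace ℝ (Fin (m + 2))) 1) := by
    rw [hσ, Measure.restrict_apply_univ]
  have hle : σ.withDensity (fun ξ => ENNReal.ofReal (f ξ)) ≤ ENNReal.ofReal M • σ := by
    rw [← withDensity_const]
    exact withDensity_mono (Eventually.of_forall fun ξ =>
      ENNReal.ofReal_le_ofReal ((le_abs_self _).trans (hM ξ)))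
  have hle' : ENNReal.ofReal c • σ ≤ σ.withDensity (fun ξ => ENNReal.ofReal (f ξ)) := by
    rw [← withDensity_const]
    refine withDensity_mono ?_
    filter_upwards [hcf] with ξ h using ENNReal.ofReal_le_ofReal h
  refine ⟨ENNReal.ofReal M * C, ⟨⟨?_⟩, ?_, ?_, ENNReal.mul_ne_top ENNReal.ofReal_ne_top hC, ?_⟩⟩
  · refine (hle univ).trans_lt ?_
    rw [Measure.smul_apply, smul_eq_mul, hu]
    exact ENNReal.mul_lt_top ENNReal.ofReal_lt_top hfin
  · intro h
    have h1 := hle' univ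
    rw [h, Measure.smul_apply, smul_eq_mul, hu] at h1
    have h2 := ENNReal.mul_pos (ENNReal.ofReal_pos.2 hc).ne' hpos.ne'
    exact absurd h1 (not_le.2 (by simpa using h2))
  · refine (withDensity_absolutelyContinuous σ _).ae_le ?_
    filter_upwards [ae_restrict_mem isClosed_sphere.measurableSet] with ξ hξ
    rw [mem_sphere_zero_iff_norm] at hξ
    exact hξ.le
  · intro x hx A hA hAs
    refine (hle _).trans ?_
    rw [Measure.smul_apply, smul_eq_mul, mul_assoc, mul_assoc]
    refine mul_le_mul_right ?_ _
    rw [← mul_assoc]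
    exact hstrip x hx A hA hAs

lemma FF_withDensity {E : Type*} [NormedAddCommGroup E] [InnerProductSpace ℝ E]
    [MeasurableSpace E] [BorelSpace E] {σ : Measure E} {f : E → ℝ} (hf : Measurable f)
    (hcf : ∀ᵐ ξ ∂σ, 0 ≤ f ξ) (p : ℝ) (x : E) :
    ∫ ξ, |⟪x, ξ⟫| ^ p * f ξ ∂σ = FF (σ.withDensity (fun ξ => ENNReal.ofReal (f ξ))) p x := by
  rw [FF, integral_withDensity_eq_integral_toReal_smul hf.ennreal_ofReal
    (Eventually.of_forall fun _ => ENNReal.ofReal_lt_top)]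
  refine integral_congr_ae ?_
  filter_upwards [hcf] with ξ h
  rw [ENNReal.toReal_ofReal h, smul_eq_mul, mul_comm]

end LpCos

theorem lp_cosine_support_function_C2plus (n : ℕ) (hn : 2 ≤ n) (p : ℝ) (hp : 1 < p)
    (hpe : ∀ k : ℕ, p ≠ 2 * k)
    (f : EuclideanSpace ℝ (Fin n) → ℝ) (hf_meas : Measurable f)
    (hf_bdd : ∃ M : ℝ, ∀ ξ, |f ξ| ≤ M)
    (hf_pos : ∃ c : ℝ, 0 < c ∧
      ∀ᵐ ξ ∂((μH[(n : ℝ) - 1]).restrict (sphere (0 : EuclideanSpace ℝ (Fin n)) 1)), c ≤ f ξ)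
    (H : EuclideanSpace ℝ (Fin n) → ℝ)
    (hH : ∀ x, H x = (∫ ξ in sphere (0 : EuclideanSpace ℝ (Fin n)) 1,
      |⟪x, ξ⟫| ^ p * f ξ ∂(μH[(n : ℝ) - 1])) ^ (1 / p)) :
    ∃ K : Set (EuclideanSpace ℝ (Fin n)),
      IsCompact K ∧ Convex ℝ K ∧ (interior K).Nonempty ∧
      (∀ x, x ∈ K ↔ -x ∈ K) ∧
      (∀ x : EuclideanSpace ℝ (Fin n),
        (⨆ y : K, ⟪x, (y : EuclideanSpace ℝ (Fin n))⟫) = H x) ∧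
      ContDiffOn ℝ 2 H {(0 : EuclideanSpace ℝ (Fin n))}ᶜ ∧
      -- all principal radii of curvature are positive: the reverse Weingarten map
      -- d(∇H)_u is positive definite on the tangent space u^⊥, for every unit u
      (∀ u : EuclideanSpace ℝ (Fin n), ‖u‖ = 1 →
        ∀ v : EuclideanSpace ℝ (Fin n), ⟪u, v⟫ = 0 → v ≠ 0 →
          0 < ⟪fderiv ℝ (fun x => gradient H x) u v, v⟫) := by
  obtain ⟨m, rfl⟩ := Nat.exists_eq_add_of_le' hn
  obtain ⟨M, hM⟩ := hf_bdd
  obtain ⟨c, hc, hcf⟩ := hf_pos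
  obtain ⟨C, hgood⟩ := LpCos.good_sphere m hM hc hcf
  refine LpCos.main_abstract hgood hp H fun x => ?_
  rw [hH, LpCos.FF_withDensity hf_meas]
  filter_upwards [hcf] with ξ h using hc.le.trans h
end
end
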